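/- arXiv:0904.1296 — 9 statements merged into one kernel-verified Lean document; each statement's English description precedes it below -/
import Mathlib

section
/- Let G₁ and G₂ be bridgeless cubic graphs, e₁ = u₁v₁ an edge of G₁ and e₂ = u₂v₂ an edge of G₂, and let G₁⊙G₂ be the graph obtained from the disjoint union of G₁ − e₁ and G₂ − e₂ by adding the two edges u₁u₂ and v₁v₂. If τ(G₁) = k ≥ 3, then τ(G₁⊙G₂) ≥ k. -/
/-!
Perfect matchings are handled as fixed-point-free involutions `f` with `v ~ f v` (`IsMate`).

A covering of `G₁ ⊙ G₂` by `k'` perfect matchings induces a covering of `G₁` by `k'` perfect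
matchings (`exists_covering_left`). Indeed `|V₁|` is even because `G₁` is cubic, so each perfect
matching of `G₁ ⊙ G₂` contains both of the edges `u₁u₂`, `v₁v₂` or neither
(`even_card_crossing`); in the first case replace them by `u₁v₁`, in the second case just
restrict. The edge `u₁v₁` is covered because `u₁u₂` is. Hence `τ(G₁) ≤ k'`.

As `tau` is an infimum of natural numbers, which is `0` for the empty set, one must also know that
`G₁ ⊙ G₂` has a covering at all, that is, that each of its edges lies in a perfect matching
(`exists_mate_conn`). This follows by glueing perfect matchings of `G₁` and `G₂` that both contain,
or both avoid, the deleted edges. Their existence comes from the fact that a bridgeless cubic graph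
still has a perfect matching after any two edges are deleted (`exists_mate_avoiding`), which
is deduced from Tutte's theorem by counting edges between a vertex set and the odd components it
leaves.
-/

open SimpleGraph

/-- A `k`-covering of `G` by perfect matchings. -/
def IsPMCovering {V : Type*} (G : SimpleGraph V) {k : ℕ}
    (M : Fin k → G.Subgraph) : Prop :=
  (∀ i, (M i).IsPerfectMatching) ∧ ∀ e ∈ G.edgeSet, ∃ i, e ∈ (M i).edgeSet

/-- The perfect matching index of `G`. -/
noncomputable def tau {V : Type*} (G : SimpleGraph V) : ℕ :=
  sInf {k | ∃ M : Fin k → G.Subgraph, IsPMCovering G M}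

/-- The `2`-cut connection `G₁ ⊙ G₂`: delete the edge `u₁v₁` of `G₁` and the edge
`u₂v₂` of `G₂`, and add the two edges `u₁u₂` and `v₁v₂` between the disjoint union. -/
def twoCutConnection {V₁ V₂ : Type*} (G₁ : SimpleGraph V₁) (G₂ : SimpleGraph V₂)
    (u₁ v₁ : V₁) (u₂ v₂ : V₂) : SimpleGraph (V₁ ⊕ V₂) :=
  SimpleGraph.fromRel (fun a b =>
    match a, b with
    | Sum.inl a, Sum.inl b => G₁.Adj a b ∧ s(a, b) ≠ s(u₁, v₁)
    | Sum.inr a, Sum.inr b => G₂.Adj a b ∧ s(a, b) ≠ s(u₂, v₂)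
    | Sum.inl a, Sum.inr b => (a = u₁ ∧ b = u₂) ∨ (a = v₁ ∧ b = v₂)
    | Sum.inr _, Sum.inl _ => False)

/-! ### Perfect matchings as involutions -/

/-- A perfect matching of `G`, encoded as the map sending each vertex to its partner: an
involution that moves every vertex to a neighbour. -/
def IsMate {V : Type*} (G : SimpleGraph V) (f : V → V) : Prop :=
  (∀ v, G.Adj v (f v)) ∧ ∀ v, f (f v) = v

theorem IsMate.exists_subgraph {V : Type*} {G : SimpleGraph V} {f : V → V} (hf : IsMate G f) :
    ∃ M : G.Subgraph, M.IsPerfectMatching ∧ ∀ v w, M.Adj v w ↔ f v = w := by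
  refine ⟨{ verts := Set.univ
            Adj := fun v w => f v = w
            adj_sub := ?_
            edge_vert := fun _ => Set.mem_univ _
            symm := ?_ }, ?_, fun _ _ => Iff.rfl⟩
  · rintro v w rfl
    exact hf.1 v
  · constructor
    rintro v w rfl
    exact hf.2 v
  · rw [Subgraph.isPerfectMatching_iff]
    exact fun v => ⟨f v, rfl, fun w hw => Eq.symm hw⟩

theorem exists_mate {V : Type*} {G : SimpleGraph V} {M : G.Subgraph}
    (hM : M.IsPerfectMatching) : ∃ f, IsMate G f ∧ ∀ v w, M.Adj v w ↔ f v = w := by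
  rw [Subgraph.isPerfectMatching_iff] at hM
  choose f hf hu using hM
  exact ⟨f, ⟨fun v => (hf v).adj_sub, fun v => (hu _ _ (hf v).symm).symm⟩,
    fun v w => ⟨fun h => (hu v w h).symm, fun h => h ▸ hf v⟩⟩

/-! ### Edge boundaries and Tutte's condition in bridgeless cubic graphs -/

section Cubic

open Finset

variable {V : Type*} [Fintype V] [DecidableEq V] {G : SimpleGraph V} [DecidableRel G.Adj]

/-- The darts of `G` that enter the vertex set `A` from outside. -/
def entering (G : SimpleGraph V) [DecidableRel G.Adj] (A : Finset V) : Finset (V × V) :=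
  univ.filter fun p => G.Adj p.1 p.2 ∧ p.1 ∉ A ∧ p.2 ∈ A

theorem card_darts_into (h3 : G.IsRegularOfDegree 3) (A : Finset V) :
    #{p : V × V | G.Adj p.1 p.2 ∧ p.2 ∈ A} = 3 * #A := by
  have hmaps : ∀ p ∈ ({p : V × V | G.Adj p.1 p.2 ∧ p.2 ∈ A} : Finset (V × V)), p.2 ∈ A := by
    simp
  rw [card_eq_sum_card_fiberwise hmaps, mul_comm, ← smul_eq_mul, ← sum_const]
  refine sum_congr rfl fun b hb => ?_
  rw [← h3 b, ← card_neighborFinset_eq_degree]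
  refine card_bij (fun p _ => p.1) ?_ ?_ ?_
  · rintro ⟨x, y⟩ h
    simp only [mem_filter, mem_univ, true_and] at h
    obtain ⟨⟨h, -⟩, rfl⟩ := h
    simpa using h.symm
  · rintro ⟨x, y⟩ h ⟨x', y'⟩ h' e
    simp_all
  · intro a ha
    exact ⟨(a, b), by simpa [hb] using (G.mem_neighborFinset b a |>.1 ha).symm, rfl⟩

theorem even_card_darts_within (A : Finset V) :
    Even #{p : V × V | G.Adj p.1 p.2 ∧ p.1 ∈ A ∧ p.2 ∈ A} := by
  rw [← ZMod.natCast_eq_zero_iff_even, card_eq_sum_ones, Nat.cast_sum]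
  refine sum_involution (fun p _ => p.swap) ?_ ?_ ?_ ?_
  · intro p _
    decide
  · rintro ⟨a, b⟩ h - e
    simp only [mem_filter] at h
    exact h.2.1.ne (congrArg Prod.snd e)
  · rintro ⟨a, b⟩ h
    simp only [mem_filter, mem_univ, true_and, Prod.swap] at h ⊢
    exact ⟨h.1.symm, h.2.2, h.2.1⟩
  · intro p _
    simp

theorem even_card_of_cubic (h3 : G.IsRegularOfDegree 3) : Even (Fintype.card V) := by
  have h1 := card_darts_into h3 univ
  have h2 := even_card_darts_within (G := G) univ
  simp only [mem_univ, and_true] at h1 h2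
  rw [h1, card_univ] at h2
  grind

/-- In a cubic graph, an odd vertex set has an odd edge boundary. -/
theorem odd_card_entering (h3 : G.IsRegularOfDegree 3) {A : Finset V} (hA : Odd #A) :
    Odd #(entering G A) := by
  have h1 := card_darts_into h3 A
  have h2 := even_card_darts_within (G := G) A
  have h4 : #{p : V × V | G.Adj p.1 p.2 ∧ p.2 ∈ A} =
      #{p : V × V | G.Adj p.1 p.2 ∧ p.1 ∈ A ∧ p.2 ∈ A} + #(entering G A) := by
    rw [← card_union_of_disjoint]
    · congr 1
      ext p
      simp only [entering, mem_filter, mem_union, mem_univ, true_and]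
      tauto
    · rw [Finset.disjoint_left]
      intro p
      simp only [entering, mem_filter, mem_univ, true_and]
      tauto
  grind

/-- A boundary consisting of a single edge is a bridge. -/
theorem card_entering_ne_one (hb : ∀ e ∈ G.edgeSet, ¬ G.IsBridge e) (A : Finset V) :
    #(entering G A) ≠ 1 := by
  intro h
  obtain ⟨⟨a, b⟩, hab⟩ := card_eq_one.1 h
  have hmem : (a, b) ∈ entering G A := by simp [hab]
  simp only [entering, mem_filter, mem_univ, true_and] at hmem
  have hbr := hb s(a, b) hmem.1
  rw [isBridge_iff, not_not] at hbr
  -- walking from `b` without the edge `ab`, one never leaves `A`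
  have key : ∀ x y, (G.deleteEdges {s(a, b)}).Walk x y → x ∈ A → y ∈ A := by
    intro x y p
    induction p with
    | nil => exact id
    | @cons x z y hxz _ ih =>
      intro hx
      refine ih ?_
      by_contra hz
      rw [deleteEdges_adj] at hxz
      have : (z, x) ∈ entering G A := by
        simp [entering, hz, hx, hxz.1.symm]
      rw [hab, mem_singleton, Prod.mk.injEq] at this
      exact hxz.2 (by rw [this.1, this.2, Sym2.eq_swap]; rfl)
  obtain ⟨p⟩ := hbr
  exact hmem.2.1 (key _ _ p.reverse hmem.2.2)

theorem three_le_card_entering (h3 : G.IsRegularOfDegree 3)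
    (hb : ∀ e ∈ G.edgeSet, ¬ G.IsBridge e) {A : Finset V} (hA : Odd #A) :
    3 ≤ #(entering G A) := by
  have h1 := odd_card_entering h3 hA
  have h2 := card_entering_ne_one hb A
  obtain ⟨m, hm⟩ := h1
  omega

theorem card_darts_le (F : Finset (Sym2 V)) :
    #{p : V × V | s(p.1, p.2) ∈ F} ≤ 2 * #F := by
  refine card_le_mul_card_image_of_maps_to (f := fun p : V × V => s(p.1, p.2)) (by simp) 2 ?_
  intro e _
  induction e with
  | _ a b =>
    refine (card_le_card (t := {(a, b), (b, a)}) ?_).trans card_le_two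
    rintro ⟨x, y⟩ h
    simp only [mem_filter, Sym2.eq_iff] at h
    simp only [mem_insert, mem_singleton, Prod.mk.injEq]
    exact h.2

/-- A bridgeless cubic graph keeps a perfect matching after the deletion of any two edges.
If `S` violated Tutte's condition in the graph `G - F`, parity would give at least `|S| + 2` odd
components, each entered by at least three darts of `G`; but such a dart starts in `S` or
belongs to `F`, so there are at most `3|S| + 4` of them. -/
theorem exists_mate_avoiding (h3 : G.IsRegularOfDegree 3)
    (hb : ∀ e ∈ G.edgeSet, ¬ G.IsBridge e) (F : Finset (Sym2 V)) (hF : #F ≤ 2) :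
    ∃ f, IsMate G f ∧ ∀ v, s(v, f v) ∉ F := by
  suffices h : ∃ M : (G.deleteEdges (F : Set (Sym2 V))).Subgraph, M.IsPerfectMatching by
    obtain ⟨M, hM⟩ := h
    obtain ⟨f, hf, -⟩ := exists_mate hM
    simp only [IsMate, deleteEdges_adj, mem_coe] at hf
    exact ⟨f, ⟨fun v => (hf.1 v).1, hf.2⟩, fun v => (hf.1 v).2⟩
  rw [tutte]
  intro S hS
  unfold IsTutteViolator at hS
  have hpar := odd_ncard_oddComponents
    ((⊤ : (G.deleteEdges (F : Set (Sym2 V))).Subgraph).deleteVerts S).coe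
  have hcard : Nat.card ((⊤ : (G.deleteEdges (F : Set (Sym2 V))).Subgraph).deleteVerts S).verts
      + S.ncard = Fintype.card V := by
    rw [Subgraph.deleteVerts_verts, Subgraph.verts_top, Nat.card_coe_set_eq,
      ← Nat.card_eq_fintype_card, ← Set.ncard_univ]
    exact Set.ncard_sdiff_add_ncard_of_subset (Set.subset_univ _)
  have heven := even_card_of_cubic h3
  set T := ((⊤ : (G.deleteEdges (F : Set (Sym2 V))).Subgraph).deleteVerts S).coe with hT
  classical
  have hlow : S.ncard + 2 ≤ T.oddComponents.ncard := by
    rcases Nat.even_or_odd T.oddComponents.ncard with h | h <;> grind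
  let A : T.ConnectedComponent → Finset V := fun c => (Subtype.val '' c.supp).toFinset
  have hA : ∀ c v, v ∈ A c ↔ ∃ h, T.connectedComponentMk ⟨v, h⟩ = c := by
    intro c v
    simp [A]
  have hcA : ∀ c ∈ T.oddComponents, Odd #(A c) := by
    intro c hc
    rw [← Set.ncard_eq_toFinset_card', Set.ncard_image_of_injective _ Subtype.val_injective]
    exact hc
  have hSfin : S.ncard = #S.toFinset := Set.ncard_eq_toFinset_card' S
  have hOfin : T.oddComponents.ncard = #T.oddComponents.toFinset :=
    Set.ncard_eq_toFinset_card' _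
  have hdisj : (T.oddComponents.toFinset : Set T.ConnectedComponent).PairwiseDisjoint
      fun c => entering G (A c) := by
    intro c _ d _ hcd
    refine Finset.disjoint_left.2 fun p hp hq => hcd ?_
    simp only [entering, mem_filter, hA] at hp hq
    obtain ⟨_, hp⟩ := hp.2.2.2
    obtain ⟨_, hq⟩ := hq.2.2.2
    exact hp.symm.trans hq
  have hsub : (T.oddComponents.toFinset.biUnion fun c => entering G (A c)).map
      (Equiv.prodComm V V).toEmbedding ⊆
      ({p : V × V | G.Adj p.1 p.2 ∧ p.2 ∈ S.toFinset} : Finset (V × V)) ∪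
      ({p : V × V | s(p.1, p.2) ∈ F} : Finset (V × V)) := by
    intro q hq
    obtain ⟨⟨a, b⟩, hp, rfl⟩ := mem_map.1 hq
    obtain ⟨c, -, hp⟩ := mem_biUnion.1 hp
    simp only [entering, mem_filter, mem_univ, true_and] at hp
    obtain ⟨hadj, ha, hb'⟩ := hp
    simp only [Equiv.coe_toEmbedding, Equiv.prodComm_apply, Prod.swap, mem_union, mem_filter,
      mem_univ, true_and, Set.mem_toFinset]
    by_contra! hcon
    obtain ⟨h1, h2⟩ := hcon
    have haS := h1 hadj.symm
    obtain ⟨hbT, hbc⟩ := (hA _ _).1 hb'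
    refine ha ((hA _ _).2 ⟨by simpa using haS, ?_⟩)
    rw [← hbc, ConnectedComponent.eq]
    refine Adj.reachable ?_
    have hbS : b ∉ S := by simpa using hbT
    rw [Sym2.eq_swap] at h2
    simp only [hT, Subgraph.coe_adj, Subgraph.deleteVerts_adj, Subgraph.verts_top, Set.mem_univ,
      true_and, Subgraph.top_adj, deleteEdges_adj, mem_coe]
    exact ⟨haS, hbS, hadj, h2⟩
  have hle := card_le_card hsub
  rw [card_map, card_biUnion hdisj] at hle
  have hge : ∑ _c ∈ T.oddComponents.toFinset, 3 ≤
      ∑ c ∈ T.oddComponents.toFinset, #(entering G (A c)) :=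
    sum_le_sum fun c hc => three_le_card_entering h3 hb (hcA c (Set.mem_toFinset.1 hc))
  have hun := card_union_le ({p : V × V | G.Adj p.1 p.2 ∧ p.2 ∈ S.toFinset} : Finset (V × V))
    ({p : V × V | s(p.1, p.2) ∈ F} : Finset (V × V))
  rw [card_darts_into h3] at hun
  have hF2 := card_darts_le F
  rw [sum_const, smul_eq_mul] at hge
  omega

end Cubic

/-! ### Perfect matchings through or avoiding a given edge, and coverings -/

section CubicMates

variable {V : Type*} [Fintype V] {G : SimpleGraph V} [DecidableRel G.Adj]

/-- Deleting the other two edges at `a` forces the edge `ab` into the perfect matching. -/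
theorem exists_mate_through (h3 : G.IsRegularOfDegree 3)
    (hb : ∀ e ∈ G.edgeSet, ¬ G.IsBridge e) {a b : V} (hab : G.Adj a b) :
    ∃ f, IsMate G f ∧ f a = b := by
  classical
  obtain ⟨f, hf, hF⟩ := exists_mate_avoiding h3 hb
    (((G.neighborFinset a).erase b).image fun x => s(a, x)) (by
      refine Finset.card_image_le.trans ?_
      rw [Finset.card_erase_of_mem (by simpa using hab), card_neighborFinset_eq_degree, h3 a])
  refine ⟨f, hf, ?_⟩
  by_contra h
  exact hF a (Finset.mem_image_of_mem _
    (Finset.mem_erase.2 ⟨h, (G.mem_neighborFinset _ _).2 (hf.1 a)⟩))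

theorem exists_mate_not_through (h3 : G.IsRegularOfDegree 3)
    (hb : ∀ e ∈ G.edgeSet, ¬ G.IsBridge e) (a b : V) :
    ∃ f, IsMate G f ∧ f a ≠ b := by
  classical
  obtain ⟨f, hf, hF⟩ := exists_mate_avoiding h3 hb {s(a, b)} (by simp)
  exact ⟨f, hf, fun h => hF a (by simp [h])⟩

end CubicMates

theorem exists_covering {V : Type*} [Finite V] {G : SimpleGraph V}
    (h : ∀ a b, G.Adj a b → ∃ f, IsMate G f ∧ f a = b) :
    ∃ k, ∃ M : Fin k → G.Subgraph, IsPMCovering G M := by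
  have h' : ∀ e : G.edgeSet, ∃ M : G.Subgraph, M.IsPerfectMatching ∧ e.1 ∈ M.edgeSet := by
    rintro ⟨e, he⟩
    induction e with
    | _ a b =>
      obtain ⟨f, hf, hfa⟩ := h a b he
      obtain ⟨M, hM, hMa⟩ := hf.exists_subgraph
      exact ⟨M, hM, (hMa a b).2 hfa⟩
  choose M hM hMe using h'
  let φ := Finite.equivFin G.edgeSet
  exact ⟨_, fun i => M (φ.symm i), fun i => hM _, fun e he =>
    ⟨φ ⟨e, he⟩, by
      beta_reduce
      rw [φ.symm_apply_apply]
      exact hMe ⟨e, he⟩⟩⟩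

/-! ### Perfect matchings of the connection -/

section Connection

variable {V₁ V₂ : Type*} {G₁ : SimpleGraph V₁} {G₂ : SimpleGraph V₂} {u₁ v₁ : V₁} {u₂ v₂ : V₂}

theorem conn_adj_inl_inl {a b : V₁} :
    (twoCutConnection G₁ G₂ u₁ v₁ u₂ v₂).Adj (Sum.inl a) (Sum.inl b) ↔
      G₁.Adj a b ∧ s(a, b) ≠ s(u₁, v₁) := by
  simp only [twoCutConnection, fromRel_adj, ne_eq, Sum.inl.injEq, G₁.adj_comm b a,
    Sym2.eq_swap (a := b) (b := a), or_self]
  exact ⟨fun h => h.2, fun h => ⟨h.1.ne, h⟩⟩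

theorem conn_adj_inr_inr {a b : V₂} :
    (twoCutConnection G₁ G₂ u₁ v₁ u₂ v₂).Adj (Sum.inr a) (Sum.inr b) ↔
      G₂.Adj a b ∧ s(a, b) ≠ s(u₂, v₂) := by
  simp only [twoCutConnection, fromRel_adj, ne_eq, Sum.inr.injEq, G₂.adj_comm b a,
    Sym2.eq_swap (a := b) (b := a), or_self]
  exact ⟨fun h => h.2, fun h => ⟨h.1.ne, h⟩⟩

theorem conn_adj_inl_inr {a : V₁} {b : V₂} :
    (twoCutConnection G₁ G₂ u₁ v₁ u₂ v₂).Adj (Sum.inl a) (Sum.inr b) ↔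
      (a = u₁ ∧ b = u₂) ∨ (a = v₁ ∧ b = v₂) := by
  simp [twoCutConnection, fromRel_adj]

theorem conn_adj_inr_inl {a : V₁} {b : V₂} :
    (twoCutConnection G₁ G₂ u₁ v₁ u₂ v₂).Adj (Sum.inr b) (Sum.inl a) ↔
      (a = u₁ ∧ b = u₂) ∨ (a = v₁ ∧ b = v₂) := by
  rw [adj_comm, conn_adj_inl_inr]

/-- A mate map avoids the edge `uv` at every vertex as soon as it avoids it at `u`. -/
theorem IsMate.mk_ne {V : Type*} {G : SimpleGraph V} {f : V → V} (hf : IsMate G f) {u v : V}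
    (h : f u ≠ v) (a : V) : s(a, f a) ≠ s(u, v) := by
  rw [ne_eq, Sym2.eq_iff]
  rintro (⟨rfl, h'⟩ | ⟨rfl, h'⟩)
  · exact h h'
  · exact h (by rw [← h', hf.2])

/-- Perfect matchings avoiding the two deleted edges unite to one of the connection. -/
theorem isMate_sumMap {f₁ : V₁ → V₁} {f₂ : V₂ → V₂} (h₁ : IsMate G₁ f₁) (h₂ : IsMate G₂ f₂)
    (n₁ : f₁ u₁ ≠ v₁) (n₂ : f₂ u₂ ≠ v₂) :
    IsMate (twoCutConnection G₁ G₂ u₁ v₁ u₂ v₂) (Sum.map f₁ f₂) := by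
  constructor
  · rintro (a | a)
    · exact conn_adj_inl_inl.2 ⟨h₁.1 a, h₁.mk_ne n₁ a⟩
    · exact conn_adj_inr_inr.2 ⟨h₂.1 a, h₂.mk_ne n₂ a⟩
  · rintro (a | a)
    · simp [h₁.2]
    · simp [h₂.2]

open Classical in
/-- The union of two perfect matchings through the deleted edges, in which these two edges are
exchanged for the two new ones. -/
noncomputable def crossMate (f₁ : V₁ → V₁) (f₂ : V₂ → V₂) (u₁ v₁ : V₁) (u₂ v₂ : V₂) :
    V₁ ⊕ V₂ → V₁ ⊕ V₂
  | Sum.inl a => if a = u₁ then Sum.inr u₂ else if a = v₁ then Sum.inr v₂ else Sum.inl (f₁ a)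
  | Sum.inr a => if a = u₂ then Sum.inl u₁ else if a = v₂ then Sum.inl v₁ else Sum.inr (f₂ a)

theorem isMate_crossMate {f₁ : V₁ → V₁} {f₂ : V₂ → V₂} (h₁ : IsMate G₁ f₁) (h₂ : IsMate G₂ f₂)
    (n₁ : f₁ u₁ = v₁) (n₂ : f₂ u₂ = v₂) :
    IsMate (twoCutConnection G₁ G₂ u₁ v₁ u₂ v₂) (crossMate f₁ f₂ u₁ v₁ u₂ v₂) := by
  have e₁ : u₁ ≠ v₁ := n₁ ▸ (h₁.1 u₁).ne
  have e₂ : u₂ ≠ v₂ := n₂ ▸ (h₂.1 u₂).ne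
  have k₁ : ∀ a, a ≠ u₁ → a ≠ v₁ → f₁ a ≠ u₁ ∧ f₁ a ≠ v₁ := fun a hu hv =>
    ⟨fun h => hv (by rw [← n₁, ← h, h₁.2]), fun h => hu (by rw [← h₁.2 a, h, ← n₁, h₁.2])⟩
  have k₂ : ∀ a, a ≠ u₂ → a ≠ v₂ → f₂ a ≠ u₂ ∧ f₂ a ≠ v₂ := fun a hu hv =>
    ⟨fun h => hv (by rw [← n₂, ← h, h₂.2]), fun h => hu (by rw [← h₂.2 a, h, ← n₂, h₂.2])⟩
  constructor
  · rintro (a | a)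
    · by_cases hu : a = u₁
      · simp [crossMate, hu, conn_adj_inl_inr]
      by_cases hv : a = v₁
      · simp [crossMate, hv, e₁.symm, conn_adj_inl_inr]
      · simp [crossMate, hu, hv, conn_adj_inl_inl, h₁.1 a]
    · by_cases hu : a = u₂
      · simp [crossMate, hu, conn_adj_inr_inl]
      by_cases hv : a = v₂
      · simp [crossMate, hv, e₂.symm, conn_adj_inr_inl]
      · simp [crossMate, hu, hv, conn_adj_inr_inr, h₂.1 a]
  · rintro (a | a)
    · by_cases hu : a = u₁
      · simp [crossMate, hu]
      by_cases hv : a = v₁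
      · simp [crossMate, hv, e₁.symm, e₂.symm]
      · simp [crossMate, hu, hv, k₁ a hu hv, h₁.2]
    · by_cases hu : a = u₂
      · simp [crossMate, hu]
      by_cases hv : a = v₂
      · simp [crossMate, hv, e₁.symm, e₂.symm]
      · simp [crossMate, hu, hv, k₂ a hu hv, h₂.2]

/-- Every edge of the connection lies in a perfect matching. A perfect matching of one side through
a given edge is completed by one of the other side that agrees with it on whether to use the
deleted edge. -/
theorem exists_mate_conn [Fintype V₁] [Fintype V₂] [DecidableRel G₁.Adj] [DecidableRel G₂.Adj]
    (hG₁ : G₁.IsRegularOfDegree 3) (hG₂ : G₂.IsRegularOfDegree 3)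
    (hb₁ : ∀ e ∈ G₁.edgeSet, ¬ G₁.IsBridge e) (hb₂ : ∀ e ∈ G₂.edgeSet, ¬ G₂.IsBridge e)
    (he₁ : G₁.Adj u₁ v₁) (he₂ : G₂.Adj u₂ v₂) (x y : V₁ ⊕ V₂)
    (hxy : (twoCutConnection G₁ G₂ u₁ v₁ u₂ v₂).Adj x y) :
    ∃ f, IsMate (twoCutConnection G₁ G₂ u₁ v₁ u₂ v₂) f ∧ f x = y := by
  obtain ⟨t₁, ht₁, htu₁⟩ := exists_mate_through hG₁ hb₁ he₁
  obtain ⟨t₂, ht₂, htu₂⟩ := exists_mate_through hG₂ hb₂ he₂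
  obtain ⟨n₁, hn₁, hnu₁⟩ := exists_mate_not_through hG₁ hb₁ u₁ v₁
  obtain ⟨n₂, hn₂, hnu₂⟩ := exists_mate_not_through hG₂ hb₂ u₂ v₂
  have ht := isMate_crossMate ht₁ ht₂ htu₁ htu₂
  rcases x with a | a <;> rcases y with b | b
  · obtain ⟨h, hne⟩ := conn_adj_inl_inl.1 hxy
    obtain ⟨f, hf, hfa⟩ := exists_mate_through hG₁ hb₁ h
    by_cases hfu : f u₁ = v₁
    · refine ⟨_, isMate_crossMate hf ht₂ hfu htu₂, ?_⟩
      have h1 : a ≠ u₁ := by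
        rintro rfl
        exact hne (by rw [← hfa, hfu])
      have h2 : a ≠ v₁ := by
        rintro rfl
        exact hne (by rw [← hfa, ← hfu, hf.2, Sym2.eq_swap])
      simp [crossMate, h1, h2, hfa]
    · exact ⟨_, isMate_sumMap hf hn₂ hfu hnu₂, by simp [hfa]⟩
  · refine ⟨_, ht, ?_⟩
    rcases conn_adj_inl_inr.1 hxy with ⟨rfl, rfl⟩ | ⟨rfl, rfl⟩
    · simp [crossMate]
    · simp [crossMate, he₁.ne.symm]
  · refine ⟨_, ht, ?_⟩
    rcases conn_adj_inr_inl.1 hxy with ⟨rfl, rfl⟩ | ⟨rfl, rfl⟩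
    · simp [crossMate]
    · simp [crossMate, he₂.ne.symm]
  · obtain ⟨h, hne⟩ := conn_adj_inr_inr.1 hxy
    obtain ⟨f, hf, hfa⟩ := exists_mate_through hG₂ hb₂ h
    by_cases hfu : f u₂ = v₂
    · refine ⟨_, isMate_crossMate ht₁ hf htu₁ hfu, ?_⟩
      have h1 : a ≠ u₂ := by
        rintro rfl
        exact hne (by rw [← hfa, hfu])
      have h2 : a ≠ v₂ := by
        rintro rfl
        exact hne (by rw [← hfa, ← hfu, hf.2, Sym2.eq_swap])
      simp [crossMate, h1, h2, hfa]
    · exact ⟨_, isMate_sumMap hn₁ hf hnu₁ hfu, by simp [hfa]⟩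

open Finset in
/-- Since `|V₁|` is even, the number of vertices of `G₁` matched into `G₂` is even: the other
vertices of `G₁` are matched among themselves. -/
theorem even_card_crossing [Fintype V₁] (hV : Even (Fintype.card V₁))
    {f : V₁ ⊕ V₂ → V₁ ⊕ V₂} (hf : IsMate (twoCutConnection G₁ G₂ u₁ v₁ u₂ v₂) f) :
    Even #{a : V₁ | (f (Sum.inl a)).isRight = true} := by
  have hstay : Even #{a : V₁ | ¬ (f (Sum.inl a)).isRight = true} := by
    have hex : ∀ a ∈ ({a : V₁ | ¬ (f (Sum.inl a)).isRight = true} : Finset V₁),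
        ∃ b, f (Sum.inl a) = Sum.inl b := by
      intro a ha
      rcases h : f (Sum.inl a) with b | b
      · exact ⟨b, rfl⟩
      · simp [h] at ha
    choose g hg using hex
    have hg' : ∀ a ha, f (Sum.inl (g a ha)) = Sum.inl a := fun a ha => by rw [← hg a ha, hf.2]
    rw [← ZMod.natCast_eq_zero_iff_even, card_eq_sum_ones, Nat.cast_sum]
    refine sum_involution g ?_ ?_ ?_ ?_
    · intro a _
      decide
    · intro a ha _ h
      have := hf.1 (Sum.inl a)
      rw [hg a ha, h] at this
      exact this.ne rfl
    · intro a ha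
      simp [hg' a ha]
    · intro a ha
      exact Sum.inl_injective (by rw [← hg, hg'])
  have := card_filter_add_card_filter_not (s := (univ : Finset V₁))
    fun a => (f (Sum.inl a)).isRight = true
  rw [card_univ] at this
  grind

/-- A perfect matching of the connection induces one of `G₁`: by parity it uses both new edges
or neither, and in the first case they are replaced by `u₁v₁`. -/
theorem exists_mate_left [Fintype V₁] (hV : Even (Fintype.card V₁)) (he₁ : G₁.Adj u₁ v₁)
    {f : V₁ ⊕ V₂ → V₁ ⊕ V₂} (hf : IsMate (twoCutConnection G₁ G₂ u₁ v₁ u₂ v₂) f) :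
    ∃ g, IsMate G₁ g ∧ (∀ a b, f (Sum.inl a) = Sum.inl b → g a = b) ∧
      (f (Sum.inl u₁) = Sum.inr u₂ → g u₁ = v₁) := by
  classical
  have heven := even_card_crossing hV hf
  have hsub : ∀ a b, f (Sum.inl a) = Sum.inr b → a = u₁ ∨ a = v₁ := by
    intro a b h
    have := hf.1 (Sum.inl a)
    rw [h, conn_adj_inl_inr] at this
    tauto
  have hsub' : ∀ a, (f (Sum.inl a)).isRight = true → a = u₁ ∨ a = v₁ := by
    intro a h
    obtain ⟨b, hb⟩ := Sum.isRight_iff.1 h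
    exact hsub a b hb
  have hcross : (f (Sum.inl u₁)).isRight = (f (Sum.inl v₁)).isRight := by
    by_contra hne
    have : ∃ w, ({a : V₁ | (f (Sum.inl a)).isRight = true} : Finset V₁) = {w} := by
      rcases hu : (f (Sum.inl u₁)).isRight with _ | _
      · refine ⟨v₁, ?_⟩
        ext a
        simp only [Finset.mem_filter, Finset.mem_univ, true_and, Finset.mem_singleton]
        grind
      · refine ⟨u₁, ?_⟩
        ext a
        simp only [Finset.mem_filter, Finset.mem_univ, true_and, Finset.mem_singleton]
        grind
    obtain ⟨w, hw⟩ := this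
    rw [hw] at heven
    simp at heven
  let g : V₁ → V₁ := fun a => Sum.elim id (fun _ => if a = u₁ then v₁ else u₁) (f (Sum.inl a))
  have hgl : ∀ a b, f (Sum.inl a) = Sum.inl b → g a = b := fun a b h => by simp [g, h]
  have hgu : (f (Sum.inl u₁)).isRight = true → g u₁ = v₁ := by
    intro h
    obtain ⟨b, hb⟩ := Sum.isRight_iff.1 h
    simp [g, hb]
  have hgv : (f (Sum.inl v₁)).isRight = true → g v₁ = u₁ := by
    intro h
    obtain ⟨b, hb⟩ := Sum.isRight_iff.1 h
    simp [g, hb, he₁.ne.symm]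
  refine ⟨g, ⟨fun a => ?_, fun a => ?_⟩, hgl, fun h => hgu (by simp [h])⟩
  · rcases h : f (Sum.inl a) with b | b
    · rw [hgl a b h]
      have := hf.1 (Sum.inl a)
      rw [h, conn_adj_inl_inl] at this
      exact this.1
    · rcases hsub a b h with rfl | rfl
      · rw [hgu (by simp [h])]
        exact he₁
      · rw [hgv (by simp [h])]
        exact he₁.symm
  · rcases h : f (Sum.inl a) with b | b
    · rw [hgl a b h]
      exact hgl b a (by rw [← h, hf.2])
    · rcases hsub a b h with rfl | rfl
      · rw [hgu (by simp [h]), hgv (by simp [← hcross, h])]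
      · rw [hgv (by simp [h]), hgu (by simp [hcross, h])]

/-- The perfect matchings of a covering of the connection induce perfect matchings of `G₁` that
cover it; a matching using `u₁u₂` takes care of the edge `u₁v₁`. -/
theorem exists_covering_left [Fintype V₁] (hV : Even (Fintype.card V₁)) (he₁ : G₁.Adj u₁ v₁)
    {k : ℕ} {M : Fin k → (twoCutConnection G₁ G₂ u₁ v₁ u₂ v₂).Subgraph}
    (hM : IsPMCovering (twoCutConnection G₁ G₂ u₁ v₁ u₂ v₂) M) :
    ∃ N : Fin k → G₁.Subgraph, IsPMCovering G₁ N := by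
  have h : ∀ i, ∃ N : G₁.Subgraph, N.IsPerfectMatching ∧
      (∀ a b, (M i).Adj (Sum.inl a) (Sum.inl b) → N.Adj a b) ∧
      ((M i).Adj (Sum.inl u₁) (Sum.inr u₂) → N.Adj u₁ v₁) := by
    intro i
    obtain ⟨f, hf, hMf⟩ := exists_mate (hM.1 i)
    obtain ⟨g, hg, hgl, hgu⟩ := exists_mate_left hV he₁ hf
    obtain ⟨N, hN, hNg⟩ := hg.exists_subgraph
    simp only [hMf]
    exact ⟨N, hN, by simpa only [hNg] using hgl, by simpa only [hNg] using hgu⟩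
  choose N hN hNl hNu using h
  refine ⟨N, hN, fun e he => ?_⟩
  by_cases hne : e = s(u₁, v₁)
  · obtain ⟨i, hi⟩ := hM.2 s(Sum.inl u₁, Sum.inr u₂)
      ((mem_edgeSet _).2 (conn_adj_inl_inr.2 (Or.inl ⟨rfl, rfl⟩)))
    exact ⟨i, hne ▸ hNu i hi⟩
  · induction e with
    | _ a b =>
      obtain ⟨i, hi⟩ := hM.2 s(Sum.inl a, Sum.inl b)
        ((mem_edgeSet _).2 (conn_adj_inl_inl.2 ⟨he, hne⟩))
      exact ⟨i, hNl i a b hi⟩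

end Connection

/-- If `G₁`, `G₂` are bridgeless cubic graphs, `u₁v₁` is an edge of `G₁`, `u₂v₂` an
edge of `G₂`, and `τ(G₁) = k ≥ 3`, then `τ(G₁ ⊙ G₂) ≥ k`. -/
theorem tau_twoCutConnection_ge {V₁ V₂ : Type*} [Fintype V₁] [Fintype V₂]
    (G₁ : SimpleGraph V₁) (G₂ : SimpleGraph V₂)
    [DecidableRel G₁.Adj] [DecidableRel G₂.Adj]
    (hG₁ : G₁.IsRegularOfDegree 3) (hG₂ : G₂.IsRegularOfDegree 3)
    (hbridgeless₁ : ∀ e ∈ G₁.edgeSet, ¬ G₁.IsBridge e)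
    (hbridgeless₂ : ∀ e ∈ G₂.edgeSet, ¬ G₂.IsBridge e)
    (u₁ v₁ : V₁) (u₂ v₂ : V₂) (he₁ : G₁.Adj u₁ v₁) (he₂ : G₂.Adj u₂ v₂)
    (k : ℕ) (hk : 3 ≤ k) (htau : tau G₁ = k) :
    k ≤ tau (twoCutConnection G₁ G₂ u₁ v₁ u₂ v₂) := by
  classical
  -- a covering exists, so the infimum defining `tau` is attained
  have hne : {k | ∃ M : Fin k → (twoCutConnection G₁ G₂ u₁ v₁ u₂ v₂).Subgraph,
      IsPMCovering (twoCutConnection G₁ G₂ u₁ v₁ u₂ v₂) M}.Nonempty :=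
    exists_covering (exists_mate_conn hG₁ hG₂ hbridgeless₁ hbridgeless₂ he₁ he₂)
  obtain ⟨M, hM⟩ := Nat.sInf_mem hne
  rw [← htau]
  exact Nat.sInf_le (exists_covering_left (even_card_of_cubic hG₁) he₁ hM)
end

section
/- Let G₁ be a cubic graph with τ(G₁) = k ≥ 3 and let G₂ be any bridgeless cubic graph. Let u be a vertex of G₁ with neighbors u₁,u₂,u₃ and v a vertex of G₂ with neighbors v₁,v₂,v₃, and let G₁⊗G₂ be obtained from the disjoint union of G₁ − u and G₂ − v by adding the three edges u₁v₁, u₂v₂, u₃v₃ (the principal 3-edge cut). Set k' = τ(G₁⊗G₂) and let M₁,…,M_{k'} be a k'-covering of G₁⊗G₂. Then either k' ≥ k, or some M_i contains all three edges of the principal 3-edge cut. -/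
/-!
A cubic graph has an even number of vertices, so `G₁ - u` has an odd number of them, and a perfect
matching `M` of `G₁ ⊗ G₂` matches an odd number of the vertices of `G₁ - u` across the principal
cut (`odd_crossing`). Only the three neighbours of `u` can be matched across, so if `M` misses some
cut edge then exactly one vertex is (`existsUnique_crosses`). Contracting the `G₂` side to the
single vertex `u` therefore turns `M` into a perfect matching of `G₁` (`contractRightSide`). If no
matching of a covering contains the whole cut, all of them contract, and the contracted
matchings cover every edge of `G₁`, which bounds `τ(G₁)` by the number of matchings used.
-/

open SimpleGraph

/-- The `3`-cut connection `G₁ ⊗ G₂`: delete a vertex `u` of `G₁` with neighbours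
`u₁, u₂, u₃` and a vertex `v` of `G₂` with neighbours `v₁, v₂, v₃`, and add the
three edges `u₁v₁`, `u₂v₂`, `u₃v₃` (the principal `3`-edge cut). -/
def threeCutConnection {V₁ V₂ : Type*} (G₁ : SimpleGraph V₁) (G₂ : SimpleGraph V₂)
    (u : V₁) (v : V₂) (u₁ u₂ u₃ : V₁) (v₁ v₂ v₃ : V₂) :
    SimpleGraph ({x : V₁ // x ≠ u} ⊕ {y : V₂ // y ≠ v}) :=
  SimpleGraph.fromRel (fun a b =>
    match a, b with
    | Sum.inl a, Sum.inl b => G₁.Adj a.1 b.1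
    | Sum.inr a, Sum.inr b => G₂.Adj a.1 b.1
    | Sum.inl a, Sum.inr b =>
        (a.1 = u₁ ∧ b.1 = v₁) ∨ (a.1 = u₂ ∧ b.1 = v₂) ∨ (a.1 = u₃ ∧ b.1 = v₃)
    | Sum.inr _, Sum.inl _ => False)

section ThreeCut

variable {V₁ V₂ : Type*} {G₁ : SimpleGraph V₁} {G₂ : SimpleGraph V₂}
  {u : V₁} {v : V₂} {u₁ u₂ u₃ : V₁} {v₁ v₂ v₃ : V₂}

lemma threeCutConnection_adj_inl_inl (a b : {x : V₁ // x ≠ u}) :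
    (threeCutConnection G₁ G₂ u v u₁ u₂ u₃ v₁ v₂ v₃).Adj (Sum.inl a) (Sum.inl b) ↔
      G₁.Adj a.1 b.1 := by
  simp only [threeCutConnection, SimpleGraph.fromRel_adj]
  constructor
  · rintro ⟨-, h | h⟩
    exacts [h, h.symm]
  · intro h
    refine ⟨fun hab => h.ne ?_, Or.inl h⟩
    rw [Sum.inl.inj hab]

lemma threeCutConnection_adj_inl_inr (a : {x : V₁ // x ≠ u}) (b : {y : V₂ // y ≠ v}) :
    (threeCutConnection G₁ G₂ u v u₁ u₂ u₃ v₁ v₂ v₃).Adj (Sum.inl a) (Sum.inr b) ↔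
      (a.1 = u₁ ∧ b.1 = v₁) ∨ (a.1 = u₂ ∧ b.1 = v₂) ∨ (a.1 = u₃ ∧ b.1 = v₃) := by
  simp [threeCutConnection, SimpleGraph.fromRel_adj]

/-- The vertex `a` of the left side is matched by `M` across the cut. -/
def Crosses {A B : Type*} {H : SimpleGraph (A ⊕ B)} (M : H.Subgraph) (a : A) : Prop :=
  ∃ b, M.Adj (Sum.inl a) (Sum.inr b)

/-- The number of vertices matched across has the parity of the left side, because
the remaining vertices of the left side are matched among themselves. -/
lemma odd_crossing {A B : Type*} [Fintype A] {H : SimpleGraph (A ⊕ B)} {M : H.Subgraph}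
    (hM : M.IsPerfectMatching) (hA : Odd (Fintype.card A)) : Odd {a | Crosses M a}.ncard := by
  classical
  rw [Subgraph.isPerfectMatching_iff] at hM
  choose p hp hpu using hM
  have hpp : ∀ x, p (p x) = x := fun x => (hpu _ _ (hp x).symm).symm
  -- The involution swapping the ends of each matching edge inside the left side;
  -- its fixed points are exactly the vertices matched across.
  let f : Function.End A := fun a => (p (Sum.inl a)).elim id (fun _ => a)
  have hf : f ^ 2 ^ 1 = 1 := by
    funext a
    change f (f a) = a
    rcases h : p (Sum.inl a) with b | b
    · have hb : f a = b := by simp [f, h]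
      have h' := hpp (Sum.inl a)
      rw [h] at h'
      simp [hb, f, h']
    · have hb : f a = a := by simp [f, h]
      rw [hb, hb]
  have key := Equiv.Perm.card_fixedPoints_modEq hf
  have hset : {a | Crosses M a} = Function.fixedPoints f := by
    ext a
    change Crosses M a ↔ f a = a
    constructor
    · rintro ⟨b, hb⟩
      have h : p (Sum.inl a) = Sum.inr b := (hpu _ _ hb).symm
      simp [f, h]
    · intro h
      rcases h' : p (Sum.inl a) with b | b
      · exfalso
        have hb : f a = b := by simp [f, h']
        have := hp (Sum.inl a)
        rw [h', ← hb, h] at this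
        exact this.ne rfl
      · exact ⟨b, h' ▸ hp (Sum.inl a)⟩
  rw [hset, ← Nat.card_coe_set_eq, Nat.card_eq_fintype_card, Nat.odd_iff]
  rw [Nat.odd_iff] at hA
  unfold Nat.ModEq at key
  convert key.symm.trans hA

/-- A cubic graph minus a vertex has an odd number of vertices. -/
lemma odd_card_ne [Fintype V₁] [DecidableEq V₁] [DecidableRel G₁.Adj]
    (hG₁ : G₁.IsRegularOfDegree 3) (u : V₁) : Odd (Fintype.card {x : V₁ // x ≠ u}) := by
  have h := G₁.sum_degrees_eq_twice_card_edges
  simp only [hG₁.degree_eq, Finset.sum_const, Finset.card_univ, smul_eq_mul] at h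
  have hpos : 0 < Fintype.card V₁ := Fintype.card_pos_iff.2 ⟨u⟩
  have hc : Fintype.card {x : V₁ // x ≠ u} = Fintype.card V₁ - 1 := by
    simp
  rw [hc, Nat.odd_iff]
  omega

lemma crosses_adj (hNu : G₁.neighborSet u = {u₁, u₂, u₃})
    {M : (threeCutConnection G₁ G₂ u v u₁ u₂ u₃ v₁ v₂ v₃).Subgraph} {a : {x : V₁ // x ≠ u}}
    (h : Crosses M a) : G₁.Adj u a.1 := by
  obtain ⟨b, hb⟩ := h
  have := (threeCutConnection_adj_inl_inr a b).1 hb.adj_sub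
  rw [← SimpleGraph.mem_neighborSet, hNu]
  simp only [Set.mem_insert_iff, Set.mem_singleton_iff]
  tauto

/-- The neighbours of a vertex of a cubic graph, listed as three, are distinct. -/
lemma neighbors_distinct [Fintype V₁] [DecidableRel G₁.Adj]
    (hG₁ : G₁.IsRegularOfDegree 3) (hNu : G₁.neighborSet u = {u₁, u₂, u₃}) :
    (G₁.neighborSet u).ncard = 3 ∧ u₁ ≠ u₂ ∧ u₁ ≠ u₃ ∧ u₂ ≠ u₃ := by
  have h3 : (G₁.neighborSet u).ncard = 3 := by
    rw [← Nat.card_coe_set_eq, Nat.card_eq_fintype_card, SimpleGraph.card_neighborSet_eq_degree]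
    exact hG₁ u
  refine ⟨h3, ?_⟩
  rw [hNu] at h3
  have hpair : ∀ x y : V₁, ({x, y} : Set V₁).ncard ≤ 2 := fun x y =>
    (Set.ncard_insert_le x {y}).trans (by simp)
  refine ⟨?_, ?_, ?_⟩
  · rintro rfl
    have := hpair u₁ u₃
    simp at h3
    omega
  · rintro rfl
    have := hpair u₂ u₁
    rw [Set.insert_comm] at h3
    simp at h3
    omega
  · rintro rfl
    have := hpair u₁ u₂
    simp at h3
    omega

/-- A perfect matching that misses a cut edge matches exactly one vertex across the cut:
an odd number of vertices cross, and at most two of the three neighbours of `u` do. -/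
lemma existsUnique_crosses [Fintype V₁] [DecidableRel G₁.Adj]
    (hG₁ : G₁.IsRegularOfDegree 3) (hNu : G₁.neighborSet u = {u₁, u₂, u₃})
    {M : (threeCutConnection G₁ G₂ u v u₁ u₂ u₃ v₁ v₂ v₃).Subgraph}
    (hM : M.IsPerfectMatching) {a : {x : V₁ // x ≠ u}} {b : {y : V₂ // y ≠ v}}
    (hab : (a.1 = u₁ ∧ b.1 = v₁) ∨ (a.1 = u₂ ∧ b.1 = v₂) ∨ (a.1 = u₃ ∧ b.1 = v₃))
    (hmiss : ¬ M.Adj (Sum.inl a) (Sum.inr b)) : ∃! x, Crosses M x := by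
  classical
  obtain ⟨h3, h12, h13, h23⟩ := neighbors_distinct hG₁ hNu
  have hodd := odd_crossing hM (odd_card_ne hG₁ u)
  -- Each neighbour of `u` lies on one cut edge only, so the `a` of a missed edge does not cross.
  have ha : ¬ Crosses M a := by
    rintro ⟨b', hb'⟩
    have hab' := (threeCutConnection_adj_inl_inr a b').1 hb'.adj_sub
    have : b = b' := by
      apply Subtype.ext
      grind
    exact hmiss (this ▸ hb')
  have hau : a.1 ∈ G₁.neighborSet u := by
    rw [hNu]
    simp only [Set.mem_insert_iff, Set.mem_singleton_iff]
    tauto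
  have hsub : Subtype.val '' {x | Crosses M x} ⊆ G₁.neighborSet u \ {a.1} := by
    rintro _ ⟨x, hx, rfl⟩
    refine ⟨crosses_adj hNu hx, fun hxa => ha ?_⟩
    rw [← Subtype.ext (Set.mem_singleton_iff.1 hxa)]
    exact hx
  have hle := Set.ncard_le_ncard hsub (Set.toFinite _)
  rw [Set.ncard_image_of_injective _ Subtype.val_injective,
    Set.ncard_sdiff_singleton_of_mem hau, h3] at hle
  have h1 : {x | Crosses M x}.ncard = 1 := by
    rw [Nat.odd_iff] at hodd
    omega
  obtain ⟨x, hx⟩ := Set.ncard_eq_one.1 h1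
  refine ⟨x, ?_, fun y hy => ?_⟩
  · exact (Set.ext_iff.1 hx x).2 rfl
  · exact (Set.ext_iff.1 hx y).1 hy

/-- The spanning subgraph of `G₁` obtained from `M` by contracting the `G₂` side to `u`:
edges inside `G₁ - u` are kept, and each cut edge becomes an edge at `u`. -/
def contractRightSide (hNu : G₁.neighborSet u = {u₁, u₂, u₃})
    (M : (threeCutConnection G₁ G₂ u v u₁ u₂ u₃ v₁ v₂ v₃).Subgraph) : G₁.Subgraph where
  verts := Set.univ
  Adj x y :=
    (∃ (hx : x ≠ u) (hy : y ≠ u), M.Adj (Sum.inl ⟨x, hx⟩) (Sum.inl ⟨y, hy⟩)) ∨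
    (x = u ∧ ∃ hy : y ≠ u, Crosses M ⟨y, hy⟩) ∨
    (y = u ∧ ∃ hx : x ≠ u, Crosses M ⟨x, hx⟩)
  adj_sub := by
    rintro x y (⟨hx, hy, h⟩ | ⟨rfl, hy, h⟩ | ⟨rfl, hx, h⟩)
    · exact (threeCutConnection_adj_inl_inl _ _).1 h.adj_sub
    · exact crosses_adj hNu h
    · exact (crosses_adj hNu h).symm
  edge_vert _ := Set.mem_univ _
  symm := by
    constructor
    rintro x y (⟨hx, hy, h⟩ | h | h)
    · exact Or.inl ⟨hy, hx, h.symm⟩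
    · exact Or.inr (Or.inr h)
    · exact Or.inr (Or.inl h)

lemma contractRightSide_isPerfectMatching (hNu : G₁.neighborSet u = {u₁, u₂, u₃})
    {M : (threeCutConnection G₁ G₂ u v u₁ u₂ u₃ v₁ v₂ v₃).Subgraph}
    (hM : M.IsPerfectMatching) (hcross : ∃! x, Crosses M x) :
    (contractRightSide hNu M).IsPerfectMatching := by
  rw [Subgraph.isPerfectMatching_iff] at hM ⊢
  intro x
  by_cases hx : x = u
  · subst hx
    obtain ⟨y, hy, hyu⟩ := hcross
    refine ⟨y.1, Or.inr (Or.inl ⟨rfl, y.2, hy⟩), ?_⟩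
    rintro z (⟨h, -, -⟩ | ⟨-, hz, h⟩ | ⟨-, h, -⟩)
    · exact absurd rfl h
    · rw [← hyu _ h]
    · exact absurd rfl h
  · obtain ⟨w, hw, hwu⟩ := hM (Sum.inl ⟨x, hx⟩)
    rcases w with ⟨y, hy⟩ | b
    · refine ⟨y, Or.inl ⟨hx, hy, hw⟩, ?_⟩
      rintro z (⟨_, hz, h⟩ | ⟨h, -⟩ | ⟨-, _, c, h⟩)
      · exact congrArg Subtype.val (Sum.inl.inj (hwu _ h))
      · exact absurd h hx
      · exact absurd (hwu _ h) Sum.inr_ne_inl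
    · refine ⟨u, Or.inr (Or.inr ⟨rfl, hx, b, hw⟩), ?_⟩
      rintro z (⟨_, hz, h⟩ | ⟨h, -⟩ | ⟨h, -⟩)
      · exact absurd (hwu _ h) Sum.inl_ne_inr
      · exact absurd h hx
      · exact h

/-- Every edge `uy` of `G₁` comes from a cut edge at `y`. -/
lemma exists_cut_edge (hNu : G₁.neighborSet u = {u₁, u₂, u₃})
    (hNv : G₂.neighborSet v = {v₁, v₂, v₃}) {y : V₁} (h : G₁.Adj u y) :
    ∃ b : {z : V₂ // z ≠ v},
      (threeCutConnection G₁ G₂ u v u₁ u₂ u₃ v₁ v₂ v₃).Adj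
        (Sum.inl ⟨y, h.ne'⟩) (Sum.inr b) := by
  have hv : ∀ z ∈ ({v₁, v₂, v₃} : Set V₂), z ≠ v := by
    intro z hz
    rw [← hNv] at hz
    exact hz.ne'
  have hy : y ∈ ({u₁, u₂, u₃} : Set V₁) := hNu ▸ h
  simp only [threeCutConnection_adj_inl_inr]
  rcases hy with hy | hy | hy
  · exact ⟨⟨v₁, hv _ (by simp)⟩, Or.inl ⟨hy, rfl⟩⟩
  · exact ⟨⟨v₂, hv _ (by simp)⟩, Or.inr (Or.inl ⟨hy, rfl⟩)⟩
  · exact ⟨⟨v₃, hv _ (by simp)⟩, Or.inr (Or.inr ⟨hy, rfl⟩)⟩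

end ThreeCut

/-- Let `G₁` be a cubic graph with `τ(G₁) = k ≥ 3`, `G₂` a bridgeless cubic graph,
and let `M₁, …, M_{k'}` be a `k'`-covering of `G₁ ⊗ G₂` with `k' = τ(G₁ ⊗ G₂)`.
Then either `k' ≥ k` or one of the matchings contains the principal `3`-edge cut. -/
theorem tau_threeCutConnection_alternative {V₁ V₂ : Type*} [Fintype V₁] [Fintype V₂]
    (G₁ : SimpleGraph V₁) (G₂ : SimpleGraph V₂)
    [DecidableRel G₁.Adj] [DecidableRel G₂.Adj]
    (hG₁ : G₁.IsRegularOfDegree 3) (hG₂ : G₂.IsRegularOfDegree 3)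
    (hbridgeless₂ : ∀ e ∈ G₂.edgeSet, ¬ G₂.IsBridge e)
    (u : V₁) (v : V₂) (u₁ u₂ u₃ : V₁) (v₁ v₂ v₃ : V₂)
    (hNu : G₁.neighborSet u = {u₁, u₂, u₃}) (hNv : G₂.neighborSet v = {v₁, v₂, v₃})
    (k : ℕ) (hk : 3 ≤ k) (htau : tau G₁ = k)
    (k' : ℕ) (hk' : tau (threeCutConnection G₁ G₂ u v u₁ u₂ u₃ v₁ v₂ v₃) = k')
    (M : Fin k' → (threeCutConnection G₁ G₂ u v u₁ u₂ u₃ v₁ v₂ v₃).Subgraph)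
    (hM : IsPMCovering (threeCutConnection G₁ G₂ u v u₁ u₂ u₃ v₁ v₂ v₃) M) :
    k ≤ k' ∨ ∃ i : Fin k', ∀ (a : {x : V₁ // x ≠ u}) (b : {y : V₂ // y ≠ v}),
      ((a.1 = u₁ ∧ b.1 = v₁) ∨ (a.1 = u₂ ∧ b.1 = v₂) ∨ (a.1 = u₃ ∧ b.1 = v₃)) →
        s(Sum.inl a, Sum.inr b) ∈ (M i).edgeSet := by
  by_contra! hcon
  obtain ⟨hlt, hmiss⟩ := hcon
  have hle : tau G₁ ≤ k' := by
    refine Nat.sInf_le ⟨fun i => contractRightSide hNu (M i), fun i => ?_, ?_⟩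
    · obtain ⟨a, b, hab, hn⟩ := hmiss i
      exact contractRightSide_isPerfectMatching hNu (hM.1 i)
        (existsUnique_crosses hG₁ hNu (hM.1 i) hab hn)
    · have hstar : ∀ y, G₁.Adj u y → ∃ i, (contractRightSide hNu (M i)).Adj u y := by
        intro y h
        obtain ⟨b, hb⟩ := exists_cut_edge hNu hNv h
        obtain ⟨i, hi⟩ := hM.2 _ ((SimpleGraph.mem_edgeSet _).2 hb)
        exact ⟨i, Or.inr (Or.inl ⟨rfl, h.ne', b, hi⟩)⟩
      intro e he
      induction e using Sym2.ind with
      | _ x y =>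
        rw [SimpleGraph.mem_edgeSet] at he
        simp only [Subgraph.mem_edgeSet]
        by_cases hx : x = u
        · subst hx
          exact hstar y he
        by_cases hy : y = u
        · subst hy
          obtain ⟨i, hi⟩ := hstar x he.symm
          exact ⟨i, hi.symm⟩
        obtain ⟨i, hi⟩ := hM.2 s(Sum.inl ⟨x, hx⟩, Sum.inl ⟨y, hy⟩)
          ((SimpleGraph.mem_edgeSet _).2 ((threeCutConnection_adj_inl_inl _ _).2 he))
        exact ⟨i, Or.inl ⟨hx, hy, hi⟩⟩
  omega
end

section
/- Let G be a cubic graph with a 4-covering {M₁,M₂,M₃,M₄} by perfect matchings. Then every edge of G is contained in exactly one or exactly two of the matchings M₁,M₂,M₃,M₄, and the set M of edges contained in exactly two of them is itself a perfect matching of G. -/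
/-!
Fix a vertex `v`. Each of the four perfect matchings uses exactly one of the three edges at `v`,
and each of these edges is used at least once. So the multiplicities of the three edges are
positive integers with sum `4`, hence they are `1, 1, 2` in some order
(`exists_unique_double_neighbor`). As every edge has an endpoint, all multiplicities are `1` or `2`,
and as exactly one edge at each vertex has multiplicity `2`, those edges form a perfect matching.
-/

open SimpleGraph

/-- The edges at a fixed vertex of a cubic graph with a `4`-covering have multiplicities
`2, 1, 1`. -/
lemma exists_unique_double_neighbor {V : Type*} [Fintype V]
    (G : SimpleGraph V) [DecidableRel G.Adj] (hG : G.IsRegularOfDegree 3)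
    (M : Fin 4 → G.Subgraph) (hM : IsPMCovering G M) (v : V) :
    ∃ w, G.Adj v w ∧ Nat.card {i : Fin 4 // s(v, w) ∈ (M i).edgeSet} = 2 ∧
      ∀ u, G.Adj v u → u ≠ w → Nat.card {i : Fin 4 // s(v, u) ∈ (M i).edgeSet} = 1 := by
  classical
  obtain ⟨hP, hC⟩ := hM
  -- `f i` is the partner of `v` in the matching `M i`.
  choose f hf hfu using fun i => (hP i).1 ((hP i).2 v)
  have hcard : ∀ w, Nat.card {i : Fin 4 // s(v, w) ∈ (M i).edgeSet} =
      (Finset.univ.filter fun i => f i = w).card := by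
    intro w
    rw [Nat.card_eq_fintype_card, Fintype.card_subtype]
    congr 1
    ext i
    simp only [Finset.mem_filter, Finset.mem_univ, true_and, Subgraph.mem_edgeSet]
    exact ⟨fun h => (hfu i w h).symm, fun h => h ▸ hf i⟩
  have hsum := Finset.card_eq_sum_card_fiberwise (f := f) (s := Finset.univ)
    (t := G.neighborFinset v) (fun i _ => by simpa using (hf i).adj_sub)
  have hpos : ∀ w, G.Adj v w → 0 < (Finset.univ.filter fun i => f i = w).card := by
    intro w hw
    obtain ⟨i, hi⟩ := hC s(v, w) hw
    exact Finset.card_pos.2 ⟨i, by simpa using (hfu i w hi).symm⟩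
  obtain ⟨a, b, c, hab, hac, hbc, hN⟩ := Finset.card_eq_three.1 (hG v)
  have hadj : ∀ w, G.Adj v w ↔ w = a ∨ w = b ∨ w = c := by
    intro w
    rw [← G.mem_neighborFinset, hN]
    simp
  rw [hN, Finset.sum_insert (by simp [hab, hac]), Finset.sum_insert (by simp [hbc]),
    Finset.sum_singleton, Finset.card_univ, Fintype.card_fin] at hsum
  have ha := hpos a (by simp [hadj])
  have hb := hpos b (by simp [hadj])
  have hc := hpos c (by simp [hadj])
  simp only [hcard, hadj]
  have key : (Finset.univ.filter fun i => f i = a).card = 2 ∨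
      (Finset.univ.filter fun i => f i = b).card = 2 ∨
      (Finset.univ.filter fun i => f i = c).card = 2 := by omega
  rcases key with h | h | h
  · refine ⟨a, by simp, h, ?_⟩
    rintro u (rfl | rfl | rfl) hu <;> first | exact absurd rfl hu | omega
  · refine ⟨b, by simp, h, ?_⟩
    rintro u (rfl | rfl | rfl) hu <;> first | exact absurd rfl hu | omega
  · refine ⟨c, by simp, h, ?_⟩
    rintro u (rfl | rfl | rfl) hu <;> first | exact absurd rfl hu | omega


/-- If a cubic graph has a `4`-covering `{M₁, M₂, M₃, M₄}` by perfect matchings, then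
every edge lies in exactly one or exactly two of the matchings, and the set of
edges lying in exactly two of them is itself a perfect matching. -/
theorem four_covering_structure {V : Type*} [Fintype V]
    (G : SimpleGraph V) [DecidableRel G.Adj] (hG : G.IsRegularOfDegree 3)
    (M : Fin 4 → G.Subgraph) (hM : IsPMCovering G M) :
    (∀ e ∈ G.edgeSet,
        Nat.card {i : Fin 4 // e ∈ (M i).edgeSet} = 1 ∨
        Nat.card {i : Fin 4 // e ∈ (M i).edgeSet} = 2) ∧
      ∃ N : G.Subgraph, N.IsPerfectMatching ∧
        N.edgeSet = {e ∈ G.edgeSet | Nat.card {i : Fin 4 // e ∈ (M i).edgeSet} = 2} := by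
  have key := exists_unique_double_neighbor G hG M hM
  constructor
  · intro e
    induction e using Sym2.ind with
    | _ v u =>
      intro hvu
      obtain ⟨w, -, hw2, hw1⟩ := key v
      by_cases h : u = w
      · exact Or.inr (h ▸ hw2)
      · exact Or.inl (hw1 u hvu h)
  · refine ⟨{ verts := Set.univ
              Adj := fun v w => G.Adj v w ∧ Nat.card {i : Fin 4 // s(v, w) ∈ (M i).edgeSet} = 2
              adj_sub := fun h => h.1
              edge_vert := fun _ => Set.mem_univ _
              symm := ?_ }, ⟨?_, fun v => Set.mem_univ v⟩, ?_⟩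
    · refine ⟨fun v w h => ⟨h.1.symm, ?_⟩⟩
      rw [Sym2.eq_swap]
      exact h.2
    · intro v _
      obtain ⟨w, hvw, hw2, hw1⟩ := key v
      refine ⟨w, ⟨hvw, hw2⟩, ?_⟩
      rintro u ⟨hvu, hu2⟩
      by_contra h
      have := hw1 u hvu h
      omega
    · ext e
      induction e using Sym2.ind with
      | _ v u => exact Iff.rfl
end

section
/- Let G be a bridgeless cubic graph with τ(G) = 4. Then G has at least 12 vertices. -/
/-!
A covering of a cubic graph by four perfect matchings covers, at each vertex, exactly one of the
three edges twice. The doubly covered edges therefore form a perfect matching, given by a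
fixed-point-free involution `d`, and the remaining edges form a 2-factor, which can be oriented as
the cycles of a permutation `σ`. Colouring each edge of the 2-factor by the unique matching that
contains it gives a proper edge colouring with 4 colours in which the two ends of each edge
`v -- d v` see the same pair of colours on the 2-factor (`exists_compat_of_covering`). Conversely,
such a colouring with 3 colours gives a proper 3-edge-colouring of the graph, hence a covering by
three perfect matchings (`exists_covering_of_compat`).

So it suffices to show that on at most 11 vertices a compatible 4-colouring forces a compatible
3-colouring for the same `σ` and `d` (`compat_three_of_four`). The number of vertices is even, and
up to conjugation `σ` is determined by its cycle type, whose parts are at least 3. This leaves 11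
cycle types on at most 10 vertices. For each of them every involution `d` is examined
by a verified search: either a compatible 3-colouring is found, or no compatible 4-colouring
exists (as for the Petersen graph, with `σ` of type `5 + 5`).
-/

open SimpleGraph

/-! ### Compatible colourings and coverings -/

/-- `Compat k σ d`: the graph with edges `v -- σ v` and `v -- d v` has a proper `k`-colouring of the
edges `v -- σ v` such that the two ends of each edge `v -- d v` see the same pair of colours. The
edge `v -- σ v` carries the colour `c v`. -/
def Compat {V : Type*} (k : ℕ) (σ : Equiv.Perm V) (d : V → V) : Prop :=
  ∃ c : V → Fin k, (∀ v, c v ≠ c (σ v)) ∧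
    ∀ v, s(c (σ⁻¹ v), c v) = s(c (σ⁻¹ (d v)), c (d v))

/-- The edges of a 2-regular simple graph can be oriented so that they become the cycles of a
permutation. The map `P` sends a directed edge `(v, w)` to the next one `(w, u)` with `u ≠ v`, and
`R` reverses directed edges. No directed edge lies in the same `P`-orbit as its reversal, so one
orbit can be selected from each pair of mutually reverse orbits. -/
theorem exists_orientation {V : Type*} [Finite V] (C : V → V → Prop)
    (hirr : ∀ v, ¬ C v v) (hs : ∀ v w, C v w → C w v) (hex : ∀ v, ∃ w, C v w)
    (h : ∀ v w, C v w → ∃ u, C v u ∧ u ≠ w ∧ ∀ u', C v u' → u' = w ∨ u' = u) :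
    ∃ σ : Equiv.Perm V, (∀ v w, C v w ↔ w = σ v ∨ v = σ w) ∧ ∀ v, σ (σ v) ≠ v := by
  classical
  choose! o ho1 ho2 ho3 using h
  have hoo : ∀ v w, C v w → o v (o v w) = w := by
    intro v w hvw
    rcases ho3 v (o v w) (ho1 v w hvw) w hvw with h1 | h1
    · exact absurd h1.symm (ho2 v w hvw)
    · exact h1.symm
  let X := {x : V × V // C x.1 x.2}
  let R : X → X := fun x => ⟨(x.1.2, x.1.1), hs _ _ x.2⟩
  let Pf : X → X := fun x => ⟨(x.1.2, o x.1.2 x.1.1), ho1 _ _ (hs _ _ x.2)⟩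
  have hRR : ∀ x, R (R x) = x := fun x => rfl
  have hPR : ∀ x, Pf (R (Pf (R x))) = x := by
    rintro ⟨⟨v, w⟩, hx⟩
    apply Subtype.ext
    simp only [Pf, R]
    rw [hoo v w hx]
  let P : Equiv.Perm X := ⟨Pf, fun x => R (Pf (R x)),
    fun x => by
      have := hPR (R x)
      rw [hRR] at this
      show R (Pf (R (Pf x))) = x
      calc _ = R (Pf (R (Pf (R (R x))))) := rfl
        _ = x := by rw [hPR (R x)],
    hPR⟩
  let RR : Equiv.Perm X := ⟨R, R, hRR, hRR⟩
  -- Reversal conjugates `P` to its inverse.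
  have hconj : RR * P * RR⁻¹ = P⁻¹ := by
    ext1 x; rfl
  have hconjz : ∀ (k : ℤ) x, R ((P ^ k) x) = (P ^ (-k)) (R x) := by
    intro k x
    have : (RR * P * RR⁻¹) ^ k = P ^ (-k) := by rw [hconj, inv_zpow, zpow_neg]
    rw [conj_zpow] at this
    rw [← this]
    rfl
  have hRne : ∀ x, R x ≠ x := by
    rintro ⟨⟨v, w⟩, hx⟩ he
    have : w = v := congrArg (fun y : X => y.1.1) he
    subst this
    exact hirr _ hx
  have hPne : ∀ x, P x ≠ R x := by
    rintro ⟨⟨v, w⟩, hx⟩ he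
    have : o w v = v := congrArg (fun y : X => y.1.2) he
    exact ho2 w v (hs _ _ hx) this
  have hnot : ∀ x, ¬ P.SameCycle x (R x) := by
    rintro x ⟨k, hk⟩
    rcases Int.even_or_odd' k with ⟨j, rfl | rfl⟩
    -- If `P ^ (2 * j) x = R x`, then `P ^ j x` is fixed by `R`.
    · apply hRne ((P ^ j) x)
      rw [hconjz, ← hk, ← Equiv.Perm.mul_apply, ← zpow_add]
      congr 2
      ring
    -- If `P ^ (2 * j + 1) x = R x`, then `P` and `R` agree at `P ^ j x`.
    · apply hPne ((P ^ j) x)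
      rw [hconjz, ← hk, ← Equiv.Perm.mul_apply, ← Equiv.Perm.mul_apply, ← zpow_add,
        ← zpow_one_add]
      congr 2
      ring
  -- `r` numbers the orbits; of two mutually reverse orbits, the one with the smaller number is
  -- selected.
  obtain ⟨r, hr⟩ : ∃ r : X → ℕ, ∀ x y, r x = r y ↔ P.SameCycle x y := by
    let S := Equiv.Perm.SameCycle.setoid P
    obtain ⟨n, ⟨e⟩⟩ := Finite.exists_equiv_fin (Quotient S)
    refine ⟨fun x => (e (Quotient.mk S x)).val, fun x y => ?_⟩
    rw [Fin.val_inj, e.apply_eq_iff_eq, Quotient.eq]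
    rfl
  have hrP : ∀ x, r (P x) = r x := fun x => (hr _ _).2 ((Equiv.Perm.sameCycle_apply_left).2 (Equiv.Perm.SameCycle.refl _ _))
  have hrRP : ∀ x, r (R (P x)) = r (R x) := by
    intro x
    have : P (R (P x)) = R x := by
      have := hPR (R x)
      exact this
    rw [← this, hrP]
  let Pos : X → Prop := fun x => r x < r (R x)
  have hPosR : ∀ x, Pos (R x) ↔ ¬ Pos x := by
    intro x
    have : r x ≠ r (R x) := fun he => hnot x ((hr _ _).1 he)
    simp only [Pos, hRR]
    omega
  have hPosP : ∀ x, Pos (P x) ↔ Pos x := by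
    intro x
    simp only [Pos, hrP, hrRP]
  have hPosO : ∀ v w (hx : C v w), Pos ⟨(v, o v w), ho1 v w hx⟩ ↔ ¬ Pos ⟨(v, w), hx⟩ := by
    intro v w hx
    exact (hPosP (R ⟨(v, w), hx⟩)).trans (hPosR _)
  have hσ : ∀ v, ∃ w, ∃ hx : C v w, Pos ⟨(v, w), hx⟩ := by
    intro v
    obtain ⟨w, hw⟩ := hex v
    by_cases hp : Pos ⟨(v, w), hw⟩
    · exact ⟨w, hw, hp⟩
    · exact ⟨o v w, ho1 v w hw, (hPosO v w hw).2 hp⟩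
  choose σ hC hP using hσ
  have huniq : ∀ v w (hx : C v w), Pos ⟨(v, w), hx⟩ → w = σ v := by
    intro v w hx hp
    rcases ho3 v (σ v) (hC v) w hx with h1 | h1
    · exact h1
    · subst h1
      exact absurd (hP v) ((hPosO v (σ v) (hC v)).1 hp)
  have hσσ : ∀ v, σ (σ v) = o (σ v) v := by
    intro v
    exact (huniq (σ v) (o (σ v) v) (ho1 _ _ (hs _ _ (hC v))) ((hPosP ⟨(v, σ v), hC v⟩).2 (hP v))).symm
  have hinj : Function.Injective σ := by
    intro v v' hvv
    by_contra hne
    have h1 := hC v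
    have h2 := hC v'
    rw [← hvv] at h2
    rcases ho3 (σ v) v (hs _ _ h1) v' (hs _ _ h2) with h3 | h3
    · exact hne h3.symm
    · have := hσσ v
      rw [← h3, hvv] at this
      have h4 := hσσ v'
      exact ho2 (σ v') v' (hs _ _ (hC v')) (h4.symm.trans this)
  refine ⟨Equiv.ofBijective σ (Finite.injective_iff_bijective.1 hinj), ?_, ?_⟩
  · intro v w
    show C v w ↔ w = σ v ∨ v = σ w
    constructor
    · intro hx
      by_cases hp : Pos ⟨(v, w), hx⟩
      · exact Or.inl (huniq v w hx hp)
      · exact Or.inr (huniq w v (hs _ _ hx) ((hPosR ⟨(v, w), hx⟩).2 hp))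
    · rintro (rfl | rfl)
      · exact hC v
      · exact hs _ _ (hC w)
  · intro v
    show σ (σ v) ≠ v
    rw [hσσ]
    exact ho2 _ _ (hs _ _ (hC v))

/-- A covering of a cubic graph by four perfect matchings yields the matching `d` of the doubly
covered edges, an orientation `σ` of the complementary 2-factor, and a compatible 4-colouring. -/
theorem exists_compat_of_covering {V : Type*} [Fintype V] (G : SimpleGraph V)
    [DecidableRel G.Adj] (hG : G.IsRegularOfDegree 3) (M : Fin 4 → G.Subgraph)
    (hM : IsPMCovering G M) :
    ∃ (σ : Equiv.Perm V) (d : V → V),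
      (∀ v w, G.Adj v w ↔ w = d v ∨ w = σ v ∨ v = σ w) ∧
      (∀ v, d (d v) = v) ∧ (∀ v, d v ≠ v) ∧ (∀ v, d v ≠ σ v) ∧ (∀ v, σ v ≠ v) ∧
      (∀ v, σ (σ v) ≠ v) ∧ Compat 4 σ d := by
  classical
  obtain ⟨hpm, hcov⟩ := hM
  have hpm' : ∀ i v, ∃! w, (M i).Adj v w := fun i => Subgraph.isPerfectMatching_iff.1 (hpm i)
  choose m hm hmu using hpm'
  have hmadj : ∀ i v, G.Adj v (m i v) := fun i v => (M i).adj_sub (hm i v)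
  have hmm : ∀ i v, m i (m i v) = v := fun i v => (hmu i (m i v) v (hm i v).symm).symm
  have hmc : ∀ v w, G.Adj v w → ∃ i, m i v = w := by
    intro v w hvw
    obtain ⟨i, hi⟩ := hcov s(v, w) hvw
    exact ⟨i, (hmu i v w hi).symm⟩
  have hcard : ∀ v, (Finset.univ.image (fun i => m i v)).card = 3 := by
    intro v
    rw [← hG v, ← card_neighborFinset_eq_degree]
    congr 1
    ext w
    simp only [Finset.mem_image, Finset.mem_univ, true_and, mem_neighborFinset]
    exact ⟨fun ⟨i, hi⟩ => hi ▸ hmadj i v, hmc v w⟩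
  -- At each vertex four matchings cover three edges, so some edge is covered twice, and a second
  -- such edge would leave at most two distinct neighbours.
  have hdbl : ∀ v, ∃ w, (∃ i j, i ≠ j ∧ m i v = w ∧ m j v = w) := by
    intro v
    by_contra hno
    push Not at hno
    have hinj : Function.Injective (fun i => m i v) := by
      intro i j hij
      by_contra hne
      exact hno _ i j hne rfl hij.symm
    have := Finset.card_image_of_injective Finset.univ hinj
    rw [hcard v] at this
    simp at this
  have hdblu : ∀ v i j k l, i ≠ j → k ≠ l → m i v = m j v → m k v = m l v → m i v = m k v := by
    intro v i j k l hij hkl h1 h2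
    by_contra hne
    have hsub : Finset.univ.image (fun i => m i v) ⊆ {m i v, m k v} := by
      intro w hw
      obtain ⟨t, -, rfl⟩ := Finset.mem_image.1 hw
      have hik : i ≠ k := by rintro rfl; exact hne rfl
      have hil : i ≠ l := by rintro rfl; exact hne h2.symm
      have hjk : j ≠ k := by rintro rfl; exact hne h1
      have hjl : j ≠ l := by rintro rfl; exact hne (h1.trans h2.symm)
      have ht : t = i ∨ t = j ∨ t = k ∨ t = l := by omega
      rcases ht with rfl | rfl | rfl | rfl <;> simp [h1, h2]
    have := (Finset.card_le_card hsub).trans Finset.card_le_two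
    rw [hcard v] at this
    omega
  choose d i₁ i₂ hi12 hi1 hi2 using hdbl
  have hdu : ∀ v i j, i ≠ j → m i v = m j v → m i v = d v := by
    intro v i j hij h1
    rw [← hi1 v]
    exact hdblu v i j _ _ hij (hi12 v) h1 ((hi1 v).trans (hi2 v).symm)
  have hdd : ∀ v, d (d v) = v := by
    intro v
    have e1 : m (i₁ v) (d v) = v := by conv_lhs => rw [← hi1 v, hmm]
    have e2 : m (i₂ v) (d v) = v := by conv_lhs => rw [← hi2 v, hmm]
    rw [← hdu (d v) _ _ (hi12 v) (e1.trans e2.symm), e1]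
  have hdadj : ∀ v, G.Adj v (d v) := fun v => hi1 v ▸ hmadj (i₁ v) v
  have hNcard : ∀ v, ((G.neighborFinset v).erase (d v)).card = 2 := by
    intro v
    rw [Finset.card_erase_of_mem (by simpa using hdadj v), card_neighborFinset_eq_degree, hG v]
  obtain ⟨σ, hσ, hσσ⟩ := exists_orientation (fun v w => G.Adj v w ∧ w ≠ d v)
    (fun v hv => G.loopless.irrefl v hv.1)
    (fun v w ⟨h1, h2⟩ => ⟨h1.symm, fun h3 => h2 (by rw [h3, hdd])⟩)
    (fun v => by
      obtain ⟨w, hw⟩ := Finset.card_pos.1 (by rw [hNcard v]; norm_num :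
        0 < ((G.neighborFinset v).erase (d v)).card)
      rw [Finset.mem_erase, mem_neighborFinset] at hw
      exact ⟨w, hw.2, hw.1⟩)
    (fun v w ⟨h1, h2⟩ => by
      have hc : (((G.neighborFinset v).erase (d v)).erase w).card = 1 := by
        rw [Finset.card_erase_of_mem (by simpa using ⟨h2, h1⟩), hNcard]
      obtain ⟨u, hu⟩ := Finset.card_eq_one.1 hc
      have hmem : ∀ x, x ∈ (((G.neighborFinset v).erase (d v)).erase w) ↔ x = u := by
        intro x; rw [hu, Finset.mem_singleton]
      simp only [Finset.mem_erase, mem_neighborFinset] at hmem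
      have := (hmem u).2 rfl
      refine ⟨u, ⟨this.2.2, this.2.1⟩, this.1, fun u' hu' => ?_⟩
      by_cases hw : u' = w
      · exact Or.inl hw
      · exact Or.inr ((hmem u').1 ⟨hw, hu'.2, hu'.1⟩))
  have hσadj : ∀ v, G.Adj v (σ v) ∧ σ v ≠ d v := fun v => (hσ v (σ v)).2 (Or.inl rfl)
  choose c hc using fun v => hmc v (σ v) (hσadj v).1
  have hcu : ∀ v i, m i v = σ v → i = c v := by
    intro v i hi
    by_contra hne
    exact (hσadj v).2 (hi ▸ hdu v i (c v) hne (hi.trans (hc v).symm))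
  have hswap : ∀ i v w, m i v = w ↔ m i w = v := fun i v w =>
    ⟨fun h => h ▸ hmm i v, fun h => h ▸ hmm i w⟩
  -- The colours on the two cycle edges at `v` are those of the matchings that avoid `d v`.
  have htype : ∀ v i, i ∈ s(c (σ⁻¹ v), c v) ↔ m i v ≠ d v := by
    intro v i
    have hinv : σ (σ⁻¹ v) = v := σ.apply_symm_apply v
    rw [Sym2.mem_iff]
    constructor
    · rintro (rfl | rfl)
      · have h1 := hc (σ⁻¹ v)
        rw [hinv, hswap] at h1
        rw [h1]
        exact ((hσ v (σ⁻¹ v)).2 (Or.inr hinv.symm)).2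
      · rw [hc]
        exact (hσadj v).2
    · intro hne
      rcases (hσ v (m i v)).1 ⟨hmadj i v, hne⟩ with h1 | h1
      · exact Or.inr (hcu v i h1)
      · left
        apply hcu
        have : σ⁻¹ v = m i v := by
          rw [Equiv.Perm.inv_eq_iff_eq]; exact h1
        rw [hinv, this, hmm]
  refine ⟨σ, d, ?_, hdd, fun v h => (hdadj v).ne h.symm, fun v h => (hσadj v).2 h.symm,
    fun v h => (hσadj v).1.ne h.symm, hσσ, c, ?_, ?_⟩
  · intro v w
    rw [← hσ]
    constructor
    · intro h
      by_cases hw : w = d v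
      · exact Or.inl hw
      · exact Or.inr ⟨h, hw⟩
    · rintro (rfl | h)
      · exact hdadj v
      · exact h.1
  · intro v he
    have h1 := hc v
    rw [hswap, he, hc (σ v)] at h1
    exact hσσ v h1
  · intro v
    apply Sym2.ext
    intro i
    rw [htype, htype, hdd, not_iff_not, hswap]

/-- In a compatible 3-colouring, the edge `v -- d v` takes the colour missing at both its ends; each
colour class is a perfect matching. -/
theorem exists_covering_of_compat {V : Type*} (G : SimpleGraph V) (σ : Equiv.Perm V) (d : V → V)
    (hadj : ∀ v w, G.Adj v w ↔ w = d v ∨ w = σ v ∨ v = σ w) (hdd : ∀ v, d (d v) = v)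
    (h : Compat 3 σ d) : ∃ M : Fin 3 → G.Subgraph, IsPMCovering G M := by
  classical
  obtain ⟨c, hc, ht⟩ := h
  let f : Fin 3 → V → V := fun a v =>
    if c v = a then σ v else if c (σ⁻¹ v) = a then σ⁻¹ v else d v
  have hinv : ∀ v, σ (σ⁻¹ v) = v := σ.apply_symm_apply
  have hinv' : ∀ v, σ⁻¹ (σ v) = v := σ.symm_apply_apply
  have hfadj : ∀ a v, G.Adj v (f a v) := by
    intro a v
    rw [hadj]
    simp only [f]
    split_ifs
    · simp
    · right; right; rw [hinv]
    · simp
  have hff : ∀ a v, f a (f a v) = v := by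
    intro a v
    by_cases h1 : c v = a
    · have e1 : f a v = σ v := if_pos h1
      have h2 : c (σ v) ≠ a := fun h => hc v (h1.trans h.symm)
      rw [e1]
      simp [f, h2, h1]
    · by_cases h2 : c (σ⁻¹ v) = a
      · have e1 : f a v = σ⁻¹ v := by simp only [f]; rw [if_neg h1, if_pos h2]
        rw [e1]
        simp only [f]
        rw [if_pos h2, hinv]
      · have e1 : f a v = d v := by simp only [f]; rw [if_neg h1, if_neg h2]
        have h3 : a ∉ s(c (σ⁻¹ v), c v) := by
          rw [Sym2.mem_iff]; push Not; exact ⟨Ne.symm h2, Ne.symm h1⟩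
        rw [ht, Sym2.mem_iff] at h3
        push Not at h3
        rw [e1]
        simp only [f]
        rw [if_neg h3.2.symm, if_neg h3.1.symm, hdd]
  let M : Fin 3 → G.Subgraph := fun a =>
    { verts := Set.univ
      Adj := fun v w => f a v = w
      adj_sub := by rintro v w rfl; exact hfadj a v
      edge_vert := fun _ => Set.mem_univ _
      symm := ⟨by rintro v w rfl; exact hff a v⟩ }
  refine ⟨M, fun a => ?_, ?_⟩
  · rw [Subgraph.isPerfectMatching_iff]
    exact fun v => ⟨f a v, rfl, fun w hw => Eq.symm hw⟩
  · have key : ∀ v, ∃ a, f a v = σ v := fun v => ⟨c v, if_pos rfl⟩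
    intro e
    induction e using Sym2.ind with
    | _ v w =>
    intro he
    rcases (hadj v w).1 he with rfl | rfl | rfl
    · obtain ⟨a, h1, h2⟩ : ∃ a : Fin 3, c v ≠ a ∧ c (σ⁻¹ v) ≠ a := by
        generalize c v = x
        generalize c (σ⁻¹ v) = y
        revert x y
        decide
      refine ⟨a, ?_⟩
      show f a v = d v
      simp only [f]
      rw [if_neg h1, if_neg h2]
    · exact key v
    · obtain ⟨a, ha⟩ := key w
      refine ⟨a, ?_⟩
      show f a (σ w) = w
      rw [← ha, hff]

/-! ### A verified search for compatible colourings -/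

/-- In the search, vertices are numbers and `f i` is the colour of the edge from `i` to its
successor. For an edge `x -- y` of the matching, with predecessors `a` of `x` and `c` of `y`,
`Sat f (a, x, c, y)` says that the colouring is proper at `x` and `y` and that both see the same
pair of colours. -/
def Sat (f : ℕ → ℕ) : ℕ × ℕ × ℕ × ℕ → Prop
  | (a, b, c, d) => f a ≠ f b ∧ f c ≠ f d ∧ (f a = f c ∧ f b = f d ∨ f a = f d ∧ f b = f c)

/-- The partial colouring `f 0, …, f (j - 1)` encoded as a number with base-8 digits `f i + 1`, so
that the digit `0` marks an edge without a colour. Arithmetic on numbers is fast in the kernel. -/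
def enc (f : ℕ → ℕ) : ℕ → ℕ
  | 0 => 0
  | j + 1 => enc f j + (f j + 1) * 8 ^ j

/-- The base-8 digit of `s` at position `i`. -/
def digit (s i : ℕ) : ℕ := Nat.mod (Nat.div s (Nat.pow 8 i)) 8

/-- The colours differ, or one of them is not yet assigned. -/
def neB (x y : ℕ) : Bool := Nat.beq x 0 || (Nat.beq y 0 || !(Nat.beq x y))

/-- The unordered pairs of colours agree, or some colour is not yet assigned. -/
def sameB (x y z w : ℕ) : Bool :=
  Nat.beq x 0 || (Nat.beq y 0 || (Nat.beq z 0 || (Nat.beq w 0 ||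
    ((Nat.beq x z && Nat.beq y w) || (Nat.beq x w && Nat.beq y z)))))

/-- Test of `Sat` on an encoded partial colouring; parts with unassigned colours count as true. -/
def satB (s : ℕ) : ℕ × ℕ × ℕ × ℕ → Bool
  | (a, b, c, d) => neB (digit s a) (digit s b) && (neB (digit s c) (digit s d) &&
      sameB (digit s a) (digit s b) (digit s c) (digit s d))

/-- Backtracking search for a colouring with `k` colours that extends the partial colouring `s` of
the edges below `j` and meets all constraints in `Q`. The list has one entry for each further edge:
the constraints that are tested as soon as this edge is coloured. -/
def colB (k : ℕ) (Q : List (ℕ × ℕ × ℕ × ℕ)) :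
    List (List (ℕ × ℕ × ℕ × ℕ)) → ℕ → ℕ → Bool
  | [], _, s => Q.all (satB s)
  | g :: gs, j, s => (List.range k).any fun x =>
      g.all (satB (Nat.add s (Nat.mul (Nat.succ x) (Nat.pow 8 j)))) &&
        colB k Q gs (Nat.succ j) (Nat.add s (Nat.mul (Nat.succ x) (Nat.pow 8 j)))

/-- The constraint involves the edge `i`. -/
def relevant (i : ℕ) : ℕ × ℕ × ℕ × ℕ → Bool
  | (a, b, c, d) => Nat.beq i a || (Nat.beq i b || (Nat.beq i c || Nat.beq i d))

/-- For the matching with edge list `P`: a compatible 3-colouring is found or there is no compatible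
4-colouring. Edges `0` and `1` share a vertex, so they may be given the colours `0` and `1`; this
partial colouring is encoded by `17 = 1 + 2 * 8`. -/
def leafB (n : ℕ) (pv : ℕ → ℕ) (P : List (ℕ × ℕ)) : Bool :=
  let Q := P.map fun p => (pv p.1, p.1, pv p.2, p.2)
  let gs := (List.range (n - 2)).map fun i => Q.filter (relevant (i + 2))
  colB 3 Q gs 2 17 || !(colB 4 Q gs 2 17)

/-- Runs `leafB` on all perfect matchings that extend `P` by pairs from the given list and contain no
edge of the 2-factor. The first argument after `pv` bounds the recursion depth. -/
def enumB (n : ℕ) (pv : ℕ → ℕ) : ℕ → List ℕ → List (ℕ × ℕ) → Bool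
  | 0, _, _ => false
  | _ + 1, [], P => leafB n pv P
  | m + 1, x :: xs, P => xs.all fun y =>
      Nat.beq (pv x) y || (Nat.beq (pv y) x || enumB n pv m (xs.erase y) ((x, y) :: P))

/-- The predecessor function given by a table. -/
def prevOf (l : List ℕ) (i : ℕ) : ℕ := l.getD i 0

/-- Runs `leafB` on all perfect matchings disjoint from the 2-factor with predecessor table `l`. -/
def checkB (l : List ℕ) : Bool :=
  enumB l.length (prevOf l) (l.length + 1) (List.range l.length) []

theorem enc_lt (f : ℕ → ℕ) (hf : ∀ i, f i < 4) (j : ℕ) : enc f j < 8 ^ j := by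
  induction j with
  | zero => simp [enc]
  | succ j ih =>
    rw [enc, pow_succ]
    have h1 : (f j + 1) * 8 ^ j ≤ 4 * 8 ^ j := Nat.mul_le_mul_right _ (hf j)
    omega

theorem enc_congr (f g : ℕ → ℕ) (j : ℕ) (h : ∀ i < j, f i = g i) : enc f j = enc g j := by
  induction j with
  | zero => rfl
  | succ j ih => rw [enc, enc, ih fun i hi => h i (by omega), h j (by omega)]

theorem digit_enc (f : ℕ → ℕ) (hf : ∀ i, f i < 4) (j i : ℕ) :
    digit (enc f j) i = if i < j then f i + 1 else 0 := by
  change enc f j / 8 ^ i % 8 = _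
  induction j with
  | zero => simp [enc]
  | succ j ih =>
    have hlt := enc_lt f hf j
    rw [enc]
    rcases lt_trichotomy i j with hij | rfl | hij
    · obtain ⟨t, rfl⟩ : ∃ t, j = i + (t + 1) := ⟨j - i - 1, by omega⟩
      have e : (f (i + (t + 1)) + 1) * 8 ^ (i + (t + 1)) =
          8 ^ i * (8 * ((f (i + (t + 1)) + 1) * 8 ^ t)) := by ring
      rw [e, Nat.add_mul_div_left _ _ (by positivity), Nat.add_mul_mod_self_left, ih,
        if_pos hij, if_pos (by omega)]
    · rw [Nat.add_mul_div_right _ _ (by positivity), Nat.div_eq_of_lt hlt, if_pos (by omega)]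
      have := hf i
      omega
    · have h1 := enc_lt f hf (j + 1)
      rw [enc] at h1
      rw [Nat.div_eq_of_lt (h1.trans_le (Nat.pow_le_pow_right (by norm_num) hij)),
        if_neg (by omega)]

theorem natBeq_eq_false (x y : ℕ) : Nat.beq x y = false ↔ x ≠ y := by
  rw [← Bool.not_eq_true, Nat.beq_eq]

theorem satB_of_sat (f : ℕ → ℕ) (hf : ∀ i, f i < 4) (j : ℕ) (q : ℕ × ℕ × ℕ × ℕ) (h : Sat f q) :
    satB (enc f j) q = true := by
  obtain ⟨a, b, c, d⟩ := q
  obtain ⟨h1, h2, h3⟩ := h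
  simp only [satB, neB, sameB, digit_enc f hf, Bool.and_eq_true, Bool.or_eq_true, Nat.beq_eq,
    Bool.not_eq_true', natBeq_eq_false]
  split_ifs <;> omega

theorem sat_of_satB (f : ℕ → ℕ) (hf : ∀ i, f i < 4) (n a b c d : ℕ) (ha : a < n) (hb : b < n)
    (hc : c < n) (hd : d < n) (h : satB (enc f n) (a, b, c, d) = true) : Sat f (a, b, c, d) := by
  simp only [satB, neB, sameB, digit_enc f hf, Bool.and_eq_true, Bool.or_eq_true, Nat.beq_eq,
    Bool.not_eq_true', natBeq_eq_false, if_pos ha, if_pos hb, if_pos hc, if_pos hd] at h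
  simp only [Sat]
  omega

theorem colB_sound (k : ℕ) (Q : List (ℕ × ℕ × ℕ × ℕ)) :
    ∀ (gs : List (List (ℕ × ℕ × ℕ × ℕ))) (j : ℕ) (f : ℕ → ℕ), colB k Q gs j (enc f j) = true →
      (∀ i, f i < k) →
      ∃ f' : ℕ → ℕ, (∀ i, f' i < k) ∧ ∀ q ∈ Q, satB (enc f' (j + gs.length)) q = true
  | [], j, f, h, hf => ⟨f, hf, by simpa [colB] using h⟩
  | g :: gs, j, f, h, hf => by
    simp only [colB, List.any_eq_true, Bool.and_eq_true, List.mem_range] at h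
    obtain ⟨x, hx, -, h⟩ := h
    have e : enc (Function.update f j x) (j + 1) =
        Nat.add (enc f j) (Nat.mul (Nat.succ x) (Nat.pow 8 j)) := by
      rw [enc, Function.update_self, enc_congr _ f j fun i hi =>
        Function.update_of_ne (Nat.ne_of_lt hi) _ _]
      rfl
    rw [← e] at h
    obtain ⟨f', h1, h2⟩ := colB_sound k Q gs (j + 1) _ h (by
      intro i
      by_cases hi : i = j
      · subst hi; simpa using hx
      · rw [Function.update_of_ne hi]; exact hf i)
    refine ⟨f', h1, ?_⟩
    rwa [List.length_cons, Nat.add_comm gs.length, ← Nat.add_assoc]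

theorem colB_complete (Q : List (ℕ × ℕ × ℕ × ℕ)) (f : ℕ → ℕ) (hf : ∀ i, f i < 4)
    (hQ : ∀ q ∈ Q, Sat f q) :
    ∀ (gs : List (List (ℕ × ℕ × ℕ × ℕ))) (j : ℕ), (∀ g ∈ gs, ∀ q ∈ g, q ∈ Q) →
      colB 4 Q gs j (enc f j) = true
  | [], j, _ => by
    simp only [colB, List.all_eq_true]
    exact fun q hq => satB_of_sat f hf j q (hQ q hq)
  | g :: gs, j, h => by
    have e : Nat.add (enc f j) (Nat.mul (Nat.succ (f j)) (Nat.pow 8 j)) = enc f (j + 1) := rfl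
    simp only [colB, List.any_eq_true, Bool.and_eq_true, List.mem_range]
    refine ⟨f j, hf j, ?_, ?_⟩
    · rw [e, List.all_eq_true]
      exact fun q hq => satB_of_sat f hf _ q (hQ q (h g List.mem_cons_self q hq))
    · rw [e]
      exact colB_complete Q f hf hQ gs (j + 1) fun g' hg' => h g' (List.mem_cons_of_mem _ hg')

/-- If the enumeration succeeds, then `leafB` succeeds at the edge list of any given involution `d`
without fixed points and without edges of the 2-factor. -/
theorem enumB_sound (n : ℕ) (pv d : ℕ → ℕ) (hinv : ∀ i < n, d (d i) = i)
    (hne : ∀ i < n, d i ≠ i) (hadj : ∀ i < n, pv i ≠ d i) :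
    ∀ (m : ℕ) (rest : List ℕ) (P : List (ℕ × ℕ)), enumB n pv m rest P = true → rest.Nodup →
      (∀ x ∈ rest, x < n) → (∀ x ∈ rest, d x ∈ rest) →
      (∀ p ∈ P, p.1 < n ∧ p.2 < n ∧ d p.1 = p.2) →
      (∀ i < n, i ∈ rest ∨ ∃ p ∈ P, i = p.1 ∨ i = p.2) →
      ∃ P' : List (ℕ × ℕ), leafB n pv P' = true ∧
        (∀ p ∈ P', p.1 < n ∧ p.2 < n ∧ d p.1 = p.2) ∧ ∀ i < n, ∃ p ∈ P', i = p.1 ∨ i = p.2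
  | 0, _, _, h, _, _, _, _, _ => by simp [enumB] at h
  | _ + 1, [], P, h, _, _, _, hP, hc => ⟨P, h, hP, fun i hi => by simpa using hc i hi⟩
  | m + 1, x :: xs, P, h, hnd, hlt, hcl, hP, hc => by
    have hxn := hlt x List.mem_cons_self
    have hdx : d x ∈ xs := by
      rcases List.mem_cons.1 (hcl x List.mem_cons_self) with h1 | h1
      · exact absurd h1 (hne x hxn)
      · exact h1
    have hdxn := hlt _ (List.mem_cons_of_mem _ hdx)
    have hnd' := List.nodup_cons.1 hnd
    simp only [enumB, List.all_eq_true, Bool.or_eq_true, Nat.beq_eq] at h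
    rcases h (d x) hdx with h1 | h1 | h1
    · exact absurd h1 (hadj x hxn)
    · exact absurd (h1.trans (hinv x hxn).symm) (hadj _ hdxn)
    · refine enumB_sound n pv d hinv hne hadj m _ _ h1 (hnd'.2.erase _) ?_ ?_ ?_ ?_
      · exact fun y hy => hlt y (List.mem_cons_of_mem _ (List.mem_of_mem_erase hy))
      · intro y hy
        rw [hnd'.2.mem_erase_iff] at hy ⊢
        have hyn := hlt y (List.mem_cons_of_mem _ hy.2)
        refine ⟨fun he => ?_, ?_⟩
        · have := congrArg d he
          rw [hinv y hyn, hinv x hxn] at this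
          exact hnd'.1 (this ▸ hy.2)
        · rcases List.mem_cons.1 (hcl y (List.mem_cons_of_mem _ hy.2)) with h2 | h2
          · have := congrArg d h2
            rw [hinv y hyn] at this
            exact absurd this hy.1
          · exact h2
      · intro p hp
        rcases List.mem_cons.1 hp with rfl | hp
        · exact ⟨hxn, hdxn, rfl⟩
        · exact hP p hp
      · intro i hi
        rcases hc i hi with h2 | ⟨p, hp, h2⟩
        · by_cases hix : i = x
          · exact Or.inr ⟨_, List.mem_cons_self, Or.inl hix⟩
          · by_cases hid : i = d x
            · exact Or.inr ⟨_, List.mem_cons_self, Or.inr hid⟩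
            · left
              rw [hnd'.2.mem_erase_iff]
              exact ⟨hid, (List.mem_cons.1 h2).resolve_left hix⟩
        · exact Or.inr ⟨p, List.mem_cons_of_mem _ hp, h2⟩

theorem leafB_sound (n : ℕ) (hn : 2 ≤ n) (pv d : ℕ → ℕ) (hpv : ∀ i < n, pv i < n)
    (P : List (ℕ × ℕ)) (h : leafB n pv P = true) (hinv : ∀ i < n, d (d i) = i)
    (hP : ∀ p ∈ P, p.1 < n ∧ p.2 < n ∧ d p.1 = p.2)
    (hc : ∀ i < n, ∃ p ∈ P, i = p.1 ∨ i = p.2)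
    (f : ℕ → ℕ) (hf : ∀ i, f i < 4) (hf0 : f 0 = 0) (hf1 : f 1 = 1)
    (hsat : ∀ i < n, Sat f (pv i, i, pv (d i), d i)) :
    ∃ f' : ℕ → ℕ, (∀ i < n, f' i < 3) ∧ ∀ i < n, Sat f' (pv i, i, pv (d i), d i) := by
  simp only [leafB, Bool.or_eq_true, Bool.not_eq_true'] at h
  rcases h with h | h
  · obtain ⟨f', h2, h3⟩ := colB_sound _ _ _ 2 (fun i => if i = 1 then 1 else 0) h
      (by intro i; split_ifs <;> norm_num)
    rw [List.length_map, List.length_range, Nat.add_sub_cancel' hn] at h3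
    refine ⟨f', fun i _ => h2 i, ?_⟩
    · intro i hi
      obtain ⟨p, hp, hip⟩ := hc i hi
      obtain ⟨p1, p2, p3⟩ := hP p hp
      have := sat_of_satB f' (fun i => (h2 i).trans (by norm_num)) n _ _ _ _ (hpv _ p1) p1
        (hpv _ p2) p2 (h3 _ (List.mem_map.2 ⟨p, hp, rfl⟩))
      rcases hip with rfl | rfl
      · rw [p3]; exact this
      · have hd : d p.2 = p.1 := by rw [← p3, hinv _ p1]
        rw [hd]
        obtain ⟨q1, q2, q3⟩ := this
        refine ⟨q2, q1, ?_⟩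
        rcases q3 with ⟨q3, q4⟩ | ⟨q3, q4⟩
        · exact Or.inl ⟨q3.symm, q4.symm⟩
        · exact Or.inr ⟨q4.symm, q3.symm⟩
  · have e : 17 = enc f 2 := by simp [enc, hf0, hf1]
    rw [e, colB_complete _ f hf] at h
    · simp at h
    · intro q hq
      obtain ⟨p, hp, rfl⟩ := List.mem_map.1 hq
      obtain ⟨p1, -, p3⟩ := hP p hp
      have := hsat p.1 p1
      rwa [p3] at this
    · intro g hg q hq
      obtain ⟨i, -, rfl⟩ := List.mem_map.1 hg
      exact (List.mem_filter.1 hq).1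

/-! ### Cycle types on at most 10 vertices -/

theorem compat_of_checkB {n : ℕ} (hn : 2 ≤ n) (l : List ℕ) (hl : l.length = n)
    (hcheck : checkB l = true) (τ : Equiv.Perm (Fin n))
    (hτ : ∀ i : Fin n, prevOf l i = (τ⁻¹ i : Fin n)) (h01 : prevOf l 1 = 0)
    (d : Fin n → Fin n) (hdd : ∀ i, d (d i) = i) (hne : ∀ i, d i ≠ i) (hτd : ∀ i, d i ≠ τ i)
    (h4 : Compat 4 τ d) : Compat 3 τ d := by
  obtain ⟨c, hc, ht⟩ := h4
  have hinv : ∀ v, τ (τ⁻¹ v) = v := τ.apply_symm_apply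
  have hinv' : ∀ v, τ⁻¹ (τ v) = v := τ.symm_apply_apply
  have hc' : ∀ v, c (τ⁻¹ v) ≠ c v := by
    intro v
    have := hc (τ⁻¹ v)
    rwa [hinv] at this
  have h01' : τ⁻¹ ⟨1, by omega⟩ = ⟨0, by omega⟩ := by
    apply Fin.ext
    rw [← hτ]
    exact h01
  -- Permute the colours so that edges `0` and `1` have colours `0` and `1`.
  obtain ⟨g, hg0, hg1⟩ : ∃ g : Equiv.Perm (Fin 4), g (c ⟨0, by omega⟩) = 0 ∧
      g (c ⟨1, by omega⟩) = 1 := by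
    have := hc' ⟨1, by omega⟩
    rw [h01'] at this
    revert this
    generalize c ⟨0, _⟩ = x
    generalize c ⟨1, _⟩ = y
    revert x y
    decide
  let dN : ℕ → ℕ := fun i => if h : i < n then d ⟨i, h⟩ else i
  let f : ℕ → ℕ := fun i => if h : i < n then g (c ⟨i, h⟩) else 0
  have hdN : ∀ i : Fin n, dN i = d i := fun i => by simp [dN]
  have hfN : ∀ i : Fin n, f i = g (c i) := fun i => by simp [f]
  have hdN1 : ∀ i < n, dN (dN i) = i := by
    intro i hi
    have := hdN ⟨i, hi⟩
    simp only at this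
    rw [this, hdN, hdd]
  have hpv : ∀ i < n, prevOf l i < n := by
    intro i hi
    have := hτ ⟨i, hi⟩
    simp only at this
    rw [this]
    exact Fin.isLt _
  obtain ⟨P, hP1, hP2, hP3⟩ := enumB_sound n (prevOf l) dN hdN1
    (by
      intro i hi h
      have h1 := hdN ⟨i, hi⟩
      simp only at h1
      rw [h1] at h
      exact hne ⟨i, hi⟩ (Fin.ext h))
    (by
      intro i hi h
      have h1 := hdN ⟨i, hi⟩
      have h2 := hτ ⟨i, hi⟩
      simp only at h1 h2
      rw [h1, h2] at h
      have h3 : τ⁻¹ ⟨i, hi⟩ = d ⟨i, hi⟩ := Fin.ext h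
      apply hτd (d ⟨i, hi⟩)
      rw [hdd, ← h3, hinv])
    (n + 1) (List.range n) [] (by rw [checkB, hl] at hcheck; exact hcheck) List.nodup_range
    (by simp)
    (by
      intro x hx
      rw [List.mem_range] at hx ⊢
      have h1 := hdN ⟨x, hx⟩
      simp only at h1
      rw [h1]
      exact Fin.isLt _)
    (by simp)
    (by simp)
  obtain ⟨f', hf1, hf2⟩ := leafB_sound n hn (prevOf l) dN hpv P hP1 hdN1 hP2 hP3 f
    (by
      intro i
      simp only [f]
      split_ifs
      · exact Fin.isLt _
      · norm_num)
    (by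
      have := hfN ⟨0, by omega⟩
      simp only [hg0] at this
      exact this)
    (by
      have := hfN ⟨1, by omega⟩
      simp only [hg1] at this
      exact this)
    (by
      intro i hi
      have h1 := hdN ⟨i, hi⟩
      have h2 := hτ ⟨i, hi⟩
      have h3 := hτ (d ⟨i, hi⟩)
      have h4 := hfN ⟨i, hi⟩
      simp only at h1 h2 h4
      have h5 := ht ⟨i, hi⟩
      simp only [Sat]
      rw [h1, h2, h3, h4, hfN, hfN, hfN]
      simp only [ne_eq, Fin.val_inj, g.apply_eq_iff_eq]
      refine ⟨hc' _, hc' _, ?_⟩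
      simpa [Sym2.eq_iff] using h5)
  refine ⟨fun i => ⟨f' i, hf1 i i.2⟩, ?_, ?_⟩
  · intro v
    have := (hf2 (τ v) (Fin.isLt _)).1
    rw [hτ, hinv'] at this
    simpa [Fin.ext_iff] using this
  · intro v
    have := (hf2 v v.2).2.2
    rw [hdN, hτ, hτ] at this
    simpa [Sym2.eq_iff, Fin.ext_iff] using this

/-- Some permutation of `Fin n` with cycle type `s` has the property that each compatible 4-colouring,
for any perfect matching `d` disjoint from its 2-factor, can be replaced by a compatible
3-colouring. -/
def Reducible (n : ℕ) (s : Multiset ℕ) : Prop :=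
  ∃ τ : Equiv.Perm (Fin n), τ.cycleType = s ∧
    ∀ d : Fin n → Fin n, (∀ i, d (d i) = i) → (∀ i, d i ≠ i) → (∀ i, d i ≠ τ i) →
      Compat 4 τ d → Compat 3 τ d

theorem reducible_one {n : ℕ} (hn : 2 ≤ n) (l : List ℕ) (hl : l.length = n)
    (hcheck : checkB l = true) (h01 : prevOf l 1 = 0) (c₁ : List (Fin n)) (h1 : 2 ≤ c₁.length)
    (hnd : c₁.Nodup) (hτ : ∀ i : Fin n, prevOf l i = (c₁.formPerm⁻¹ i : Fin n)) :
    Reducible n {c₁.length} := by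
  refine ⟨c₁.formPerm, ?_, compat_of_checkB hn l hl hcheck _ hτ h01⟩
  rw [(List.isCycle_formPerm hnd h1).cycleType, List.support_formPerm_of_nodup _ hnd (by
    rintro x rfl; simp at h1), List.toFinset_card_of_nodup hnd]

theorem reducible_two {n : ℕ} (hn : 2 ≤ n) (l : List ℕ) (hl : l.length = n)
    (hcheck : checkB l = true) (h01 : prevOf l 1 = 0) (c₁ c₂ : List (Fin n)) (h1 : 2 ≤ c₁.length)
    (h2 : 2 ≤ c₂.length) (hnd : c₁.Nodup) (hnd2 : c₂.Nodup) (hd : ∀ x ∈ c₁, x ∉ c₂)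
    (hτ : ∀ i : Fin n, prevOf l i = ((c₁.formPerm * c₂.formPerm)⁻¹ i : Fin n)) :
    Reducible n {c₁.length, c₂.length} := by
  refine ⟨c₁.formPerm * c₂.formPerm, ?_, compat_of_checkB hn l hl hcheck _ hτ h01⟩
  rw [((List.formPerm_disjoint_iff hnd hnd2 h1 h2).2 fun x => hd x).cycleType_mul,
    (List.isCycle_formPerm hnd h1).cycleType, List.support_formPerm_of_nodup _ hnd (by
    rintro x rfl; simp at h1), List.toFinset_card_of_nodup hnd,
    (List.isCycle_formPerm hnd2 h2).cycleType, List.support_formPerm_of_nodup _ hnd2 (by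
    rintro x rfl; simp at h2), List.toFinset_card_of_nodup hnd2]
  rfl

theorem reducible_three {n : ℕ} (hn : 2 ≤ n) (l : List ℕ) (hl : l.length = n)
    (hcheck : checkB l = true) (h01 : prevOf l 1 = 0) (c₁ c₂ c₃ : List (Fin n))
    (h1 : 2 ≤ c₁.length) (h2 : 2 ≤ c₂.length) (h3 : 2 ≤ c₃.length)
    (hnd : c₁.Nodup) (hnd2 : c₂.Nodup) (hnd3 : c₃.Nodup) (hd12 : ∀ x ∈ c₁, x ∉ c₂)
    (hd13 : ∀ x ∈ c₁, x ∉ c₃) (hd23 : ∀ x ∈ c₂, x ∉ c₃)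
    (hτ : ∀ i : Fin n, prevOf l i = ((c₁.formPerm * (c₂.formPerm * c₃.formPerm))⁻¹ i : Fin n)) :
    Reducible n {c₁.length, c₂.length, c₃.length} := by
  refine ⟨c₁.formPerm * (c₂.formPerm * c₃.formPerm), ?_,
    compat_of_checkB hn l hl hcheck _ hτ h01⟩
  rw [(((List.formPerm_disjoint_iff hnd hnd2 h1 h2).2 fun x => hd12 x).mul_right
      ((List.formPerm_disjoint_iff hnd hnd3 h1 h3).2 fun x => hd13 x)).cycleType_mul,
    ((List.formPerm_disjoint_iff hnd2 hnd3 h2 h3).2 fun x => hd23 x).cycleType_mul,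
    (List.isCycle_formPerm hnd h1).cycleType, List.support_formPerm_of_nodup _ hnd (by
    rintro x rfl; simp at h1), List.toFinset_card_of_nodup hnd,
    (List.isCycle_formPerm hnd2 h2).cycleType, List.support_formPerm_of_nodup _ hnd2 (by
    rintro x rfl; simp at h2), List.toFinset_card_of_nodup hnd2,
    (List.isCycle_formPerm hnd3 h3).cycleType, List.support_formPerm_of_nodup _ hnd3 (by
    rintro x rfl; simp at h3), List.toFinset_card_of_nodup hnd3]
  rfl

theorem reducible_4 : Reducible 4 {4} :=
  reducible_one (by decide) [3, 0, 1, 2] rfl (by decide +kernel) rfl [0, 1, 2, 3]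
    (by decide) (by decide) (by decide)

theorem reducible_6 : Reducible 6 {6} :=
  reducible_one (by decide) [5, 0, 1, 2, 3, 4] rfl (by decide +kernel) rfl [0, 1, 2, 3, 4, 5]
    (by decide) (by decide) (by decide)

theorem reducible_3_3 : Reducible 6 {3, 3} :=
  reducible_two (by decide) [2, 0, 1, 5, 3, 4] rfl (by decide +kernel) rfl [0, 1, 2] [3, 4, 5]
    (by decide) (by decide) (by decide) (by decide) (by decide) (by decide)

theorem reducible_8 : Reducible 8 {8} :=
  reducible_one (by decide) [7, 0, 1, 2, 3, 4, 5, 6] rfl (by decide +kernel) rfl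
    [0, 1, 2, 3, 4, 5, 6, 7] (by decide) (by decide) (by decide)

theorem reducible_4_4 : Reducible 8 {4, 4} :=
  reducible_two (by decide) [3, 0, 1, 2, 7, 4, 5, 6] rfl (by decide +kernel) rfl
    [0, 1, 2, 3] [4, 5, 6, 7]
    (by decide) (by decide) (by decide) (by decide) (by decide) (by decide)

theorem reducible_3_5 : Reducible 8 {3, 5} :=
  reducible_two (by decide) [2, 0, 1, 7, 3, 4, 5, 6] rfl (by decide +kernel) rfl
    [0, 1, 2] [3, 4, 5, 6, 7]
    (by decide) (by decide) (by decide) (by decide) (by decide) (by decide)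

theorem reducible_10 : Reducible 10 {10} :=
  reducible_one (by decide) [9, 0, 1, 2, 3, 4, 5, 6, 7, 8] rfl (by decide +kernel) rfl
    [0, 1, 2, 3, 4, 5, 6, 7, 8, 9] (by decide) (by decide) (by decide)

theorem reducible_4_6 : Reducible 10 {4, 6} :=
  reducible_two (by decide) [3, 0, 1, 2, 9, 4, 5, 6, 7, 8] rfl (by decide +kernel) rfl
    [0, 1, 2, 3] [4, 5, 6, 7, 8, 9]
    (by decide) (by decide) (by decide) (by decide) (by decide) (by decide)

theorem reducible_3_7 : Reducible 10 {3, 7} :=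
  reducible_two (by decide) [2, 0, 1, 9, 3, 4, 5, 6, 7, 8] rfl (by decide +kernel) rfl
    [0, 1, 2] [3, 4, 5, 6, 7, 8, 9]
    (by decide) (by decide) (by decide) (by decide) (by decide) (by decide)

/-- This case contains the Petersen graph, which has no compatible 3-colouring; the search shows that
it has no compatible 4-colouring either. -/
theorem reducible_5_5 : Reducible 10 {5, 5} :=
  reducible_two (by decide) [4, 0, 1, 2, 3, 9, 5, 6, 7, 8] rfl (by decide +kernel) rfl
    [0, 1, 2, 3, 4] [5, 6, 7, 8, 9]
    (by decide) (by decide) (by decide) (by decide) (by decide) (by decide)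

theorem reducible_3_3_4 : Reducible 10 {3, 3, 4} :=
  reducible_three (by decide) [2, 0, 1, 5, 3, 4, 9, 6, 7, 8] rfl (by decide +kernel) rfl
    [0, 1, 2] [3, 4, 5] [6, 7, 8, 9]
    (by decide) (by decide) (by decide) (by decide) (by decide) (by decide)
    (by decide) (by decide) (by decide) (by decide)

theorem reducible_of_small (n : ℕ) (hn : n < 12) (heven : Even n) (hpos : 0 < n) (s : Multiset ℕ)
    (hs : ∀ a ∈ s, 3 ≤ a) (hsum : s.sum = n) : Reducible n s := by
  have hcard : s.card ≤ 3 := by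
    have := Multiset.card_nsmul_le_sum hs
    simp only [smul_eq_mul] at this
    omega
  obtain ⟨t, rfl⟩ := heven
  have hc : s.card = 0 ∨ s.card = 1 ∨ s.card = 2 ∨ s.card = 3 := by omega
  rcases hc with hc | hc | hc | hc
  · rw [Multiset.card_eq_zero] at hc
    subst hc
    simp at hsum
    omega
  · obtain ⟨a, rfl⟩ := Multiset.card_eq_one.1 hc
    simp at hsum hs
    subst hsum
    have : t = 2 ∨ t = 3 ∨ t = 4 ∨ t = 5 := by omega
    rcases this with rfl | rfl | rfl | rfl
    exacts [reducible_4, reducible_6, reducible_8, reducible_10]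
  · obtain ⟨a, b, rfl⟩ := Multiset.card_eq_two.1 hc
    clear hc hcard
    simp at hsum hs
    wlog hab : a ≤ b generalizing a b
    · rw [Multiset.pair_comm]
      exact this b a (by omega) (by omega) (by omega)
    have : (t = 3 ∧ a = 3 ∧ b = 3) ∨ (t = 4 ∧ a = 3 ∧ b = 5) ∨ (t = 4 ∧ a = 4 ∧ b = 4) ∨
      (t = 5 ∧ a = 3 ∧ b = 7) ∨ (t = 5 ∧ a = 4 ∧ b = 6) ∨ (t = 5 ∧ a = 5 ∧ b = 5) := by omega
    rcases this with ⟨rfl, rfl, rfl⟩ | ⟨rfl, rfl, rfl⟩ | ⟨rfl, rfl, rfl⟩ | ⟨rfl, rfl, rfl⟩ |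
      ⟨rfl, rfl, rfl⟩ | ⟨rfl, rfl, rfl⟩
    exacts [reducible_3_3, reducible_3_5, reducible_4_4, reducible_3_7, reducible_4_6,
      reducible_5_5]
  · obtain ⟨a, b, c, rfl⟩ := Multiset.card_eq_three.1 hc
    simp at hsum hs
    have : t = 5 ∧ ((a = 3 ∧ b = 3 ∧ c = 4) ∨ (a = 3 ∧ b = 4 ∧ c = 3) ∨
      (a = 4 ∧ b = 3 ∧ c = 3)) := by omega
    obtain ⟨rfl, ⟨rfl, rfl, rfl⟩ | ⟨rfl, rfl, rfl⟩ | ⟨rfl, rfl, rfl⟩⟩ := this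
    · exact reducible_3_3_4
    · have e : ({3, 4, 3} : Multiset ℕ) = {3, 3, 4} := by decide
      rw [e]; exact reducible_3_3_4
    · have e : ({4, 3, 3} : Multiset ℕ) = {3, 3, 4} := by decide
      rw [e]; exact reducible_3_3_4

/-! ### Transport to an arbitrary vertex set -/

theorem Compat.congr {V W : Type*} {k : ℕ} {σ : Equiv.Perm V} {d : V → V} (e : V ≃ W)
    {τ : Equiv.Perm W} (hτ : ∀ v, τ (e v) = e (σ v)) {d' : W → W} (hd : ∀ v, d' (e v) = e (d v))
    (h : Compat k σ d) : Compat k τ d' := by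
  obtain ⟨c, hc, ht⟩ := h
  have hinv : ∀ v, τ⁻¹ (e v) = e (σ⁻¹ v) := by
    intro v
    rw [Equiv.Perm.inv_eq_iff_eq, hτ]
    exact congrArg e (σ.apply_symm_apply v).symm
  refine ⟨c ∘ e.symm, ?_, ?_⟩
  · intro w
    obtain ⟨v, rfl⟩ := e.surjective w
    simpa [hτ] using hc v
  · intro w
    obtain ⟨v, rfl⟩ := e.surjective w
    rw [hd, hinv, hinv]
    simpa using ht v

theorem compat_three_of_four {V : Type*} [Fintype V] (hn : Fintype.card V < 12)
    (heven : Even (Fintype.card V)) (σ : Equiv.Perm V) (d : V → V) (hdd : ∀ v, d (d v) = v)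
    (hd : ∀ v, d v ≠ v) (hdσ : ∀ v, d v ≠ σ v) (hσ : ∀ v, σ v ≠ v) (hσσ : ∀ v, σ (σ v) ≠ v)
    (h : Compat 4 σ d) : Compat 3 σ d := by
  classical
  rcases isEmpty_or_nonempty V with hV | hV
  · exact ⟨fun v => isEmptyElim v, fun v => isEmptyElim v, fun v => isEmptyElim v⟩
  let e := Fintype.equivFin V
  let σ' : Equiv.Perm (Fin (Fintype.card V)) := e.permCongr σ
  have hσ' : ∀ v, σ' (e v) = e (σ v) := by intro v; simp [σ', Equiv.permCongr_apply]
  have hsupp : σ'.support = Finset.univ := by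
    ext w
    obtain ⟨v, rfl⟩ := e.surjective w
    simp [hσ', hσ]
  obtain ⟨τ, hτ, hred⟩ := reducible_of_small (Fintype.card V) hn heven Fintype.card_pos σ'.cycleType
    (by
      intro a ha
      have h2 := Equiv.Perm.two_le_of_mem_cycleType ha
      -- A part equal to 2 would contradict `hσσ`.
      by_contra hlt
      have ha2 : a = 2 := by omega
      subst ha2
      obtain ⟨c, τ, hστ, hdis, hc, hcard⟩ := Equiv.Perm.mem_cycleType_iff.1 ha
      obtain ⟨x, y, hxy, rfl⟩ := Equiv.Perm.card_support_eq_two.1 hcard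
      have hτx : τ x = x := (hdis x).resolve_left (by simp [hxy.symm])
      have hτy : τ y = y := (hdis y).resolve_left (by simp [hxy])
      have h1 : σ' (σ' x) = x := by simp [hστ, hτx, hτy]
      obtain ⟨v, rfl⟩ := e.surjective x
      rw [hσ', hσ', e.apply_eq_iff_eq] at h1
      exact hσσ v h1)
    (by rw [Equiv.Perm.sum_cycleType, hsupp]; simp)
  obtain ⟨π, hπ⟩ := isConj_iff.1 (Equiv.Perm.isConj_iff_cycleType_eq.2 hτ.symm)
  let e' : V ≃ Fin (Fintype.card V) := e.trans π
  have he' : ∀ v, τ (e' v) = e' (σ v) := by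
    intro v
    simp [e', ← hπ, hσ']
  let d' : Fin (Fintype.card V) → Fin (Fintype.card V) := fun w => e' (d (e'.symm w))
  have hd' : ∀ v, d' (e' v) = e' (d v) := by intro v; simp [d']
  have h3 : Compat 3 τ d' := by
    apply hred
    · intro w; simp [d', hdd]
    · intro w
      obtain ⟨v, rfl⟩ := e'.surjective w
      rw [hd', Ne, e'.apply_eq_iff_eq]; exact hd v
    · intro w
      obtain ⟨v, rfl⟩ := e'.surjective w
      rw [hd', he', Ne, e'.apply_eq_iff_eq]; exact hdσ v
    · exact h.congr e' he' hd'
  refine h3.congr e'.symm (fun w => ?_) (fun w => ?_)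
  · obtain ⟨v, rfl⟩ := e'.surjective w
    simp [he']
  · obtain ⟨v, rfl⟩ := e'.surjective w
    simp [hd']

/-- A bridgeless cubic graph with perfect matching index `4` has at least `12` vertices. -/
theorem twelve_vertices_of_tau_four {V : Type*} [Fintype V]
    (G : SimpleGraph V) [DecidableRel G.Adj] (hG : G.IsRegularOfDegree 3)
    (hbridgeless : ∀ e ∈ G.edgeSet, ¬ G.IsBridge e)
    (htau : tau G = 4) :
    12 ≤ Fintype.card V := by
  by_contra hlt
  have hpos : 0 < sInf {k | ∃ M : Fin k → G.Subgraph, IsPMCovering G M} := by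
    show 0 < tau G
    omega
  have hmem := Nat.sInf_mem (Nat.nonempty_of_pos_sInf hpos)
  change tau G ∈ _ at hmem
  rw [htau] at hmem
  obtain ⟨M, hM⟩ := hmem
  have heven : Even (Fintype.card V) := by
    have := (hM.1 0).even_card
    exact this
  obtain ⟨σ, d, hadj, hdd, hd, hdσ, hσ, hσσ, h4⟩ := exists_compat_of_covering G hG M hM
  have h3 := compat_three_of_four (by omega) heven σ d hdd hd hdσ hσ hσσ h4
  have hle : tau G ≤ 3 := Nat.sInf_le (exists_covering_of_compat G σ d hadj hdd h3)
  omega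
end

section
/- Let G be a cubic graph with three perfect matchings M₁, M₂, M₃ having empty intersection, and for i = 0,1,2 let T_i be the set of edges of G belonging to exactly i of M₁, M₂, M₃. Then the spanning subgraph of G with edge set T₀ ∪ T₂ is a disjoint union of even cycles along which edges of T₀ and edges of T₂ alternate; equivalently, every vertex of G incident with an edge of T₀ ∪ T₂ is incident with exactly one edge of T₀ and exactly one edge of T₂. -/
open SimpleGraph

/-!
Fix a vertex `v`. Each perfect matching contains exactly one edge at `v`, so the numbers of
matchings containing the three edges at `v` sum to `3`
(`sum_card_fibre`). Since no edge lies in all three matchings, each of these numbers is at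
most `2`, so they are `1, 1, 1` or a permutation of `0, 1, 2`. When `v` meets an edge
of `T₀ ∪ T₂` the first case is excluded, and in the second case exactly one edge at `v` lies in
`T₀` and exactly one in `T₂` (`existsUnique_of_sum_eq_three`).
-/

/-- Three numbers at most `2` with sum `3`, one of them even, are `0, 1, 2` in some order. -/
theorem existsUnique_of_sum_eq_three {α : Type*} (S : Finset α) (hS : S.card = 3) (n : α → ℕ)
    (hsum : ∑ w ∈ S, n w = 3) (hle : ∀ w ∈ S, n w ≤ 2) (hex : ∃ w ∈ S, n w = 0 ∨ n w = 2) :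
    (∃! w, w ∈ S ∧ n w = 0) ∧ (∃! w, w ∈ S ∧ n w = 2) := by
  classical
  obtain ⟨a, b, c, hab, hac, hbc, rfl⟩ := Finset.card_eq_three.1 hS
  have hsum' : n a + (n b + n c) = 3 := by
    simpa [Finset.sum_insert, hab, hac, hbc] using hsum
  simp only [Finset.mem_insert, Finset.mem_singleton, forall_eq_or_imp, forall_eq,
    exists_eq_or_imp, exists_eq_left] at hle hex
  have hcases : (n a = 0 ∧ n b = 1 ∧ n c = 2) ∨ (n a = 0 ∧ n b = 2 ∧ n c = 1) ∨
      (n a = 1 ∧ n b = 0 ∧ n c = 2) ∨ (n a = 1 ∧ n b = 2 ∧ n c = 0) ∨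
      (n a = 2 ∧ n b = 0 ∧ n c = 1) ∨ (n a = 2 ∧ n b = 1 ∧ n c = 0) := by omega
  simp only [ExistsUnique, Finset.mem_insert, Finset.mem_singleton]
  rcases hcases with h | h | h | h | h | h <;> constructor <;>
    first
    | exact ⟨a, by grind, by grind⟩
    | exact ⟨b, by grind, by grind⟩
    | exact ⟨c, by grind, by grind⟩

/-- The fibres of a map from a three-element type into `S` have total size `3`. -/
theorem sum_card_fibre {α : Type*} (S : Finset α) (f : Fin 3 → α) (hf : ∀ j, f j ∈ S) :
    ∑ w ∈ S, Nat.card {j : Fin 3 // f j = w} = 3 := by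
  classical
  have h := Finset.card_eq_sum_card_fiberwise (f := f) (s := Finset.univ) (t := S)
    (fun j _ => hf j)
  simpa [Nat.card_eq_fintype_card, Fintype.card_subtype] using h.symm

/-- Edges at `v` correspond to neighbours of `v`, so uniqueness may be checked on neighbours. -/
theorem existsUnique_edge_of_neighbor {V : Type*} (G : SimpleGraph V) (v : V)
    (P : Sym2 V → Prop) (h : ∃! w, G.Adj v w ∧ P s(v, w)) :
    ∃! e, (e ∈ G.edgeSet ∧ P e) ∧ v ∈ e := by
  obtain ⟨w, hw, huniq⟩ := h
  refine ⟨s(v, w), ⟨hw, Sym2.mem_mk_left v w⟩, ?_⟩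
  rintro e ⟨he, hv⟩
  obtain ⟨u, rfl⟩ := Sym2.mem_iff_exists.1 hv
  rw [huniq u he]

/-- If a cubic graph `G` has three perfect matchings `M₁, M₂, M₃` with empty
intersection, and `Tᵢ` denotes the set of edges of `G` lying in exactly `i` of
the matchings, then every vertex incident with an edge of `T₀ ∪ T₂` is incident
with exactly one edge of `T₀` and exactly one edge of `T₂` (so `T₀ ∪ T₂` is a
disjoint union of even cycles along which edges of `T₀` and `T₂` alternate). -/
theorem FR_triple_structure {V : Type*} [Fintype V]
    (G : SimpleGraph V) [DecidableRel G.Adj] (hG : G.IsRegularOfDegree 3)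
    (M : Fin 3 → G.Subgraph) (hM : ∀ i, (M i).IsPerfectMatching)
    (hempty : (M 0).edgeSet ∩ (M 1).edgeSet ∩ (M 2).edgeSet = ∅)
    (T : ℕ → Set (Sym2 V))
    (hT : ∀ i, T i = {e ∈ G.edgeSet | Nat.card {j : Fin 3 // e ∈ (M j).edgeSet} = i}) :
    ∀ v : V, (∃ e ∈ T 0 ∪ T 2, v ∈ e) →
      (∃! e, e ∈ T 0 ∧ v ∈ e) ∧ (∃! e, e ∈ T 2 ∧ v ∈ e) := by
  intro v hv
  -- `f j` is the partner of `v` in the matching `M j`.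
  choose f hf hfu using fun j => (hM j).1 ((hM j).2 v)
  have hmem : ∀ w j, s(v, w) ∈ (M j).edgeSet ↔ f j = w := fun w j =>
    ⟨fun h => (hfu j w h).symm, fun h => h ▸ hf j⟩
  let n : V → ℕ := fun w => Nat.card {j : Fin 3 // f j = w}
  have hn : ∀ w, Nat.card {j : Fin 3 // s(v, w) ∈ (M j).edgeSet} = n w := fun w =>
    Nat.card_congr (Equiv.subtypeEquivRight (hmem w))
  have hle : ∀ w, n w ≤ 2 := by
    intro w
    -- A fibre of size `3` would be everything, putting `s(v, w)` in all three matchings.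
    have hlt : n w < 3 := by
      obtain ⟨j, hj⟩ : ∃ j, f j ≠ w := by
        by_contra! h
        have hall : s(v, w) ∈ (M 0).edgeSet ∩ (M 1).edgeSet ∩ (M 2).edgeSet :=
          ⟨⟨(hmem w 0).2 (h 0), (hmem w 1).2 (h 1)⟩, (hmem w 2).2 (h 2)⟩
        rw [hempty] at hall
        exact hall
      classical
      have h := Fintype.card_subtype_lt (p := fun j => f j = w) hj
      simpa [n, Nat.card_eq_fintype_card] using h
    omega
  have hex : ∃ w ∈ G.neighborFinset v, n w = 0 ∨ n w = 2 := by
    obtain ⟨e, he, hve⟩ := hv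
    obtain ⟨w, rfl⟩ := Sym2.mem_iff_exists.1 hve
    simp only [hT, Set.mem_union, Set.mem_ofPred_eq, hn, mem_edgeSet] at he
    refine ⟨w, ?_, ?_⟩
    · rw [mem_neighborFinset]; tauto
    · tauto
  have hsum : ∑ w ∈ G.neighborFinset v, n w = 3 :=
    sum_card_fibre _ f fun j => (G.mem_neighborFinset v _).2 (hf j).adj_sub
  obtain ⟨h0, h2⟩ := existsUnique_of_sum_eq_three (G.neighborFinset v)
    (by rw [card_neighborFinset_eq_degree]; exact hG v) n hsum (fun w _ => hle w) hex
  simp only [mem_neighborFinset, ← hn] at h0 h2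
  rw [hT, hT]
  exact ⟨existsUnique_edge_of_neighbor G v _ h0, existsUnique_edge_of_neighbor G v _ h2⟩
end

section
/- Let G be a cubic graph having a 2-factor F whose odd cycles can be partitioned into good pairs {C₁,D₁}, {C₂,D₂}, …, {C_k,D_k}. Then τ(G) ≤ 4, i.e., the edge set of G can be covered by 4 perfect matchings. -/
/-!
The complement of the `2`-factor `F` is a perfect matching `M₀`, which covers every edge outside
`F`. The edges of `F` are covered by three further perfect matchings `M₁, M₂, M₃`. On an even
cycle, each `Mᵢ` restricts to one of the two alternating perfect matchings, and both of them occur.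
On an odd cycle `C` of a good pair `{C, C'}` with good triple `xx', yy', zz'`, the matchings
`M₁, M₂, M₃` contain `xx'`, `yy'`, `zz'` respectively, and on `C` they are completed by the unique
perfect matchings of `C - x`, `C - y`, `C - z` (and likewise on `C'`). Because `x, y, z` cut `C`
into paths of odd length, every edge of `C` lies in one of these three near-perfect matchings: this
is the parity computation `odd_cover`, used through `cov_of_odd`.

The restriction of `M₁, M₂, M₃` to one cycle, with the vertices they leave exposed there, is
recorded by `Cov`. It is constructed from a cyclic parametrization in `cov_of_param`, and the
local pieces are glued in the proof of the final theorem.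
-/

open SimpleGraph

/-- `f : ZMod n → V` is a cyclic parametrization of the connected component `K`
of `F`: it is injective, consecutive vertices are adjacent in `F`, and its range
is exactly the vertex set of `K`. -/
def IsCycleOn {V : Type*} (F : SimpleGraph V) (K : F.ConnectedComponent)
    (n : ℕ) (f : ZMod n → V) : Prop :=
  Function.Injective f ∧ (∀ i, F.Adj (f i) (f (i + 1))) ∧
    ∀ v : V, F.connectedComponentMk v = K ↔ ∃ i, f i = v

/-- Two (odd) cycles `K`, `K'` of the `2`-factor `F` form a good pair in `G`: there
are three distinct edges of `G` joining three vertices of `K` to three vertices of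
`K'` which determine on each of the two cycles three edge-disjoint paths of odd
length. -/
def IsGoodPair {V : Type*} (G F : SimpleGraph V) (K K' : F.ConnectedComponent) :
    Prop :=
  ∃ (n m : ℕ) (f : ZMod n → V) (g : ZMod m → V),
    IsCycleOn F K n f ∧ IsCycleOn F K' m g ∧
    ∃ a b a' b' : ℕ,
      0 < a ∧ 0 < b ∧ a + b < n ∧ Odd a ∧ Odd b ∧ Odd (n - a - b) ∧
      0 < a' ∧ 0 < b' ∧ a' + b' < m ∧ Odd a' ∧ Odd b' ∧ Odd (m - a' - b') ∧
      G.Adj (f 0) (g 0) ∧ G.Adj (f (a : ZMod n)) (g (a' : ZMod m)) ∧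
      G.Adj (f ((a + b : ℕ) : ZMod n)) (g ((a' + b' : ℕ) : ZMod m))

/-! ### Local coverings of one component -/

/-- Three matchings `N 0, N 1, N 2` of the component `K` of `F`, given as symmetric relations,
which together cover all edges of `K` and such that `N i` misses exactly the vertices in `T i`. -/
def Cov {V : Type*} (F : SimpleGraph V) (K : F.ConnectedComponent) (T : Fin 3 → Set V) : Prop :=
  ∃ N : Fin 3 → V → V → Prop,
    (∀ i v w, N i v w → F.Adj v w ∧ F.connectedComponentMk v = K ∧ N i w v) ∧
    (∀ i v, F.connectedComponentMk v = K → v ∉ T i → ∃! w, N i v w) ∧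
    (∀ i, ∀ v ∈ T i, F.connectedComponentMk v = K ∧ ∀ w, ¬ N i v w) ∧
    ∀ v w, F.Adj v w → F.connectedComponentMk v = K → ∃ i, N i v w

lemma add_one_ne_sub_one {n : ℕ} (hn : 3 ≤ n) (j : ZMod n) : j + 1 ≠ j - 1 := by
  intro h
  have h2 : ((2 : ℕ) : ZMod n) = 0 := by
    push_cast
    linear_combination h
  rw [ZMod.natCast_eq_zero_iff] at h2
  have := Nat.le_of_dvd (by norm_num) h2
  omega

lemma adj_param {V : Type*} [Finite V] {F : SimpleGraph V}
    (hF : ∀ v, (F.neighborSet v).ncard = 2) {K : F.ConnectedComponent} {n : ℕ} (hn : 3 ≤ n)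
    {f : ZMod n → V} (hf : IsCycleOn F K n f) {j : ZMod n} {w : V} (h : F.Adj (f j) w) :
    w = f (j + 1) ∨ w = f (j - 1) := by
  have hne : f (j + 1) ≠ f (j - 1) := fun h => add_one_ne_sub_one hn j (hf.1 h)
  have hsub : ({f (j + 1), f (j - 1)} : Set V) ⊆ F.neighborSet (f j) := by
    rintro x (rfl | rfl)
    · exact hf.2.1 j
    · have := (hf.2.1 (j - 1)).symm
      simpa using this
  have heq := Set.eq_of_subset_of_ncard_le hsub (by rw [hF, Set.ncard_pair hne]) (Set.toFinite _)
  have : w ∈ F.neighborSet (f j) := h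
  rw [← heq] at this
  simpa using this

/-- The edge `f j, f (j + 1)` of the cycle is labelled by `j`; the set `S i` of labels gives a
matching which misses exactly the vertices with index in `T i`. -/
lemma cov_of_param {V : Type*} [Finite V] {F : SimpleGraph V}
    (hF : ∀ v, (F.neighborSet v).ncard = 2) {K : F.ConnectedComponent} {n : ℕ} (hn : 3 ≤ n)
    {f : ZMod n → V} (hf : IsCycleOn F K n f) (S T : Fin 3 → Set (ZMod n))
    (h1 : ∀ i j, j ∉ T i → (j ∈ S i ↔ j - 1 ∉ S i))
    (h2 : ∀ i j, j ∈ T i → j ∉ S i ∧ j - 1 ∉ S i)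
    (h3 : ∀ j, ∃ i, j ∈ S i) : Cov F K (fun i => f '' T i) := by
  have hmk : ∀ j, F.connectedComponentMk (f j) = K := fun j => (hf.2.2 _).2 ⟨j, rfl⟩
  have hN : ∀ i j w, (∃ k ∈ S i, (f j = f k ∧ w = f (k + 1)) ∨ (w = f k ∧ f j = f (k + 1))) ↔
      (j ∈ S i ∧ w = f (j + 1)) ∨ (j - 1 ∈ S i ∧ w = f (j - 1)) := by
    intro i j w
    constructor
    · rintro ⟨k, hk, ⟨h, rfl⟩ | ⟨rfl, h⟩⟩
      · cases hf.1 h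
        exact Or.inl ⟨hk, rfl⟩
      · cases hf.1 h
        right
        simpa using hk
    · rintro (⟨h, rfl⟩ | ⟨h, rfl⟩)
      · exact ⟨j, h, Or.inl ⟨rfl, rfl⟩⟩
      · exact ⟨j - 1, h, Or.inr ⟨rfl, by simp⟩⟩
  refine ⟨fun i v w => ∃ k ∈ S i, (v = f k ∧ w = f (k + 1)) ∨ (w = f k ∧ v = f (k + 1)),
    ?_, ?_, ?_, ?_⟩
  · rintro i v w ⟨k, hk, ⟨rfl, rfl⟩ | ⟨rfl, rfl⟩⟩
    · exact ⟨hf.2.1 k, hmk _, k, hk, Or.inr ⟨rfl, rfl⟩⟩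
    · exact ⟨(hf.2.1 k).symm, hmk _, k, hk, Or.inl ⟨rfl, rfl⟩⟩
  · intro i v hv hT
    obtain ⟨j, rfl⟩ := (hf.2.2 v).1 hv
    have hj : j ∉ T i := fun h => hT ⟨j, h, rfl⟩
    have := h1 i j hj
    simp only [hN]
    by_cases hjS : j ∈ S i
    · refine ⟨f (j + 1), Or.inl ⟨hjS, rfl⟩, ?_⟩
      rintro w (⟨-, h⟩ | ⟨h, -⟩)
      · exact h
      · exact absurd h (this.1 hjS)
    · have hj' : j - 1 ∈ S i := by
        by_contra h
        exact hjS (this.2 h)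
      refine ⟨f (j - 1), Or.inr ⟨hj', rfl⟩, ?_⟩
      rintro w (⟨h, -⟩ | ⟨-, h⟩)
      · exact absurd h hjS
      · exact h
  · rintro i _ ⟨j, hj, rfl⟩
    refine ⟨hmk j, fun w hw => ?_⟩
    have := h2 i j hj
    rcases (hN i j w).1 hw with h | h
    · exact this.1 h.1
    · exact this.2 h.1
  · intro v w hvw hv
    obtain ⟨j, rfl⟩ := (hf.2.2 v).1 hv
    simp only [hN]
    rcases adj_param hF hn hf hvw with rfl | rfl
    · obtain ⟨i, hi⟩ := h3 j
      exact ⟨i, Or.inl ⟨hi, rfl⟩⟩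
    · obtain ⟨i, hi⟩ := h3 (j - 1)
      exact ⟨i, Or.inr ⟨hi, rfl⟩⟩

/-! ### Odd cycles -/

lemma val_sub_one {n : ℕ} (hn : 3 ≤ n) {j : ZMod n} (hj : j ≠ 0) : (j - 1).val + 1 = j.val := by
  have : NeZero n := ⟨by omega⟩
  have h0 : j.val ≠ 0 := by rwa [Ne, ZMod.val_eq_zero]
  have hlt := j.val_lt
  have : j - 1 = ((j.val - 1 : ℕ) : ZMod n) := by
    rw [Nat.cast_sub (by omega), ZMod.natCast_zmod_val]
    simp
  rw [this, ZMod.val_natCast_of_lt (by omega)]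
  omega

lemma val_neg_one' {n : ℕ} (hn : 3 ≤ n) : ((0 : ZMod n) - 1).val = n - 1 := by
  have : NeZero n := ⟨by omega⟩
  have : (0 : ZMod n) - 1 = ((n - 1 : ℕ) : ZMod n) := by
    rw [Nat.cast_sub (by omega)]
    simp
  rw [this, ZMod.val_natCast_of_lt (by omega)]

lemma val_sub_cast {n : ℕ} (hn : 3 ≤ n) (j : ZMod n) {a : ℕ} (ha : a < n) :
    (j - (a : ZMod n)).val = if a ≤ j.val then j.val - a else j.val + n - a := by
  have : NeZero n := ⟨by omega⟩
  have hlt := j.val_lt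
  split_ifs with h
  · have : j - (a : ZMod n) = ((j.val - a : ℕ) : ZMod n) := by
      rw [Nat.cast_sub h, ZMod.natCast_zmod_val]
    rw [this, ZMod.val_natCast_of_lt (by omega)]
  · have : j - (a : ZMod n) = ((j.val + n - a : ℕ) : ZMod n) := by
      rw [Nat.cast_sub (by omega), Nat.cast_add, ZMod.natCast_zmod_val]
      simp
    rw [this, ZMod.val_natCast_of_lt (by omega)]

/-- The perfect matching of an odd cycle minus its vertex `c` consists of the edges at odd
distance after `c`. For the positions `0`, `a`, `a + b`, these three matchings cover the cycle. -/
lemma odd_cover {n a b : ℕ} (hab : a + b < n) (ha : Odd a) (hb : Odd b)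
    (hc : Odd (n - a - b)) (j : ZMod n) :
    Odd j.val ∨ Odd (j - (a : ZMod n)).val ∨ Odd (j - ((a + b : ℕ) : ZMod n)).val := by
  have h0 := ha.pos
  have h1 := hb.pos
  have hn : 3 ≤ n := by
    have := hc.pos
    omega
  have : NeZero n := ⟨by omega⟩
  have hlt := j.val_lt
  rw [val_sub_cast hn j (a := a) (by omega), val_sub_cast hn j hab]
  simp only [Nat.odd_iff] at *
  split_ifs <;> omega

lemma cov_of_odd {V : Type*} [Finite V] {F : SimpleGraph V}
    (hF : ∀ v, (F.neighborSet v).ncard = 2) {K : F.ConnectedComponent} {n a b : ℕ}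
    {f : ZMod n → V} (hf : IsCycleOn F K n f) (hab : a + b < n) (ha : Odd a) (hb : Odd b)
    (hc : Odd (n - a - b)) :
    Cov F K (fun i => {(![f 0, f (a : ZMod n), f ((a + b : ℕ) : ZMod n)] : Fin 3 → V) i}) := by
  have h0 := ha.pos
  have h1 := hb.pos
  have hn : 3 ≤ n := by
    have := hc.pos
    omega
  have : NeZero n := ⟨by omega⟩
  let c : Fin 3 → ZMod n := ![0, (a : ZMod n), ((a + b : ℕ) : ZMod n)]
  have key := cov_of_param hF hn hf (fun i => {j | Odd (j - c i).val}) (fun i => {c i}) ?_ ?_ ?_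
  · convert key using 1
    funext i
    fin_cases i <;> simp [c]
  · intro i j hj
    have hj' : j - c i ≠ 0 := fun h => hj (sub_eq_zero.1 h)
    have := val_sub_one hn hj'
    have e : j - 1 - c i = j - c i - 1 := by ring
    simp only [Set.mem_ofPred_eq, e, Nat.odd_iff]
    omega
  · rintro i j rfl
    have e : c i - 1 - c i = 0 - 1 := by ring
    simp only [Set.mem_ofPred_eq, e, val_neg_one' hn, sub_self, ZMod.val_zero, Nat.odd_iff] at *
    omega
  · intro j
    rcases odd_cover hab ha hb hc j with h | h | h
    · exact ⟨0, by simpa [c] using h⟩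
    · exact ⟨1, by simpa [c] using h⟩
    · exact ⟨2, by simpa [c] using h⟩

/-! ### Even cycles -/

lemma exists_param {V : Type*} [Finite V] {F : SimpleGraph V}
    (hF : ∀ v, (F.neighborSet v).ncard = 2) (K : F.ConnectedComponent) :
    ∃ (n : ℕ) (f : ZMod n → V), 3 ≤ n ∧ IsCycleOn F K n f := by
  obtain ⟨v, hv⟩ := K.nonempty_supp
  have hne : (F.neighborSet v).Nonempty := by
    rw [← Set.ncard_pos (Set.toFinite _), hF]
    norm_num
  obtain ⟨p, hp, hpv⟩ :=
    IsCycles.exists_cycle_toSubgraph_verts_eq_connectedComponentSupp (G := F)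
      (fun v _ => hF v) hv hne
  have hn := hp.three_le_length
  have : NeZero p.length := ⟨by omega⟩
  refine ⟨p.length, fun j => p.getVert j.val, hn, ?_, ?_, ?_⟩
  · intro i j hij
    have hi := i.val_lt
    have hj := j.val_lt
    exact ZMod.val_injective _
      (hp.getVert_injOn' (by simp only [Set.mem_ofPred_eq]; omega)
        (by simp only [Set.mem_ofPred_eq]; omega) hij)
  · intro i
    have hi := i.val_lt
    have hadj := p.adj_getVert_succ hi
    have : p.getVert (i + 1).val = p.getVert (i.val + 1) := by
      by_cases h0 : i + 1 = 0
      · -- the successor of the last index wraps around to the base point of the closed walk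
        have h1 : i = 0 - 1 := by linear_combination h0
        have h2 := val_neg_one' hn
        rw [← h1] at h2
        have h3 : i.val + 1 = p.length := by omega
        rw [h0, h3]
        simp
      · have := val_sub_one hn h0
        rw [add_sub_cancel_right] at this
        rw [this]
    change F.Adj (p.getVert i.val) (p.getVert (i + 1).val)
    rwa [this]
  · intro w
    rw [← ConnectedComponent.mem_supp_iff, ← hpv, Walk.mem_verts_toSubgraph,
      Walk.mem_support_iff_exists_getVert]
    constructor
    · rintro ⟨k, hk, hkl⟩
      rcases hkl.lt_or_eq with h | h
      · exact ⟨(k : ZMod p.length), by simp only [ZMod.val_natCast_of_lt h, hk]⟩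
      · refine ⟨0, ?_⟩
        rw [← hk, h]
        simp
    · rintro ⟨j, hj⟩
      exact ⟨j.val, hj, j.val_lt.le⟩

lemma cov_of_even {V : Type*} [Finite V] {F : SimpleGraph V}
    (hF : ∀ v, (F.neighborSet v).ncard = 2) (K : F.ConnectedComponent)
    (hK : ¬ Odd (Nat.card K.supp)) : Cov F K (fun _ => ∅) := by
  obtain ⟨n, f, hn, hf⟩ := exists_param hF K
  have : NeZero n := ⟨by omega⟩
  have hcard : Nat.card K.supp = n := by
    have : K.supp = Set.range f := by
      ext v
      rw [ConnectedComponent.mem_supp_iff, hf.2.2]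
      rfl
    rw [this, Nat.card_range_of_injective hf.1, Nat.card_zmod]
  rw [hcard, Nat.odd_iff] at hK
  have key := cov_of_param hF hn hf (![{j | Odd j.val}, {j | ¬ Odd j.val}, {j | Odd j.val}])
    (fun _ => ∅) ?_ ?_ ?_
  · simpa using key
  · intro i j _
    have : Odd j.val ↔ ¬ Odd (j - 1).val := by
      by_cases h : j = 0
      · subst h
        rw [val_neg_one' hn]
        simp only [ZMod.val_zero, Nat.odd_iff]
        omega
      · have := val_sub_one hn h
        simp only [Nat.odd_iff]
        omega
    fin_cases i
    · exact this
    · exact not_congr this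
    · exact this
  · intro i j hj
    exact absurd hj (Set.notMem_empty _)
  · intro j
    by_cases h : Odd j.val
    · exact ⟨0, h⟩
    · exact ⟨1, h⟩

/-! ### Gluing -/

/-- The exposed vertices on all odd components can be chosen simultaneously, so that those on a
component and on its partner under `π` are joined by edges. -/
lemma exists_exposed {V : Type*} [Finite V] {G F : SimpleGraph V}
    (hF : ∀ v, (F.neighborSet v).ncard = 2)
    (π : {K : F.ConnectedComponent // Odd (Nat.card K.supp)} →
         {K : F.ConnectedComponent // Odd (Nat.card K.supp)})
    (hinv : Function.Involutive π) (hfixfree : ∀ K, π K ≠ K)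
    (hgood : ∀ K, IsGoodPair G F K.1 (π K).1) :
    ∃ e : {K : F.ConnectedComponent // Odd (Nat.card K.supp)} → Fin 3 → V,
      (∀ K, Cov F K.1 (fun i => {e K i})) ∧ ∀ K i, G.Adj (e K i) (e (π K) i) := by
  have h : ∀ K, ∃ e e' : Fin 3 → V, Cov F K.1 (fun i => {e i}) ∧
      Cov F (π K).1 (fun i => {e' i}) ∧ ∀ i, G.Adj (e i) (e' i) := by
    intro K
    obtain ⟨n, m, f, g, hf, hg, a, b, a', b', -, -, hab, ha, hb, hc, -, -, hab', ha', hb', hc',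
      h0, h1, h2⟩ := hgood K
    refine ⟨_, _, cov_of_odd hF hf hab ha hb hc, cov_of_odd hF hg hab' ha' hb' hc', ?_⟩
    intro i
    fin_cases i
    · exact h0
    · exact h1
    · exact h2
  choose e e' he he' hadj using h
  -- an arbitrary linear ordering of the components selects one good triple for each pair
  obtain ⟨N, ⟨r⟩⟩ := Finite.exists_equiv_fin {K : F.ConnectedComponent // Odd (Nat.card K.supp)}
  refine ⟨fun K => if r K < r (π K) then e K else e' (π K), ?_, ?_⟩
  · intro K
    dsimp only
    split_ifs with h
    · exact he K
    · have := he' (π K)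
      rwa [hinv K] at this
  · intro K i
    have hne : r (π K) ≠ r K := fun h => hfixfree K (r.injective h)
    dsimp only
    rw [hinv K]
    rcases lt_or_gt_of_ne hne with h | h
    · rw [if_neg h.not_gt, if_pos h]
      exact (hadj (π K) i).symm
    · rw [if_pos h, if_neg h.not_gt]
      exact hadj K i

/-- The three perfect matchings covering the `2`-factor. -/
lemma exists_three {V : Type*} [Finite V] {G F : SimpleGraph V} (hFG : F ≤ G)
    (hF : ∀ v, (F.neighborSet v).ncard = 2)
    (π : {K : F.ConnectedComponent // Odd (Nat.card K.supp)} →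
         {K : F.ConnectedComponent // Odd (Nat.card K.supp)})
    (hinv : Function.Involutive π) (hfixfree : ∀ K, π K ≠ K)
    (hgood : ∀ K, IsGoodPair G F K.1 (π K).1) :
    ∃ M : Fin 3 → G.Subgraph, (∀ i, (M i).IsPerfectMatching) ∧
      ∀ v w, F.Adj v w → ∃ i, (M i).Adj v w := by
  classical
  obtain ⟨e, he, hadj⟩ := exists_exposed hF π hinv hfixfree hgood
  have hall : ∀ K : F.ConnectedComponent,
      Cov F K (fun i => {v | ∃ h : Odd (Nat.card K.supp), v = e ⟨K, h⟩ i}) := by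
    intro K
    by_cases h : Odd (Nat.card K.supp)
    · convert he ⟨K, h⟩ using 2 with i
      ext v
      exact ⟨fun ⟨_, hv⟩ => hv, fun hv => ⟨h, hv⟩⟩
    · convert cov_of_even hF K h using 2 with i
      ext v
      exact ⟨fun ⟨h', _⟩ => h h', fun hv => absurd hv (Set.notMem_empty _)⟩
  choose N hN1 hN2 hN3 hN4 using hall
  have hmk : ∀ K i, F.connectedComponentMk (e K i) = K.1 := fun K i =>
    (hN3 K.1 i (e K i) ⟨K.2, rfl⟩).1
  -- the restriction to the cycles together with the edges of the good triples
  let R : Fin 3 → V → V → Prop := fun i v w =>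
    (∃ K, N K i v w) ∨ ∃ K, v = e K i ∧ w = e (π K) i
  have hsymm : ∀ i v w, R i v w → R i w v := by
    rintro i v w (⟨K, h⟩ | ⟨K, rfl, rfl⟩)
    · exact Or.inl ⟨K, (hN1 K i v w h).2.2⟩
    · exact Or.inr ⟨π K, rfl, by rw [hinv K]⟩
  have hsub : ∀ i v w, R i v w → G.Adj v w := by
    rintro i v w (⟨K, h⟩ | ⟨K, rfl, rfl⟩)
    · exact hFG (hN1 K i v w h).1
    · exact hadj K i
  refine ⟨fun i => ⟨Set.univ, R i, fun h => hsub i _ _ h, fun _ => Set.mem_univ _,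
    ⟨fun v w h => hsymm i v w h⟩⟩, ?_, ?_⟩
  · intro i
    rw [Subgraph.isPerfectMatching_iff]
    intro v
    change ∃! w, R i v w
    by_cases hv : ∃ K, v = e K i
    · obtain ⟨K, rfl⟩ := hv
      refine ⟨e (π K) i, Or.inr ⟨K, rfl, rfl⟩, ?_⟩
      rintro w (⟨K', h⟩ | ⟨K', h, rfl⟩)
      · have h1 := (hN1 K' i _ w h).2.1
        rw [hmk] at h1
        subst h1
        exact absurd h ((hN3 K.1 i _ ⟨K.2, rfl⟩).2 w)
      · have h1 := congrArg F.connectedComponentMk h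
        rw [hmk, hmk] at h1
        rw [Subtype.ext h1]
    · obtain ⟨w, hw, huniq⟩ := hN2 (F.connectedComponentMk v) i v rfl
        (by rintro ⟨h, h'⟩; exact hv ⟨_, h'⟩)
      refine ⟨w, Or.inl ⟨_, hw⟩, ?_⟩
      rintro w' (⟨K', h⟩ | ⟨K', h, rfl⟩)
      · have h1 := (hN1 K' i _ w' h).2.1
        subst h1
        exact huniq w' h
      · exact absurd ⟨K', h⟩ hv
  · intro v w h
    obtain ⟨i, hi⟩ := hN4 _ v w h rfl
    exact ⟨i, Or.inl ⟨_, hi⟩⟩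

/-- If a cubic graph `G` has a `2`-factor whose odd cycles can be arranged into good
pairs, then `τ(G) ≤ 4`. -/
theorem tau_le_four_of_good_pairs {V : Type*} [Fintype V]
    (G : SimpleGraph V) [DecidableRel G.Adj] (hG : G.IsRegularOfDegree 3)
    (F : G.Subgraph) (hFspan : F.IsSpanning)
    (hFreg : ∀ v : V, Nat.card (F.neighborSet v) = 2)
    (π : {K : F.spanningCoe.ConnectedComponent // Odd (Nat.card K.supp)} →
         {K : F.spanningCoe.ConnectedComponent // Odd (Nat.card K.supp)})
    (hinv : Function.Involutive π) (hfixfree : ∀ K, π K ≠ K)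
    (hgood : ∀ K, IsGoodPair G F.spanningCoe K.1 (π K).1) :
    tau G ≤ 4 := by
  classical
  obtain ⟨M, hM, hcov⟩ := exists_three F.spanningCoe_le (fun v => hFreg v) π hinv hfixfree hgood
  let M₀ : G.Subgraph :=
    { verts := Set.univ
      Adj := fun v w => G.Adj v w ∧ ¬ F.Adj v w
      adj_sub := fun h => h.1
      edge_vert := fun _ => Set.mem_univ _
      symm := ⟨fun v w h => ⟨h.1.symm, fun h' => h.2 h'.symm⟩⟩ }
  have hM₀ : M₀.IsPerfectMatching := by
    rw [Subgraph.isPerfectMatching_iff]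
    intro v
    have h1 : (G.neighborSet v \ F.neighborSet v).ncard = 1 := by
      have h3 : (G.neighborSet v).ncard = 3 := by
        rw [← Nat.card_coe_set_eq, Nat.card_eq_fintype_card, card_neighborSet_eq_degree]
        exact hG v
      have h2 : (F.neighborSet v).ncard = 2 := hFreg v
      rw [Set.ncard_sdiff (F.neighborSet_subset v), h2, h3]
    obtain ⟨w, hw⟩ := Set.ncard_eq_one.1 h1
    have hiff : ∀ x, (G.Adj v x ∧ ¬ F.Adj v x) ↔ x = w := fun x => Set.ext_iff.1 hw x
    exact ⟨w, (hiff w).2 rfl, fun x hx => (hiff x).1 hx⟩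
  refine Nat.sInf_le ⟨Fin.cons M₀ M, ?_, ?_⟩
  · intro i
    refine Fin.cases ?_ (fun i => ?_) i
    · exact hM₀
    · exact hM i
  · intro e he
    induction e using Sym2.ind with
    | _ v w =>
      by_cases hF : F.Adj v w
      · obtain ⟨i, hi⟩ := hcov v w hF
        exact ⟨i.succ, hi⟩
      · exact ⟨0, he, hF⟩
end

section
/- Let G be a bridgeless cubic graph on n vertices with τ(G) = 4. Then G has a balanced matching of size at most n/12; that is, there exist two perfect matchings M₁, M₂ of G with |M₁ ∩ M₂| ≤ n/12. -/
/-!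
Fix a covering by four perfect matchings `M 0, …, M 3` and let `p i v` be the partner of `v` in
`M i`. The map `i ↦ p i v` sends the four indices onto the three neighbours of `v`, so exactly one
pair `i < j` has `p i v = p j v`. Summing over `v`, the six pairs share `n` such coincidences, so
some pair has at most `n / 6` of them. A coincidence for `(i, j)` is an endpoint of an edge of
`M i ∩ M j`, and each such edge has two endpoints, whence `|M i ∩ M j| ≤ n / 12`.
-/

open SimpleGraph

/-- A surjection from four points onto three identifies at most one pair. -/
lemma card_collisions_le_one (f : Fin 4 → Fin 3) (hf : Function.Surjective f) :
    (Finset.univ.filter fun q : Fin 4 × Fin 4 => q.1 < q.2 ∧ f q.1 = f q.2).card ≤ 1 := by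
  revert f
  decide

/-- The handshake bound: the vertices whose partners under two matchings agree are at least twice
as many as the common edges. -/
lemma two_mul_card_inter_le {V : Type*} [Fintype V] [DecidableEq V] (G : SimpleGraph V)
    (A B : G.Subgraph) (a b : V → V)
    (ha : ∀ v w, A.Adj v w → w = a v) (hb : ∀ v w, B.Adj v w → w = b v) :
    2 * Nat.card ((A.edgeSet ∩ B.edgeSet : Set (Sym2 V))) ≤
      (Finset.univ.filter fun v => a v = b v).card := by
  classical
  have hE : (A.edgeSet ∩ B.edgeSet : Set (Sym2 V)) = (A ⊓ B).spanningCoe.edgeSet := by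
    ext e
    induction e with
    | _ x y => simp [SimpleGraph.Subgraph.mem_edgeSet]
  rw [hE, Nat.card_eq_fintype_card, ← SimpleGraph.edgeFinset_card,
    ← SimpleGraph.sum_degrees_eq_twice_card_edges, Finset.card_filter]
  refine Finset.sum_le_sum fun v _ => ?_
  rw [← SimpleGraph.card_neighborFinset_eq_degree]
  split_ifs with h
  · refine Finset.card_le_one.2 fun x hx y hy => ?_
    simp only [SimpleGraph.mem_neighborFinset, SimpleGraph.Subgraph.spanningCoe_adj,
      SimpleGraph.Subgraph.inf_adj] at hx hy
    rw [ha _ _ hx.1, ha _ _ hy.1]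
  · rw [Nat.le_zero, Finset.card_eq_zero, Finset.eq_empty_iff_forall_notMem]
    intro x hx
    simp only [SimpleGraph.mem_neighborFinset, SimpleGraph.Subgraph.spanningCoe_adj,
      SimpleGraph.Subgraph.inf_adj] at hx
    exact h ((ha _ _ hx.1).symm.trans (hb _ _ hx.2))

/-- A bridgeless cubic graph `G` on `n` vertices with `τ(G) = 4` has a balanced
matching of size at most `n / 12`: there are two perfect matchings `M₁`, `M₂`
with `12 * |M₁ ∩ M₂| ≤ n`. -/
theorem balanced_matching_le_card_div_twelve {V : Type*} [Fintype V]
    (G : SimpleGraph V) [DecidableRel G.Adj] (hG : G.IsRegularOfDegree 3)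
    (hbridgeless : ∀ e ∈ G.edgeSet, ¬ G.IsBridge e)
    (htau : tau G = 4) :
    ∃ M₁ M₂ : G.Subgraph, M₁.IsPerfectMatching ∧ M₂.IsPerfectMatching ∧
      12 * Nat.card ((M₁.edgeSet ∩ M₂.edgeSet : Set (Sym2 V))) ≤ Fintype.card V := by
  classical
  obtain ⟨M, hM, hcov⟩ : ∃ M : Fin 4 → G.Subgraph, IsPMCovering G M := by
    -- An empty infimum would be `0`, so `tau G = 4` is attained.
    have hne := Nat.nonempty_of_pos_sInf
      (s := {k | ∃ M : Fin k → G.Subgraph, IsPMCovering G M})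
      (by change 0 < tau G; omega)
    have h := Nat.sInf_mem hne
    change tau G ∈ _ at h
    rwa [htau] at h
  have hex : ∀ i v, ∃ w, (M i).Adj v w ∧ ∀ y, (M i).Adj v y → y = w := fun i v =>
    SimpleGraph.Subgraph.isPerfectMatching_iff.1 (hM i) v
  choose p hp hpu using hex
  let S : Finset (Fin 4 × Fin 4) := Finset.univ.filter fun q => q.1 < q.2
  let c : Fin 4 × Fin 4 → ℕ := fun q => (Finset.univ.filter fun v => p q.1 v = p q.2 v).card
  have hS : S.card = 6 := by decide
  have hvertex : ∀ v, (S.filter fun q => p q.1 v = p q.2 v).card ≤ 1 := by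
    intro v
    let e : G.neighborFinset v ≃ Fin 3 := Finset.equivFinOfCardEq (hG v)
    let g : Fin 4 → G.neighborFinset v := fun i =>
      ⟨p i v, (G.mem_neighborFinset v _).2 (hp i v).adj_sub⟩
    have hg : Function.Surjective g := by
      rintro ⟨w, hw⟩
      obtain ⟨i, hi⟩ := hcov s(v, w) ((G.mem_neighborFinset v w).1 hw)
      exact ⟨i, Subtype.ext (hpu i v w hi).symm⟩
    have := card_collisions_le_one (e ∘ g) (e.surjective.comp hg)
    simpa [S, g, Finset.filter_filter] using this
  have hsum : ∑ q ∈ S, c q ≤ Fintype.card V := by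
    calc ∑ q ∈ S, c q = ∑ v : V, (S.filter fun q => p q.1 v = p q.2 v).card := by
          simp only [c, Finset.card_filter]
          exact Finset.sum_comm
      _ ≤ ∑ _v : V, 1 := Finset.sum_le_sum fun v _ => hvertex v
      _ = Fintype.card V := by simp
  obtain ⟨q, hq⟩ : ∃ q, 6 * c q ≤ Fintype.card V := by
    by_contra! h
    have h6 : S.card • (Fintype.card V + 1) ≤ ∑ q ∈ S, 6 * c q :=
      Finset.card_nsmul_le_sum _ _ _ fun q _ => h q
    rw [hS, ← Finset.mul_sum, smul_eq_mul] at h6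
    omega
  refine ⟨M q.1, M q.2, hM _, hM _, ?_⟩
  have := two_mul_card_inter_le G (M q.1) (M q.2) (p q.1) (p q.2) (hpu _) (hpu _)
  change _ ≤ c q at this
  omega
end

section
/- For every odd integer k ≥ 5, the flower snark F_k satisfies τ(F_k) = 4. -/
/-! The graph is a closed chain of `k` claws `{x_i, y_i, z_i, t_i}`, whose three tracks `x, y, z`
close up after one turn with `y` and `z` exchanged. A family of perfect matchings is read off
from the triples of labels carried by the three edges between consecutive claws, so everything
reduces to closed walks of length `k` on such triples, closed up to the exchange of `y` and `z`.

A covering by at most three perfect matchings gives a proper 3-edge-colouring, since two edges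
at a vertex never lie in the same matching. Take colours in `ZMod 3` and let `u`, `v` be the
triples entering and leaving a claw. If `u` is a permutation, then so is `v`, with the same sign,
while the exchange of `y` and `z` reverses the sign. Otherwise `v` is not a permutation
either, and the sum of `v` is minus that of `u` and nonzero, while the exchange preserves the
sum; as `k` is odd, the sign changes do not cancel (`step_sum`, `step_sign`, `not_proper_coloring`).

For four matchings, `labels` is an explicit walk of sets of matchings with `labels 5` equal to
`labels 0` up to the exchange of `y` and `z`, and from there on it alternates between two
triples; hence it closes up after any odd number `k ≥ 5` of claws. -/

open SimpleGraph

/-- The flower snark `F_k` (for odd `k`): vertices are `x_i, y_i, z_i, t_i`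
(`i ∈ ZMod k`), encoded as `(0, i), (1, i), (2, i), (3, i)` respectively.
The `x_i` form a cycle of length `k`, the vertices `y₀ … y_{k-1} z₀ … z_{k-1}`
form a cycle of length `2k`, and each `t_i` is adjacent to `x_i`, `y_i`, `z_i`. -/
def flowerSnark (k : ℕ) : SimpleGraph (Fin 4 × ZMod k) :=
  SimpleGraph.fromRel (fun p q =>
    (p.1 = 0 ∧ q.1 = 0 ∧ q.2 = p.2 + 1) ∨
    (p.1 = 1 ∧ q.1 = 1 ∧ q.2 = p.2 + 1 ∧ p.2 + 1 ≠ 0) ∨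
    (p.1 = 2 ∧ q.1 = 2 ∧ q.2 = p.2 + 1 ∧ p.2 + 1 ≠ 0) ∨
    (p.1 = 1 ∧ q.1 = 2 ∧ p.2 + 1 = 0 ∧ q.2 = 0) ∨
    (p.1 = 2 ∧ q.1 = 1 ∧ p.2 + 1 = 0 ∧ q.2 = 0) ∨
    (p.1 = 3 ∧ (q.1 = 0 ∨ q.1 = 1 ∨ q.1 = 2) ∧ q.2 = p.2))

namespace FlowerSnark

/-! ### Adjacency along the tracks -/

/-- The successor of a vertex on its track; entering claw `0` exchanges the tracks `y` and `z`.
Only meaningful on the tracks `0, 1, 2`. -/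
def nxt {k : ℕ} (p : Fin 4 × ZMod k) : Fin 4 × ZMod k :=
  (if p.2 + 1 = 0 then Equiv.swap 1 2 p.1 else p.1, p.2 + 1)

/-- The predecessor of a vertex on its track. -/
def prv {k : ℕ} (p : Fin 4 × ZMod k) : Fin 4 × ZMod k :=
  (if p.2 = 0 then Equiv.swap 1 2 p.1 else p.1, p.2 - 1)

lemma nxt_prv {k : ℕ} (p : Fin 4 × ZMod k) : nxt (prv p) = p := by
  obtain ⟨r, i⟩ := p
  by_cases h : i = 0 <;> simp [nxt, prv, h]

lemma prv_nxt {k : ℕ} (p : Fin 4 × ZMod k) : prv (nxt p) = p := by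
  obtain ⟨r, i⟩ := p
  by_cases h : i + 1 = 0
  · simp [nxt, prv, h, (eq_neg_of_add_eq_zero_left h).symm]
  · simp [nxt, prv, h]

lemma swap_eq_three (r : Fin 4) : Equiv.swap 1 2 r = 3 ↔ r = 3 := by
  revert r; decide

lemma nxt_fst {k : ℕ} (p : Fin 4 × ZMod k) : (nxt p).1 = 3 ↔ p.1 = 3 := by
  unfold nxt; dsimp only; split_ifs <;> simp [swap_eq_three]

lemma prv_fst {k : ℕ} (p : Fin 4 × ZMod k) : (prv p).1 = 3 ↔ p.1 = 3 := by
  unfold prv; dsimp only; split_ifs <;> simp [swap_eq_three]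

lemma adj_iff {k : ℕ} (hk : 5 ≤ k) (p q : Fin 4 × ZMod k) :
    (flowerSnark k).Adj p q ↔
      (p.1 ≠ 3 ∧ q = nxt p) ∨ (q.1 ≠ 3 ∧ p = nxt q) ∨
      (p.1 = 3 ∧ q.1 ≠ 3 ∧ q.2 = p.2) ∨ (q.1 = 3 ∧ p.1 ≠ 3 ∧ p.2 = q.2) := by
  have : Fact (1 < k) := ⟨by omega⟩
  obtain ⟨a, i⟩ := p
  obtain ⟨b, j⟩ := q
  have h1 : ∀ x : ZMod k, x ≠ x + 1 := by simp
  have key : ∀ (a b : Fin 4) (i j : ZMod k),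
      ((a = 0 ∧ b = 0 ∧ j = i + 1) ∨ (a = 1 ∧ b = 1 ∧ j = i + 1 ∧ i + 1 ≠ 0) ∨
      (a = 2 ∧ b = 2 ∧ j = i + 1 ∧ i + 1 ≠ 0) ∨ (a = 1 ∧ b = 2 ∧ i + 1 = 0 ∧ j = 0) ∨
      (a = 2 ∧ b = 1 ∧ i + 1 = 0 ∧ j = 0) ∨ (a = 3 ∧ (b = 0 ∨ b = 1 ∨ b = 2) ∧ j = i)) ↔
      (a ≠ 3 ∧ (b, j) = nxt (a, i)) ∨ (a = 3 ∧ b ≠ 3 ∧ j = i) := by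
    intro a b i j
    by_cases h : i + 1 = 0 <;> fin_cases a <;> fin_cases b <;>
      simp [nxt, h, Equiv.swap_apply_def]
  have hne : ∀ (a b : Fin 4) (i j : ZMod k),
      (a ≠ 3 ∧ (b, j) = nxt (a, i)) ∨ (a = 3 ∧ b ≠ 3 ∧ j = i) → (a, i) ≠ (b, j) := by
    rintro a b i j (⟨-, h⟩ | ⟨h, h', -⟩) h2
    · rw [← h2] at h
      exact h1 i (congrArg Prod.snd h)
    · exact h' ((congrArg Prod.fst h2).symm.trans h)
  rw [flowerSnark, fromRel_adj]
  dsimp only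
  rw [key, key]
  constructor
  · rintro ⟨-, (h | h) | (h | h)⟩
    exacts [.inl h, .inr (.inr (.inl h)), .inr (.inl h), .inr (.inr (.inr h))]
  · rintro (h | h | h | h)
    · exact ⟨hne _ _ _ _ (.inl h), .inl (.inl h)⟩
    · exact ⟨(hne _ _ _ _ (.inl h)).symm, .inr (.inl h)⟩
    · exact ⟨hne _ _ _ _ (.inr h), .inl (.inr h)⟩
    · exact ⟨(hne _ _ _ _ (.inr h)).symm, .inr (.inr h)⟩

/-! ### Three matchings do not suffice -/

/-- `u` and `v` are the colours of the edges entering and leaving a claw in a proper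
3-edge-colouring. The edge from track `r` to the centre has the third colour `-(u r + v r)`. -/
def Step (u v : Fin 3 → ZMod 3) : Prop :=
  (∀ r, u r ≠ v r) ∧ ∀ r s, r ≠ s → u r + v r ≠ u s + v s

/-- The sum of the colours, which changes sign in each step. -/
def total (u : Fin 3 → ZMod 3) : ZMod 3 := u 0 + u 1 + u 2

/-- A sign that tells apart the two cyclic orders of a permutation of the colours. When the
total is zero it is nonzero exactly on permutations. -/
def sign (u : Fin 3 → ZMod 3) : ZMod 3 := u 1 - u 0

/-- The triple with the tracks `y` and `z` exchanged. -/
def twist {α : Type*} (u : Fin 3 → α) : Fin 3 → α := ![u 0, u 2, u 1]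

lemma step_sum {u v : Fin 3 → ZMod 3} (h : Step u v) : total v = - total u := by
  have key : ∀ a b c a' b' c' : ZMod 3, a + a' ≠ b + b' → a + a' ≠ c + c' → b + b' ≠ c + c' →
      a' + b' + c' = -(a + b + c) := by decide +kernel
  exact key _ _ _ _ _ _ (h.2 0 1 (by decide)) (h.2 0 2 (by decide)) (h.2 1 2 (by decide))

/-- A triple with total zero that can enter a claw is a permutation of the colours, and a step
preserves its cyclic order. -/
lemma step_sign {u v : Fin 3 → ZMod 3} (h : Step u v) (hu : total u = 0) :
    sign v = sign u ∧ sign u ≠ 0 ∧ sign (twist u) = - sign u := by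
  have key : ∀ a b c a' b' c' : ZMod 3, a ≠ a' → b ≠ b' → c ≠ c' →
      a + a' ≠ b + b' → a + a' ≠ c + c' → b + b' ≠ c + c' → a + b + c = 0 →
      b' - a' = b - a ∧ b - a ≠ 0 ∧ c - a = -(b - a) := by decide +kernel
  exact key _ _ _ _ _ _ (h.1 0) (h.1 1) (h.1 2)
    (h.2 0 1 (by decide)) (h.2 0 2 (by decide)) (h.2 1 2 (by decide)) hu

lemma total_twist (u : Fin 3 → ZMod 3) : total (twist u) = total u := by
  simp only [total, twist, Matrix.cons_val]
  ring

/-- No walk with an odd number `2 * m + 1` of steps closes up after exchanging `y` and `z`. -/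
lemma not_closed_walk (w : ℕ → Fin 3 → ZMod 3) (m : ℕ)
    (hw : ∀ n < 2 * m, Step (w n) (w (n + 1))) (hc : Step (twist (w (2 * m))) (w 0)) : False := by
  have inv : ∀ n ≤ m, total (w (2 * n)) = total (w 0) ∧
      (total (w 0) = 0 → sign (w (2 * n)) = sign (w 0)) := by
    intro n hn
    induction n with
    | zero => simp
    | succ n ih =>
      obtain ⟨h1, h2⟩ := ih (by omega)
      have s1 := hw (2 * n) (by omega)
      have s2 := hw (2 * n + 1) (by omega)
      have t1 := step_sum s1
      have t2 := step_sum s2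
      refine ⟨by rw [show 2 * (n + 1) = 2 * n + 1 + 1 by ring, t2, t1, h1, neg_neg], fun h0 => ?_⟩
      rw [show 2 * (n + 1) = 2 * n + 1 + 1 by ring,
        (step_sign s2 (by rw [t1, h1, h0, neg_zero])).1, (step_sign s1 (by rw [h1, h0])).1, h2 h0]
  obtain ⟨h1, h2⟩ := inv m le_rfl
  have t := step_sum hc
  rw [total_twist, h1] at t
  have h0 : total (w 0) = 0 := by
    have : ∀ x : ZMod 3, x = -x → x = 0 := by decide
    exact this _ t
  obtain ⟨a, b, c⟩ := step_sign hc (by rw [total_twist, h1, h0])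
  have htw : twist (twist (w (2 * m))) = w (2 * m) := by
    ext r; fin_cases r <;> rfl
  rw [htw, h2 h0, a] at c
  have : ∀ x : ZMod 3, x = -x → x = 0 := by decide
  exact b (this _ c)

lemma not_proper_coloring {k : ℕ} (hodd : Odd k) (hk : 5 ≤ k)
    (c : Fin 4 × ZMod k → Fin 4 × ZMod k → ZMod 3) (hsymm : ∀ p q, c p q = c q p)
    (hc : ∀ p q q', (flowerSnark k).Adj p q → (flowerSnark k).Adj p q' → q ≠ q' →
      c p q ≠ c p q') : False := by
  obtain ⟨m, rfl⟩ := hodd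
  have two_ne : (2 : ZMod (2 * m + 1)) ≠ 0 := by
    intro h
    have := (ZMod.natCast_eq_zero_iff 2 (2 * m + 1)).1 (by exact_mod_cast h)
    have := Nat.le_of_dvd (by norm_num) this
    omega
  -- The colours at a track vertex, and at a claw centre.
  have hrail : ∀ p : Fin 4 × ZMod (2 * m + 1), p.1 ≠ 3 →
      c (prv p) p ≠ c p (nxt p) ∧ c p (3, p.2) = -(c (prv p) p + c p (nxt p)) := by
    intro p hp
    have a1 : (flowerSnark (2 * m + 1)).Adj p (nxt p) := (adj_iff hk _ _).2 (.inl ⟨hp, rfl⟩)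
    have a2 : (flowerSnark (2 * m + 1)).Adj p (prv p) :=
      (adj_iff hk _ _).2 (.inr (.inl ⟨by rwa [ne_eq, prv_fst], (nxt_prv p).symm⟩))
    have a3 : (flowerSnark (2 * m + 1)).Adj p (3, p.2) :=
      (adj_iff hk _ _).2 (.inr (.inr (.inr ⟨rfl, hp, rfl⟩)))
    have n1 : prv p ≠ nxt p := by
      intro h
      have h := congrArg Prod.snd h
      simp only [prv, nxt] at h
      exact two_ne (by linear_combination -h)
    have n2 : prv p ≠ (3, p.2) := fun h => hp ((prv_fst p).1 (congrArg Prod.fst h))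
    have n3 : nxt p ≠ (3, p.2) := fun h => hp ((nxt_fst p).1 (congrArg Prod.fst h))
    rw [hsymm (prv p) p]
    have key : ∀ x y z : ZMod 3, x ≠ y → x ≠ z → y ≠ z → z = -(x + y) := by decide
    exact ⟨hc _ _ _ a2 a1 n1, key _ _ _ (hc _ _ _ a2 a1 n1) (hc _ _ _ a2 a3 n2)
      (hc _ _ _ a1 a3 n3)⟩
  have hstep : ∀ i : ZMod (2 * m + 1),
      Step (fun r => c (prv (r.castSucc, i)) (r.castSucc, i))
        (fun r => c (r.castSucc, i) (nxt (r.castSucc, i))) := by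
    intro i
    have h3 : ∀ r : Fin 3, r.castSucc ≠ (3 : Fin 4) := by decide
    refine ⟨fun r => (hrail _ (h3 r)).1, fun r s hrs h => ?_⟩
    have a : ∀ r : Fin 3, (flowerSnark (2 * m + 1)).Adj (3, i) (r.castSucc, i) := fun r =>
      (adj_iff hk _ _).2 (.inr (.inr (.inl ⟨rfl, h3 r, rfl⟩)))
    refine hc _ _ _ (a r) (a s) (by simpa using hrs) ?_
    rw [hsymm _ (r.castSucc, i), hsymm _ (s.castSucc, i), (hrail (r.castSucc, i) (h3 r)).2,
      (hrail (s.castSucc, i) (h3 s)).2, h]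
  refine not_closed_walk (fun n r => c (r.castSucc, (n : ZMod (2 * m + 1)))
    (nxt (r.castSucc, (n : ZMod (2 * m + 1))))) m (fun n hn => ?_) ?_
  · have h := hstep ((n + 1 : ℕ) : ZMod (2 * m + 1))
    have hn0 : ((n + 1 : ℕ) : ZMod (2 * m + 1)) ≠ 0 := by
      intro h0
      have := Nat.le_of_dvd (by omega) ((ZMod.natCast_eq_zero_iff _ _).1 h0)
      omega
    convert h using 2 with r
    have : prv (r.castSucc, ((n + 1 : ℕ) : ZMod (2 * m + 1))) = (r.castSucc, (n : ZMod _)) := by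
      unfold prv; dsimp only; rw [if_neg hn0]; simp
    rw [this, ← this, nxt_prv, this]
  · have h := hstep 0
    have h2m : ((2 * m : ℕ) : ZMod (2 * m + 1)) = 0 - 1 := by
      have := ZMod.natCast_self (2 * m + 1)
      push_cast at this ⊢
      linear_combination this
    have hprv : ∀ r : Fin 3, prv (r.castSucc, (0 : ZMod (2 * m + 1))) =
        (Equiv.swap 1 2 r.castSucc, ((2 * m : ℕ) : ZMod (2 * m + 1))) := by
      intro r; unfold prv; dsimp only; rw [if_pos rfl, h2m]
    convert h using 1
    · ext r
      rw [← nxt_prv (r.castSucc, (0 : ZMod (2 * m + 1))), prv_nxt, hprv]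
      fin_cases r <;> rfl
    · simp

lemma four_le {k j : ℕ} (hodd : Odd k) (hk : 5 ≤ k)
    (M : Fin j → (flowerSnark k).Subgraph) (hM : IsPMCovering (flowerSnark k) M) : 4 ≤ j := by
  classical
  by_contra! hj
  -- Colour each edge by a matching containing it; non-edges get colour `0`.
  let c : Sym2 (Fin 4 × ZMod k) → Fin 3 := fun e =>
    if h : ∃ i, e ∈ (M i).edgeSet then Fin.castLE (by omega : j ≤ 3) h.choose else 0
  refine not_proper_coloring hodd hk (fun p q => c s(p, q))
    (fun p q => by rw [Sym2.eq_swap]) ?_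
  intro p q q' hq hq' hne heq
  have h := hM.2 s(p, q) hq
  have h' := hM.2 s(p, q') hq'
  change c _ = c _ at heq
  simp only [c, dif_pos h, dif_pos h'] at heq
  have hi : h.choose = h'.choose := Fin.castLE_injective _ heq
  have m1 := h.choose_spec
  have m2 := h'.choose_spec
  rw [← hi] at m2
  have hp := Subgraph.isPerfectMatching_iff.1 (hM.1 h.choose) p
  exact hne (hp.unique m1 m2)

/-! ### Four matchings suffice -/

/-- A walk on label triples: `labels n r` is the set of matchings containing the edge of track `r`
entering claw `n` (leaving claw `n - 1`). Row `3`, for the claw centres, is never used. -/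
def labels : ℕ → Fin 4 → Finset (Fin 4)
  | 0 => ![{0}, {1}, {2, 3}, ∅]
  | 1 => ![{1}, {2, 3}, {0}, ∅]
  | 2 => ![{0}, {1}, {2, 3}, ∅]
  | 3 => ![{2}, {0, 3}, {1}, ∅]
  | n + 4 => if Even n then ![{3}, {1}, {0, 2}, ∅] else ![{0}, {2, 3}, {1}, ∅]

/-- The set of matchings containing the edge from track `r` to the centre of claw `n`. -/
def spoke (n : ℕ) (r : Fin 4) : Finset (Fin 4) := (labels n r ∪ labels (n + 1) r)ᶜ

/-- The label sets partition the four matchings at each vertex of a claw, and are nonempty. -/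
lemma labels_step (n : ℕ) :
    (∀ r, Disjoint (labels n r) (labels (n + 1) r)) ∧
    (∀ m, ∃ r, r ≠ 3 ∧ m ∈ spoke n r ∧ ∀ s, s ≠ 3 → m ∈ spoke n s → s = r) ∧
    (∀ r, r ≠ 3 → (labels (n + 1) r).Nonempty ∧ (spoke n r).Nonempty) := by
  match n with
  | 0 => decide +kernel
  | 1 => decide +kernel
  | 2 => decide +kernel
  | 3 => decide +kernel
  | n + 4 =>
    simp only [spoke, labels, Nat.even_add_one]
    by_cases h : Even n
    · simp only [h, if_true, not_true, if_false]; decide +kernel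
    · simp only [h, if_true, not_false_eq_true, if_false]; decide +kernel

/-- After an odd number `k ≥ 5` of claws the walk is back at its start, with `y` and `z`
exchanged. -/
lemma labels_closed {k : ℕ} (hodd : Odd k) (hk : 5 ≤ k) (r : Fin 4) :
    labels k (Equiv.swap 1 2 r) = labels 0 r := by
  obtain ⟨n, rfl⟩ : ∃ n, k = n + 4 := ⟨k - 4, by omega⟩
  have : ¬ Even n := by
    rw [Nat.not_even_iff_odd]; obtain ⟨a, ha⟩ := hodd; exact ⟨a - 2, by omega⟩
  simp only [labels, this, if_false]
  revert r; decide +kernel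

/-- The labels are consistent along the tracks, including across the twist. -/
lemma labels_prv {k : ℕ} (hodd : Odd k) (hk : 5 ≤ k) (p : Fin 4 × ZMod k) :
    labels ((prv p).2.val + 1) (prv p).1 = labels p.2.val p.1 := by
  obtain ⟨r, i⟩ := p
  have : NeZero k := ⟨by omega⟩
  have : Fact (1 < k) := ⟨by omega⟩
  by_cases h : i = 0
  · subst h
    obtain ⟨n, rfl⟩ : ∃ n, k = n + 1 := ⟨k - 1, by omega⟩
    simp only [prv, if_true, zero_sub, ZMod.val_neg_one, ZMod.val_zero]
    exact labels_closed hodd hk r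
  · have h1 : 1 ≤ i.val := by
      rw [Nat.one_le_iff_ne_zero, ne_eq, ZMod.val_eq_zero]; exact h
    have hv : (i - 1).val + 1 = i.val := by
      rw [ZMod.val_sub (by rwa [ZMod.val_one]), ZMod.val_one]; omega
    simp only [prv, h, if_false, hv]

/-- The edges carrying the label `m`. -/
def MAdj {k : ℕ} (m : Fin 4) (p q : Fin 4 × ZMod k) : Prop :=
  (p.1 ≠ 3 ∧ q = nxt p ∧ m ∈ labels (p.2.val + 1) p.1) ∨
  (q.1 ≠ 3 ∧ p = nxt q ∧ m ∈ labels (q.2.val + 1) q.1) ∨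
  (p.1 = 3 ∧ q.1 ≠ 3 ∧ q.2 = p.2 ∧ m ∈ spoke p.2.val q.1) ∨
  (q.1 = 3 ∧ p.1 ≠ 3 ∧ p.2 = q.2 ∧ m ∈ spoke q.2.val p.1)

/-- The `m`-th matching of the covering. -/
def matching {k : ℕ} (hk : 5 ≤ k) (m : Fin 4) : (flowerSnark k).Subgraph where
  verts := Set.univ
  Adj := MAdj m
  adj_sub {p q} h := by
    rw [adj_iff hk]
    unfold MAdj at h
    tauto
  edge_vert _ := trivial
  symm := ⟨fun p q h => by unfold MAdj at h ⊢; tauto⟩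

/-- At a track vertex exactly one of the three incident edges carries the label `m`. -/
lemma mAdj_track {k : ℕ} (hodd : Odd k) (hk : 5 ≤ k) (m : Fin 4) (p q : Fin 4 × ZMod k)
    (hp : p.1 ≠ 3) : MAdj m p q ↔
      (q = nxt p ∧ m ∈ labels (p.2.val + 1) p.1) ∨ (q = prv p ∧ m ∈ labels p.2.val p.1) ∨
      (q = (3, p.2) ∧ m ∈ spoke p.2.val p.1) := by
  have h1 : (q.1 ≠ 3 ∧ p = nxt q ∧ m ∈ labels (q.2.val + 1) q.1) ↔
      (q = prv p ∧ m ∈ labels p.2.val p.1) := by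
    constructor
    · rintro ⟨-, rfl, h⟩
      rw [← labels_prv hodd hk, prv_nxt]
      exact ⟨rfl, h⟩
    · rintro ⟨rfl, h⟩
      rw [labels_prv hodd hk]
      exact ⟨by rwa [ne_eq, prv_fst], (nxt_prv p).symm, h⟩
  have h2 : (q.1 = 3 ∧ p.1 ≠ 3 ∧ p.2 = q.2 ∧ m ∈ spoke q.2.val p.1) ↔
      (q = (3, p.2) ∧ m ∈ spoke p.2.val p.1) := by
    constructor
    · rintro ⟨h, -, h', h3⟩
      rw [h']
      exact ⟨Prod.ext h rfl, h3⟩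
    · rintro ⟨rfl, h⟩
      exact ⟨rfl, hp, rfl, h⟩
  unfold MAdj
  rw [h1, h2]
  simp only [hp, ne_eq, not_false_eq_true, true_and, false_and, false_or]

lemma matching_isPerfect {k : ℕ} (hodd : Odd k) (hk : 5 ≤ k) (m : Fin 4) :
    (matching hk m).IsPerfectMatching := by
  rw [Subgraph.isPerfectMatching_iff]
  intro p
  change ∃! q, MAdj m p q
  obtain ⟨hdisj, hcen, -⟩ := labels_step p.2.val
  by_cases hp : p.1 = 3
  · obtain ⟨r, hr, hm, hu⟩ := hcen m
    refine ⟨(r, p.2), .inr (.inr (.inl ⟨hp, hr, rfl, hm⟩)), ?_⟩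
    rintro q (h | h | h | h)
    · exact absurd hp h.1
    · exact absurd ((nxt_fst q).1 (h.2.1 ▸ hp)) h.1
    · exact Prod.ext (hu _ h.2.1 h.2.2.2) h.2.2.1
    · exact absurd hp h.2.1
  · simp only [mAdj_track hodd hk m p _ hp]
    have hd : m ∈ labels p.2.val p.1 → m ∉ labels (p.2.val + 1) p.1 :=
      fun h => Finset.disjoint_left.1 (hdisj p.1) h
    have hs : m ∈ spoke p.2.val p.1 ↔
        ¬ (m ∈ labels p.2.val p.1 ∨ m ∈ labels (p.2.val + 1) p.1) := by
      simp [spoke]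
    by_cases ha : m ∈ labels p.2.val p.1
    · exact ⟨prv p, by tauto, by rintro q; tauto⟩
    · by_cases hb : m ∈ labels (p.2.val + 1) p.1
      · exact ⟨nxt p, by tauto, by rintro q; tauto⟩
      · exact ⟨(3, p.2), by tauto, by rintro q; tauto⟩

lemma matching_covering {k : ℕ} (hodd : Odd k) (hk : 5 ≤ k) :
    IsPMCovering (flowerSnark k) (matching hk) := by
  refine ⟨matching_isPerfect hodd hk, fun e => ?_⟩
  induction e with | _ p q => ?_
  intro h
  change ∃ i, MAdj i p q
  rcases (adj_iff hk p q).1 h with h | h | h | h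
  · obtain ⟨m, hm⟩ := ((labels_step p.2.val).2.2 p.1 h.1).1
    exact ⟨m, .inl ⟨h.1, h.2, hm⟩⟩
  · obtain ⟨m, hm⟩ := ((labels_step q.2.val).2.2 q.1 h.1).1
    exact ⟨m, .inr (.inl ⟨h.1, h.2, hm⟩)⟩
  · obtain ⟨m, hm⟩ := ((labels_step p.2.val).2.2 q.1 h.2.1).2
    exact ⟨m, .inr (.inr (.inl ⟨h.1, h.2.1, h.2.2, hm⟩))⟩
  · obtain ⟨m, hm⟩ := ((labels_step q.2.val).2.2 p.1 h.2.1).2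
    exact ⟨m, .inr (.inr (.inr ⟨h.1, h.2.1, h.2.2, hm⟩))⟩

end FlowerSnark

/-- For every odd `k ≥ 5` the flower snark `F_k` has perfect matching index `4`. -/
theorem tau_flowerSnark (k : ℕ) (hodd : Odd k) (hk : 5 ≤ k) :
    tau (flowerSnark k) = 4 := by
  have h4 : 4 ∈ {j | ∃ M : Fin j → (flowerSnark k).Subgraph, IsPMCovering (flowerSnark k) M} :=
    ⟨_, FlowerSnark.matching_covering hodd hk⟩
  refine le_antisymm (Nat.sInf_le h4) (le_csInf ⟨4, h4⟩ ?_)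
  rintro j ⟨M, hM⟩
  exact FlowerSnark.four_le hodd hk M hM
end

section
/- Let G be a bridgeless cubic graph, M a perfect matching of G, and {A, B, C} a good family of three pairwise disjoint M-balanced matchings. Then τ(G) ≤ 4. -/
/-!
Write `F = G − M`, a `2`-regular graph, and let `N 0, N 1, N 2` be perfect matchings whose
intersections with `M` are `A, B, C`. The covering consists of `M` and suitable modifications of the
`N i`, so only the edges of `F` are at stake.

At a vertex that `N i` does not match along `M`, exactly one of the two `F`-edges lies in `N i`
(`adj_iff_not_adj`). Hence on an odd cycle, where `N i` matches a single vertex `f s` along `M`, the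
edges of `N i` alternate, starting from that vertex (`adj_add_iff_odd`). With the three exceptional
vertices at positions `0`, `p`, `p + q`, all gaps being odd, the edge at an odd position is covered
by the first matching, and the edge at an even position is covered by the second one if it lies
beyond `p`, by the third one if it lies before `p` (`exists_adj_of_odd`). On an even cycle `K` two
of the matchings, say `N i` and `N j`, avoid `M` altogether; replacing `N j` on `K` by the complement
of `N i` in `K` gives again a perfect matching, and the two cover `K`.
-/

open SimpleGraph

/-- `A` is an `M`-balanced matching: `A = M ∩ M'` for some perfect matching `M'`. -/
def IsBalancedMatching {V : Type*} (G : SimpleGraph V) (M : G.Subgraph)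
    (A : Set (Sym2 V)) : Prop :=
  ∃ M' : G.Subgraph, M'.IsPerfectMatching ∧ A = M.edgeSet ∩ M'.edgeSet

/-- `{A, B, C}` is a good family for the perfect matching `M` of `G`:
(i) every odd cycle of the `2`-factor `G − M` has exactly one vertex incident with
an edge of `A`, exactly one incident with an edge of `B` and exactly one incident
with an edge of `C`, and the three paths these vertices determine on the cycle are
odd; (ii) every even cycle of `G − M` is incident to edges of at most one of
`A`, `B`, `C`. -/
def IsGoodFamily {V : Type*} (G : SimpleGraph V) (M : G.Subgraph)
    (A B C : Set (Sym2 V)) : Prop :=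
  (∀ K : (G.deleteEdges M.edgeSet).ConnectedComponent, Odd (Nat.card K.supp) →
    ∃ (n : ℕ) (f : ZMod n → V), IsCycleOn (G.deleteEdges M.edgeSet) K n f ∧
      ∃ p q : ℕ, 0 < p ∧ 0 < q ∧ p + q < n ∧ Odd p ∧ Odd q ∧ Odd (n - p - q) ∧
      ∃ va vb vc : V,
        (∀ v : V, (G.deleteEdges M.edgeSet).connectedComponentMk v = K →
          (((∃ e ∈ A, v ∈ e) ↔ v = va) ∧ ((∃ e ∈ B, v ∈ e) ↔ v = vb) ∧
            ((∃ e ∈ C, v ∈ e) ↔ v = vc))) ∧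
        ({va, vb, vc} : Set V) =
          {f 0, f (p : ZMod n), f ((p + q : ℕ) : ZMod n)}) ∧
  (∀ K : (G.deleteEdges M.edgeSet).ConnectedComponent, Even (Nat.card K.supp) →
    ∃ S T, S ∈ ({A, B, C} : Set (Set (Sym2 V))) ∧ T ∈ ({A, B, C} : Set (Set (Sym2 V))) ∧
      S ≠ T ∧
      (∀ e ∈ S, ∀ v ∈ e, (G.deleteEdges M.edgeSet).connectedComponentMk v ≠ K) ∧
      (∀ e ∈ T, ∀ v ∈ e, (G.deleteEdges M.edgeSet).connectedComponentMk v ≠ K))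

section

variable {V : Type*} {G : SimpleGraph V} {M : G.Subgraph}

/-! ### The 2-factor `G − M` at a vertex -/

theorem deleteEdges_adj_iff {v w : V} :
    (G.deleteEdges M.edgeSet).Adj v w ↔ G.Adj v w ∧ ¬ M.Adj v w := by
  simp [SimpleGraph.deleteEdges_adj]

theorem exists_unique_adj {N : G.Subgraph} (hN : N.IsPerfectMatching) (v : V) :
    ∃! w, N.Adj v w :=
  SimpleGraph.Subgraph.isPerfectMatching_iff.1 hN v

theorem exists_two_neighbors [Fintype V] [DecidableRel G.Adj] (hG : G.IsRegularOfDegree 3)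
    (hM : M.IsPerfectMatching) (v : V) :
    ∃ a b, a ≠ b ∧ ∀ w, (G.deleteEdges M.edgeSet).Adj v w ↔ w = a ∨ w = b := by
  classical
  obtain ⟨m, hm, hu⟩ := exists_unique_adj hM v
  have h2 : ((G.neighborFinset v).erase m).card = 2 := by
    rw [Finset.card_erase_of_mem (by simpa using M.adj_sub hm), G.card_neighborFinset_eq_degree,
      hG v]
  obtain ⟨a, b, hab, h⟩ := Finset.card_eq_two.1 h2
  refine ⟨a, b, hab, fun w => ?_⟩
  have hw := Finset.ext_iff.1 h w
  simp only [Finset.mem_erase, SimpleGraph.mem_neighborFinset, Finset.mem_insert,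
    Finset.mem_singleton] at hw
  rw [← hw, deleteEdges_adj_iff, and_comm]
  exact and_congr_left fun _ => ⟨fun h1 h2 => h1 (h2 ▸ hm), fun h1 h2 => h1 (hu _ h2)⟩

/-- At a vertex that `N` does not match along `M`, exactly one of the two edges of `G − M` lies
in `N`. -/
theorem adj_iff_not_adj [Fintype V] [DecidableRel G.Adj] (hG : G.IsRegularOfDegree 3)
    (hM : M.IsPerfectMatching) {N : G.Subgraph} (hN : N.IsPerfectMatching) {v a b : V}
    (hv : ¬ ∃ w, M.Adj v w ∧ N.Adj v w) (ha : (G.deleteEdges M.edgeSet).Adj v a)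
    (hb : (G.deleteEdges M.edgeSet).Adj v b) (hab : a ≠ b) :
    N.Adj v b ↔ ¬ N.Adj v a := by
  obtain ⟨c, d, hcd, h⟩ := exists_two_neighbors hG hM v
  obtain ⟨w, hw, hu⟩ := exists_unique_adj hN v
  have hFw : (G.deleteEdges M.edgeSet).Adj v w :=
    deleteEdges_adj_iff.2 ⟨N.adj_sub hw, fun h' => hv ⟨w, h', hw⟩⟩
  rw [h] at ha hb hFw
  constructor
  · exact fun h1 h2 => hab ((hu _ h2).trans (hu _ h1).symm)
  · intro h1
    have hwa : w ≠ a := fun e => h1 (e ▸ hw)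
    have : w = b := by grind
    exact this ▸ hw

/-! ### Odd cycles -/

theorem natCast_ne_zero_of_lt {n k : ℕ} (h0 : 0 < k) (hk : k < n) : (k : ZMod n) ≠ 0 := by
  rw [Ne, ZMod.natCast_eq_zero_iff]
  exact fun h => absurd (Nat.le_of_dvd h0 h) (by omega)

/-- If `f s` is the only vertex of a cycle of `G − M` that `N` matches along `M`, then the edges of
the cycle lie alternately outside and inside `N`, starting from `f s`. -/
theorem adj_add_iff_odd [Fintype V] [DecidableRel G.Adj] (hG : G.IsRegularOfDegree 3)
    (hM : M.IsPerfectMatching) {N : G.Subgraph} (hN : N.IsPerfectMatching) {n : ℕ} (hn : 3 ≤ n)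
    {f : ZMod n → V} (hinj : Function.Injective f)
    (hf : ∀ i, (G.deleteEdges M.edgeSet).Adj (f i) (f (i + 1))) (s : ZMod n)
    (hs : ∀ i, (∃ w, M.Adj (f i) w ∧ N.Adj (f i) w) ↔ f i = f s) (k : ℕ) (hk : k < n) :
    N.Adj (f (s + k)) (f (s + k + 1)) ↔ Odd k := by
  induction k with
  | zero =>
    simp only [Nat.cast_zero, add_zero, Nat.not_odd_zero, iff_false]
    intro h
    obtain ⟨w, hMw, hNw⟩ := (hs s).2 rfl
    obtain rfl := (exists_unique_adj hN (f s)).unique h hNw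
    exact (deleteEdges_adj_iff.1 (hf s)).2 hMw
  | succ k ih =>
    have hne : f (s + k + 1) ≠ f s := fun h => by
      have h1 : s + ((k + 1 : ℕ) : ZMod n) = s + 0 := by
        push_cast; rw [← add_assoc, add_zero]; exact hinj h
      exact natCast_ne_zero_of_lt (Nat.succ_pos k) hk (add_left_cancel h1)
    have h2 : f (s + k) ≠ f (s + k + 1 + 1) := fun h => by
      have h1 : (s + k) + 0 = (s + k) + ((2 : ℕ) : ZMod n) := by
        push_cast; rw [← one_add_one_eq_two, ← add_assoc, add_zero]; exact hinj h
      exact natCast_ne_zero_of_lt two_pos (by omega) (add_left_cancel h1).symm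
    have key := adj_iff_not_adj hG hM hN (fun h => hne ((hs _).1 h)) (hf (s + k)).symm
      (hf (s + k + 1)) h2
    rw [Nat.cast_succ, ← add_assoc, key, N.adj_comm, ih (by omega), Nat.odd_add_one]

/-- On an odd cycle of `G − M` as in a good family, the three matchings cover every edge. -/
theorem exists_adj_of_odd [Fintype V] [DecidableRel G.Adj] (hG : G.IsRegularOfDegree 3)
    (hM : M.IsPerfectMatching) {N : Fin 3 → G.Subgraph} (hN : ∀ i, (N i).IsPerfectMatching)
    {K : (G.deleteEdges M.edgeSet).ConnectedComponent} {n : ℕ} {f : ZMod n → V}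
    (hf : IsCycleOn (G.deleteEdges M.edgeSet) K n f) {p q : ℕ} (hq : 0 < q) (hpq : p + q < n)
    (op : Odd p) (on : Odd (n - p - q))
    (hx : ∀ x ∈ ({f 0, f (p : ZMod n), f ((p + q : ℕ) : ZMod n)} : Set V), ∃ i, ∀ v,
      (G.deleteEdges M.edgeSet).connectedComponentMk v = K →
        ((∃ w, M.Adj v w ∧ (N i).Adj v w) ↔ v = x))
    {v w : V} (hv : (G.deleteEdges M.edgeSet).connectedComponentMk v = K)
    (hvw : (G.deleteEdges M.edgeSet).Adj v w) : ∃ i, (N i).Adj v w := by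
  obtain ⟨hinj, hadj, hK⟩ := hf
  have hn : 3 ≤ n := by have := op.pos; omega
  have : NeZero n := ⟨by omega⟩
  have alt : ∀ s : ZMod n, f s ∈ ({f 0, f (p : ZMod n), f ((p + q : ℕ) : ZMod n)} : Set V) →
      ∃ i, ∀ k : ℕ, k < n → Odd k → (N i).Adj (f (s + k)) (f (s + k + 1)) := by
    intro s hs
    obtain ⟨i, hi⟩ := hx _ hs
    exact ⟨i, fun k hk ok => (adj_add_iff_odd hG hM (hN i) hn hinj hadj s
      (fun j => hi _ ((hK _).2 ⟨j, rfl⟩)) k hk).2 ok⟩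
  have main : ∀ j : ZMod n, ∃ i, (N i).Adj (f j) (f (j + 1)) := by
    intro j
    obtain ⟨k, hk, rfl⟩ : ∃ k : ℕ, k < n ∧ (k : ZMod n) = j :=
      ⟨j.val, ZMod.val_lt j, ZMod.natCast_zmod_val j⟩
    rcases Nat.even_or_odd k with ek | ok
    · rcases lt_or_ge k p with h | h
      · obtain ⟨i, hi⟩ := alt ((p + q : ℕ) : ZMod n) (by simp)
        have := hi (k + (n - p - q)) (by omega) (ek.add_odd on)
        -- position `k` is reached from `p + q` by going once around the cycle
        rw [← Nat.cast_add, show p + q + (k + (n - p - q)) = k + n by omega, Nat.cast_add,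
          ZMod.natCast_self, add_zero] at this
        exact ⟨i, this⟩
      · obtain ⟨i, hi⟩ := alt (p : ZMod n) (by simp)
        have := hi (k - p) (by omega) (Nat.Even.sub_odd h ek op)
        rw [← Nat.cast_add, show p + (k - p) = k by omega] at this
        exact ⟨i, this⟩
    · obtain ⟨i, hi⟩ := alt 0 (by simp)
      exact ⟨i, by simpa using hi k hk ok⟩
  obtain ⟨j, rfl⟩ := (hK v).1 hv
  obtain ⟨l, rfl⟩ := (hK w).1
    ((SimpleGraph.ConnectedComponent.sound hvw.symm.reachable).trans hv)
  have hj : (G.deleteEdges M.edgeSet).Adj (f j) (f (j - 1)) := by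
    simpa using (hadj (j - 1)).symm
  have hne : f (j + 1) ≠ f (j - 1) := fun h => by
    have h1 : ((2 : ℕ) : ZMod n) = 0 := by
      have := hinj h
      push_cast
      linear_combination this
    exact natCast_ne_zero_of_lt two_pos (by omega) h1
  obtain ⟨a, b, hab, h⟩ := exists_two_neighbors hG hM (f j)
  have h1 := (h _).1 (hadj j)
  have h2 := (h _).1 hj
  have h3 := (h _).1 hvw
  have h4 : f l = f (j + 1) ∨ f l = f (j - 1) := by grind
  rcases h4 with h4 | h4
  · rw [h4]; exact main j
  · rw [h4]
    obtain ⟨i, hi⟩ := main (j - 1)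
    exact ⟨i, by simpa using hi.symm⟩

/-! ### Even cycles and the covering -/

/-- If the matchings `N i` already cover the odd cycles of `G − M`, and on each even cycle two of
them avoid `M`, then `M` and three modifications of the `N i` form a covering: on each even cycle one
of the two avoiding matchings is replaced by the complement of the other. -/
theorem exists_covering_s13 [Fintype V] [DecidableRel G.Adj] (hG : G.IsRegularOfDegree 3)
    (hM : M.IsPerfectMatching) {N : Fin 3 → G.Subgraph} (hN : ∀ i, (N i).IsPerfectMatching)
    (hodd : ∀ K : (G.deleteEdges M.edgeSet).ConnectedComponent, Odd (Nat.card K.supp) →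
      ∀ v w, (G.deleteEdges M.edgeSet).connectedComponentMk v = K →
        (G.deleteEdges M.edgeSet).Adj v w → ∃ i, (N i).Adj v w)
    (heven : ∀ K : (G.deleteEdges M.edgeSet).ConnectedComponent, Even (Nat.card K.supp) →
      ∃ i j, i ≠ j ∧ ∀ v, (G.deleteEdges M.edgeSet).connectedComponentMk v = K →
        (¬ ∃ w, M.Adj v w ∧ (N i).Adj v w) ∧ (¬ ∃ w, M.Adj v w ∧ (N j).Adj v w)) :
    ∃ P : Fin 4 → G.Subgraph, IsPMCovering G P := by
  classical
  choose! i j hij hclear using heven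
  let mk := (G.deleteEdges M.edgeSet).connectedComponentMk
  have hmk : ∀ {v w}, (G.deleteEdges M.edgeSet).Adj v w → mk v = mk w :=
    fun h => SimpleGraph.ConnectedComponent.sound h.reachable
  -- `c t v`: on the cycle of `v`, the matching `N t` is to be replaced by the complement of
  -- `N (i (mk v))`
  let c : Fin 3 → V → Prop := fun t v => Even (Nat.card (mk v).supp) ∧ t = j (mk v)
  let R : Fin 3 → V → V → Prop := fun t v w =>
    if c t v then (G.deleteEdges M.edgeSet).Adj v w ∧ ¬ (N (i (mk v))).Adj v w
    else (N t).Adj v w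
  have hc : ∀ {t v w}, c t v → (N t).Adj v w → (G.deleteEdges M.edgeSet).Adj v w := by
    rintro t v w ⟨hev, rfl⟩ h
    exact deleteEdges_adj_iff.2 ⟨(N _).adj_sub h, fun h' => (hclear _ hev v rfl).2 ⟨w, h', h⟩⟩
  have hsymm : ∀ t v w, R t v w → R t w v := by
    intro t v w h
    by_cases hv : c t v
    · simp only [R, if_pos hv] at h
      have e := hmk h.1
      have hw : c t w := by simpa only [c, ← e] using hv
      simp only [R, if_pos hw, ← e]
      exact ⟨h.1.symm, fun h' => h.2 h'.symm⟩
    · simp only [R, if_neg hv] at h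
      have hw : ¬ c t w := fun hw => hv (by
        have e := hmk (hc hw h.symm)
        simpa only [c, e] using hw)
      simp only [R, if_neg hw]
      exact h.symm
  have hsub : ∀ t v w, R t v w → G.Adj v w := by
    intro t v w h
    by_cases hv : c t v
    · simp only [R, if_pos hv] at h
      exact (deleteEdges_adj_iff.1 h.1).1
    · simp only [R, if_neg hv] at h
      exact (N t).adj_sub h
  have huniq : ∀ t v, ∃! w, R t v w := by
    intro t v
    by_cases hv : c t v
    · simp only [R, if_pos hv]
      obtain ⟨a, b, hab, h⟩ := exists_two_neighbors hG hM v
      have key := adj_iff_not_adj hG hM (hN (i (mk v))) (hclear _ hv.1 v rfl).1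
        ((h a).2 (Or.inl rfl)) ((h b).2 (Or.inr rfl)) hab
      simp only [h]
      by_cases ha : (N (i (mk v))).Adj v a
      · refine ⟨b, ⟨Or.inr rfl, fun hb => key.1 hb ha⟩, ?_⟩
        rintro w ⟨rfl | rfl, hw⟩
        · exact absurd ha hw
        · rfl
      · refine ⟨a, ⟨Or.inl rfl, ha⟩, ?_⟩
        rintro w ⟨rfl | rfl, hw⟩
        · rfl
        · exact absurd (key.2 ha) hw
    · simp only [R, if_neg hv]
      exact exists_unique_adj (hN t) v
  let P : Fin 3 → G.Subgraph := fun t =>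
    { verts := Set.univ
      Adj := R t
      adj_sub := fun h => hsub t _ _ h
      edge_vert := fun _ => Set.mem_univ _
      symm := ⟨fun v w h => hsymm t v w h⟩ }
  refine ⟨Fin.cons M P, ?_, ?_⟩
  · intro t
    refine Fin.cases hM (fun t => ?_) t
    exact SimpleGraph.Subgraph.isPerfectMatching_iff.2 (huniq t)
  · intro e
    induction e using Sym2.ind with
    | _ v w =>
    intro he
    by_cases hMe : M.Adj v w
    · exact ⟨0, hMe⟩
    have hF : (G.deleteEdges M.edgeSet).Adj v w := deleteEdges_adj_iff.2 ⟨he, hMe⟩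
    suffices ∃ t, R t v w from this.elim fun t ht => ⟨t.succ, ht⟩
    rcases Nat.even_or_odd (Nat.card (mk v).supp) with hev | ho
    · by_cases hi : (N (i (mk v))).Adj v w
      · refine ⟨i (mk v), ?_⟩
        have hv : ¬ c (i (mk v)) v := fun h => hij _ hev h.2
        simpa only [R, if_neg hv] using hi
      · refine ⟨j (mk v), ?_⟩
        have hv : c (j (mk v)) v := ⟨hev, rfl⟩
        simp only [R, if_pos hv]
        exact ⟨hF, hi⟩
    · obtain ⟨t, ht⟩ := hodd _ ho v w rfl hF
      refine ⟨t, ?_⟩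
      have hv : ¬ c t v := fun h => Nat.not_even_iff_odd.2 ho h.1
      simpa only [R, if_neg hv] using ht

/-! ### Balanced matchings -/

theorem exists_mem_inter_iff {N : G.Subgraph} (v : V) :
    (∃ e ∈ M.edgeSet ∩ N.edgeSet, v ∈ e) ↔ ∃ w, M.Adj v w ∧ N.Adj v w := by
  constructor
  · rintro ⟨e, ⟨h1, h2⟩, w, rfl⟩
    exact ⟨w, h1, h2⟩
  · rintro ⟨w, h1, h2⟩
    exact ⟨s(v, w), ⟨h1, h2⟩, Sym2.mem_mk_left v w⟩

end

/-- If a bridgeless cubic graph `G` has a perfect matching `M` and a good family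
`{A, B, C}` of pairwise disjoint `M`-balanced matchings, then `τ(G) ≤ 4`. -/
theorem tau_le_four_of_goodFamily {V : Type*} [Fintype V]
    (G : SimpleGraph V) [DecidableRel G.Adj] (hG : G.IsRegularOfDegree 3)
    (hbridgeless : ∀ e ∈ G.edgeSet, ¬ G.IsBridge e)
    (M : G.Subgraph) (hM : M.IsPerfectMatching)
    (A B C : Set (Sym2 V))
    (hA : IsBalancedMatching G M A) (hB : IsBalancedMatching G M B)
    (hC : IsBalancedMatching G M C)
    (hAB : Disjoint A B) (hAC : Disjoint A C) (hBC : Disjoint B C)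
    (hfam : IsGoodFamily G M A B C) :
    tau G ≤ 4 := by
  obtain ⟨NA, hNA, rfl⟩ := hA
  obtain ⟨NB, hNB, rfl⟩ := hB
  obtain ⟨NC, hNC, rfl⟩ := hC
  obtain ⟨hodd, heven⟩ := hfam
  let N : Fin 3 → G.Subgraph := ![NA, NB, NC]
  have hN : ∀ i, (N i).IsPerfectMatching := by
    intro i
    fin_cases i
    exacts [hNA, hNB, hNC]
  refine Nat.sInf_le (exists_covering_s13 hG hM hN ?_ ?_)
  · intro K hK v w hv hvw
    obtain ⟨n, f, hf, p, q, -, hq, hpq, op, -, on, va, vb, vc, hinc, hset⟩ := hodd K hK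
    refine exists_adj_of_odd hG hM hN hf hq hpq op on ?_ hv hvw
    rw [← hset]
    simp only [exists_mem_inter_iff] at hinc
    rintro x (rfl | rfl | rfl)
    · exact ⟨0, fun v hv => (hinc v hv).1⟩
    · exact ⟨1, fun v hv => (hinc v hv).2.1⟩
    · exact ⟨2, fun v hv => (hinc v hv).2.2⟩
  · intro K hK
    obtain ⟨S, T, hS, hT, hST, hS', hT'⟩ := heven K hK
    have idx : ∀ S ∈ ({M.edgeSet ∩ NA.edgeSet, M.edgeSet ∩ NB.edgeSet,
        M.edgeSet ∩ NC.edgeSet} : Set (Set (Sym2 V))), ∃ i, S = M.edgeSet ∩ (N i).edgeSet := by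
      rintro S (rfl | rfl | rfl)
      exacts [⟨0, rfl⟩, ⟨1, rfl⟩, ⟨2, rfl⟩]
    obtain ⟨i, rfl⟩ := idx S hS
    obtain ⟨j, rfl⟩ := idx T hT
    refine ⟨i, j, fun h => hST (by rw [h]), fun v hv => ?_⟩
    rw [← exists_mem_inter_iff, ← exists_mem_inter_iff]
    exact ⟨fun ⟨e, he, hve⟩ => hS' e he v hve hv, fun ⟨e, he, hve⟩ => hT' e he v hve hv⟩
end
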